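/- arXiv:1904.03533 — 5 statements merged into one kernel-verified Lean document; each statement's English description precedes it below -/
import Mathlib

section
/- (Marcus–Spielman–Srivastava, weak-Ramanujan biregular graphs) For all integers k₁, k₂ ≥ 3 and every N there exists a finite connected bipartite (k₁,k₂)-biregular graph X with more than N vertices such that every eigenvalue λ of the adjacency matrix of X satisfies |λ| = √(k₁k₂) or |λ| ≤ √(k₁−1) + √(k₂−1). -/
open Matrix
open scoped Classical

/-!
Starting from a complete bipartite graph, we repeatedly pass to 2-lifts. The new eigenvalues of the
2-lift attached to a signing `s` are the eigenvalues of the signed adjacency matrix `A_s`, so it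
suffices to find a signing for which the largest eigenvalue of `A_s` is less than
`ρ = √(k₁ - 1) + √(k₂ - 1)`; the spectrum of `A_s` is symmetric because the graph is bipartite.

The sum of `det (x - A_s)` over all signings is positive for `x ≥ ρ`: up to a factor it is the
matching polynomial, and the Heilmann–Lieb recursion over vertex-deleted subgraphs gives the bound
by induction. To pass from the sum to a single signing, write `A_s + D` with `D` the degree matrix
as a sum of rank-one matrices, one for each edge, depending on one sign each. Fixing the signs one
edge at a time, the characteristic polynomials summed over the remaining signs have a common
interlacing, so one of the two choices keeps the sum positive on `[ρ, ∞)`. The interlacing comes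
from a half-plane property: the quotient of the sums before and after a rank-one update does not
leave a half-plane, since the summed determinants do not vanish when the imaginary part of the
matrix is positive definite.
-/

section Determinants

variable {V K : Type*} [Fintype V] [DecidableEq V] [CommRing K]

theorem det_add_vecMulVec_eq_add_dotProduct_cramer (M : Matrix V V K) (u v : V → K) :
    (M + vecMulVec u v).det = M.det + u ⬝ᵥ cramer Mᵀ v := by
  suffices h : ∀ s : Finset V, (M + vecMulVec (fun i => if i ∈ s then u i else 0) v).det =
      M.det + ∑ i ∈ s, u i * (M.updateRow i v).det by
    simpa [dotProduct, cramer_transpose_apply] using h Finset.univ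
  intro s
  induction s using Finset.induction_on with
  | empty => simp [← Pi.zero_def]
  | insert i s hi ih =>
    set N := M + vecMulVec (fun i => if i ∈ s then u i else 0) v with hN
    have hrow : M + vecMulVec (fun j => if j ∈ insert i s then u j else 0) v =
        N.updateRow i (N i + u i • v) := by
      ext j k
      rcases eq_or_ne j i with rfl | hj
      · simp [hN, hi, vecMulVec_apply]
      · simp [hN, hj, vecMulVec_apply]
    have hdet : (N.updateRow i v).det = (M.updateRow i v).det := by
      refine det_eq_of_forall_row_eq_smul_add_const (fun j => if j ∈ s then u j else 0) i
        (by simp [hi]) fun j k => ?_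
      rcases eq_or_ne j i with rfl | hj
      · simp [hi]
      · simp [hN, hj, vecMulVec_apply]
    rw [hrow, det_updateRow_add, det_updateRow_smul, updateRow_eq_self, ih, hdet,
      Finset.sum_insert hi]
    ring

theorem det_add_vecMulVec (M : Matrix V V K) (u v : V → K) :
    (M + vecMulVec u v).det = M.det + v ⬝ᵥ (M.adjugate *ᵥ u) := by
  rw [det_add_vecMulVec_eq_add_dotProduct_cramer, cramer_eq_adjugate_mulVec, ← adjugate_transpose,
    mulVec_transpose, dotProduct_comm, dotProduct_mulVec]

theorem det_sub_smul_vecMulVec (M : Matrix V V K) (u v : V → K) (t : K) :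
    (M - t • vecMulVec u v).det = (1 - t) * M.det + t * (M - vecMulVec u v).det := by
  have hdet (a : V → K) : (M - vecMulVec a v).det = M.det - v ⬝ᵥ (M.adjugate *ᵥ a) := by
    rw [sub_eq_add_neg, ← neg_vecMulVec, det_add_vecMulVec, mulVec_neg, dotProduct_neg,
      ← sub_eq_add_neg]
  rw [← smul_vecMulVec, hdet, hdet, mulVec_smul, dotProduct_smul, smul_eq_mul]
  ring

/-- The matrix agreeing with `M` on `S × S` and with the identity matrix elsewhere; its determinant
is the principal minor of `M` on `S`. This keeps all principal submatrices of `M` on the same index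
type. -/
def decouple (S : Finset V) (M : Matrix V V K) : Matrix V V K :=
  of fun i j => if i ∈ S ∧ j ∈ S then M i j else (1 : Matrix V V K) i j

omit [Fintype V] in
theorem decouple_congr {S : Finset V} {M N : Matrix V V K} (h : ∀ i ∈ S, ∀ j ∈ S, M i j = N i j) :
    decouple S M = decouple S N := by
  ext i j
  simp only [decouple, of_apply]
  exact ite_congr rfl (fun hij => h i hij.1 j hij.2) fun _ => rfl

omit [Fintype V] in
@[simp]
theorem decouple_empty (M : Matrix V V K) : decouple ∅ M = 1 := by
  ext i j; simp [decouple]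

@[simp]
theorem decouple_univ (M : Matrix V V K) : decouple Finset.univ M = M := by
  ext i j; simp [decouple]

theorem adjugate_decouple_self (S : Finset V) (M : Matrix V V K) (w : V) :
    (decouple S M).adjugate w w = (decouple (S.erase w) M).det := by
  rw [adjugate_apply]
  refine det_eq_of_forall_row_eq_smul_add_const (fun i => if i = w then 0 else decouple S M i w) w
    (if_pos rfl) fun i j => ?_
  rcases eq_or_ne i w with rfl | hi
  · simp [decouple, one_apply, Pi.single_apply, eq_comm]
  · rcases eq_or_ne j w with rfl | hj
    · simp [decouple, hi, one_apply]
    · simp [decouple, hi, hj, hj.symm, one_apply]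

theorem adjugate_decouple_mulVec_single {S : Finset V} {v : V} (hv : v ∉ S) (M : Matrix V V K) :
    (decouple S M).adjugate *ᵥ Pi.single v 1 = (decouple S M).det • Pi.single v 1 := by
  have hcol : decouple S M *ᵥ Pi.single v 1 = Pi.single v 1 := by
    ext i; simp [decouple, hv, one_apply, Pi.single_apply]
  rw [← hcol, mulVec_mulVec, adjugate_mul, smul_mulVec, one_mulVec, hcol]

theorem det_decouple_of_mem {S : Finset V} {v : V} (hv : v ∈ S) (M : Matrix V V K) :
    (decouple S M).det = M v v * (decouple (S.erase v) M).det -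
      ∑ w ∈ S.erase v, ∑ u ∈ S.erase v,
        M v w * M u v * (decouple (S.erase v) M).adjugate w u := by
  set N := decouple (S.erase v) M with hN
  let b : V → K := fun w => if w ∈ S.erase v then M v w else 0
  let c : V → K := fun u => if u ∈ S.erase v then M u v else 0
  have hb : b v = 0 := by simp [b]
  have hc : c v = 0 := by simp [c]
  have hdiag : (decouple S M + vecMulVec ((1 - M v v) • Pi.single v 1) (Pi.single v 1)).det =
      (decouple S M).det + (1 - M v v) * N.det := by
    rw [det_add_vecMulVec, mulVec_smul, dotProduct_smul, mulVec_single_one, single_one_dotProduct,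
      col_apply, adjugate_decouple_self, smul_eq_mul]
  have hrow : (decouple S M + vecMulVec ((1 - M v v) • Pi.single v 1) (Pi.single v 1)).det =
      (N + vecMulVec (Pi.single v 1 - c) b).det := by
    refine det_eq_of_forall_row_eq_smul_add_const c v hc fun i j => ?_
    rcases eq_or_ne i v with rfl | hi
    · rcases eq_or_ne j i with rfl | hj
      · simp [hN, decouple, vecMulVec_apply, hv, hb, hc]
      · simp [hN, decouple, vecMulVec_apply, hv, hc, hj, hj.symm, one_apply, b]
    · rcases eq_or_ne j v with rfl | hj
      · simp [hN, decouple, vecMulVec_apply, hv, hb, hi, one_apply, c]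
      · simp [hN, decouple, vecMulVec_apply, hc, hi, hj, hj.symm, one_apply]
  have hsum : b ⬝ᵥ (N.adjugate *ᵥ c) =
      ∑ w ∈ S.erase v, ∑ u ∈ S.erase v, M v w * M u v * N.adjugate w u := by
    simp only [dotProduct, mulVec, b, c, ite_mul, mul_ite, zero_mul, mul_zero, Finset.sum_ite_mem,
      Finset.univ_inter]
    simp only [Finset.mul_sum]
    exact Finset.sum_congr rfl fun w _ => Finset.sum_congr rfl fun u _ => by ring
  rw [hdiag, det_add_vecMulVec, mulVec_sub, dotProduct_sub,
    adjugate_decouple_mulVec_single (by simp), dotProduct_smul, dotProduct_single_one, hb,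
    smul_zero, hsum] at hrow
  linear_combination hrow

end Determinants

section MatchingPolynomial

variable {V : Type*}

/-- The adjacency matrix of `G` with the entries of each edge `e` multiplied by the sign `s e`. -/
noncomputable def signedAdj (G : SimpleGraph V) (s : Sym2 V → ℤˣ) : Matrix V V ℝ :=
  of fun v w => if G.Adj v w then ((s s(v, w) : ℤ) : ℝ) else 0

variable (G : SimpleGraph V) (s : Sym2 V → ℤˣ)

theorem signedAdj_mul_signedAdj_swap (v w : V) :
    signedAdj G s v w * signedAdj G s w v = if G.Adj v w then 1 else 0 := by
  by_cases h : G.Adj v w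
  · have hs : ((s s(v, w) : ℤ) : ℝ) * ((s s(v, w) : ℤ) : ℝ) = 1 := by
      exact_mod_cast Int.units_coe_mul_self (s s(v, w))
    simp [signedAdj, h, h.symm, Sym2.eq_swap (a := w), hs]
  · simp [signedAdj, h]

variable [DecidableEq V]

theorem signedAdj_mul_mulSingle_neg_one (v w : V) :
    signedAdj G (s * Pi.mulSingle s(v, w) (-1)) v w = -signedAdj G s v w := by
  simp [signedAdj, apply_ite]

theorem signedAdj_mul_mulSingle_of_ne {v w : V} {e : Sym2 V} (he : s(v, w) ≠ e) (ε : ℤˣ) :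
    signedAdj G (s * Pi.mulSingle e ε) v w = signedAdj G s v w := by
  simp [signedAdj, he]

variable [Fintype V]

/-- The sum over all signings of the characteristic polynomials of the signed adjacency matrices of
the subgraph induced on `S`, evaluated at `x`. It is a positive multiple of the matching polynomial
of this subgraph. -/
noncomputable def signedMinorSum (x : ℝ) (S : Finset V) : ℝ :=
  ∑ s : Sym2 V → ℤˣ, (decouple S (scalar V x - signedAdj G s)).det

theorem signedMinorSum_univ (x : ℝ) :
    signedMinorSum G x Finset.univ = ∑ s, (signedAdj G s).charpoly.eval x := by
  simp [signedMinorSum, eval_charpoly]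

theorem signedMinorSum_empty_pos (x : ℝ) : 0 < signedMinorSum G x ∅ := by
  simp [signedMinorSum]

theorem sum_signedAdj_mul_signedAdj_mul_adjugate_eq_zero (x : ℝ) {T : Finset V} {v w u : V}
    (hv : v ∉ T) (hu : u ≠ w) :
    ∑ s, signedAdj G s v w * signedAdj G s u v *
      (decouple T (scalar V x - signedAdj G s)).adjugate w u = 0 := by
  let term : (Sym2 V → ℤˣ) → ℝ := fun s => signedAdj G s v w * signedAdj G s u v *
    (decouple T (scalar V x - signedAdj G s)).adjugate w u
  have hflip (s : Sym2 V → ℤˣ) : term (s * Pi.mulSingle s(v, w) (-1)) = -term s := by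
    have huv : s(u, v) ≠ s(v, w) := by
      rw [Sym2.eq_swap]
      exact fun h => hu (Sym2.congr_right.1 h)
    have hT : decouple T (scalar V x - signedAdj G (s * Pi.mulSingle s(v, w) (-1))) =
        decouple T (scalar V x - signedAdj G s) := by
      refine decouple_congr fun i hi j hj => ?_
      have hij : s(i, j) ≠ s(v, w) := by
        rintro h
        have : v ∈ s(i, j) := h ▸ Sym2.mem_mk_left v w
        rcases Sym2.mem_iff.1 this with rfl | rfl <;> exact hv ‹_›
      rw [Matrix.sub_apply, Matrix.sub_apply, signedAdj_mul_mulSingle_of_ne G s hij]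
    simp only [term]
    rw [hT, signedAdj_mul_mulSingle_neg_one, signedAdj_mul_mulSingle_of_ne G s huv, neg_mul,
      neg_mul]
  have hsum := Equiv.sum_comp (Equiv.mulRight (Pi.mulSingle s(v, w) (-1) : Sym2 V → ℤˣ)) term
  simp only [Equiv.coe_mulRight, hflip, Finset.sum_neg_distrib] at hsum
  exact self_eq_neg.1 hsum.symm

theorem signedMinorSum_eq_sub_sum (x : ℝ) {S : Finset V} {v : V} (hv : v ∈ S) :
    signedMinorSum G x S = x * signedMinorSum G x (S.erase v) -
      ∑ w ∈ S.erase v with G.Adj v w, signedMinorSum G x ((S.erase v).erase w) := by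
  set T := S.erase v
  let N : (Sym2 V → ℤˣ) → Matrix V V ℝ := fun s => decouple T (scalar V x - signedAdj G s)
  have hdet (s : Sym2 V → ℤˣ) : (decouple S (scalar V x - signedAdj G s)).det =
      x * (N s).det - ∑ w ∈ T, ∑ u ∈ T,
        signedAdj G s v w * signedAdj G s u v * (N s).adjugate w u := by
    rw [det_decouple_of_mem hv]
    congr 1
    · simp [signedAdj, N, T]
    · refine Finset.sum_congr rfl fun w hw => Finset.sum_congr rfl fun u hu => ?_
      have hwv : v ≠ w := (Finset.ne_of_mem_erase hw).symm
      have huv : u ≠ v := Finset.ne_of_mem_erase hu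
      simp [hwv, huv, N, T]
  have hcross (w : V) (hw : w ∈ T) : ∑ u ∈ T, ∑ s,
      signedAdj G s v w * signedAdj G s u v * (N s).adjugate w u =
        if G.Adj v w then signedMinorSum G x (T.erase w) else 0 := by
    rw [Finset.sum_eq_single_of_mem w hw fun u _ hu =>
      sum_signedAdj_mul_signedAdj_mul_adjugate_eq_zero G x (Finset.notMem_erase v S) hu]
    simp only [signedAdj_mul_signedAdj_swap, adjugate_decouple_self, ite_mul, one_mul, zero_mul]
    split_ifs <;> simp [signedMinorSum, T]
  calc signedMinorSum G x S
      = x * signedMinorSum G x T - ∑ w ∈ T, ∑ u ∈ T, ∑ s,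
          signedAdj G s v w * signedAdj G s u v * (N s).adjugate w u := by
        simp only [signedMinorSum, hdet, Finset.sum_sub_distrib, Finset.mul_sum, N]
        rw [Finset.sum_comm]
        exact congrArg _ (Finset.sum_congr rfl fun w _ => Finset.sum_comm)
    _ = _ := by rw [Finset.sum_congr rfl hcross, Finset.sum_filter]

theorem sum_lt_mul_of_forall_mul_lt {ι : Type*} {s : Finset ι} {f : ι → ℝ} {b C d : ℝ} (hb : 0 < b)
    (hC : 0 < C) (hd : 0 < d) (hf : ∀ i ∈ s, b * f i < d) (hs : (s.card : ℝ) ≤ C * b) :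
    ∑ i ∈ s, f i < C * d := by
  rcases s.eq_empty_or_nonempty with rfl | hne
  · simpa using mul_pos hC hd
  · refine lt_of_mul_lt_mul_left ?_ hb.le
    calc b * ∑ i ∈ s, f i = ∑ i ∈ s, b * f i := Finset.mul_sum ..
      _ < ∑ _i ∈ s, d := Finset.sum_lt_sum_of_nonempty hne hf
      _ = s.card * d := by simp
      _ ≤ C * b * d := by gcongr
      _ = b * (C * d) := by ring

variable {G} {x : ℝ} {β : V → ℝ}

omit [DecidableEq V] in
theorem card_filter_adj_le_degree (T : Finset V) (v : V) :
    (T.filter (G.Adj v)).card ≤ G.degree v := by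
  rw [← G.card_neighborFinset_eq_degree, G.neighborFinset_eq_filter]
  exact Finset.card_le_card (Finset.filter_subset_filter _ (Finset.subset_univ _))

omit [DecidableEq V] in
theorem card_filter_adj_lt_degree {T : Finset V} {v w : V} (hvw : G.Adj v w) (hw : w ∉ T) :
    (T.filter (G.Adj v)).card < G.degree v := by
  rw [← G.card_neighborFinset_eq_degree, G.neighborFinset_eq_filter]
  refine Finset.card_lt_card ⟨Finset.filter_subset_filter _ (Finset.subset_univ _), fun h => hw ?_⟩
  exact (Finset.mem_filter.1 (h (by simpa using hvw))).1

theorem signedMinorSum_pos_and_lt (hx : 0 < x) (hβ : ∀ v, 0 < β v)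
    (hdeg : ∀ v, (G.degree v : ℝ) ≤ β v ^ 2 + 1) (hdegx : ∀ v, (G.degree v : ℝ) ≤ x * β v)
    (hadj : ∀ v w, G.Adj v w → β v + β w ≤ x) (S : Finset V) :
    0 < signedMinorSum G x S ∧ ∀ v ∈ S, ∀ w ∉ S, G.Adj v w →
      (x - β v) * signedMinorSum G x (S.erase v) < signedMinorSum G x S := by
  induction S using Finset.strongInduction with
  | H S ih =>
    have hpos {v : V} (hv : v ∈ S) := (ih _ (Finset.erase_ssubset hv)).1
    have hneighbor {v : V} (hv : v ∈ S) : ∀ w ∈ (S.erase v).filter (G.Adj v),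
        β v * signedMinorSum G x ((S.erase v).erase w) < signedMinorSum G x (S.erase v) := by
      intro w hw
      obtain ⟨hwS, hvw⟩ := Finset.mem_filter.1 hw
      have hlt := (ih _ (Finset.erase_ssubset hv)).2 w hwS v (Finset.notMem_erase v S) hvw.symm
      have hw_pos := (ih _ ((Finset.erase_ssubset hwS).trans (Finset.erase_ssubset hv))).1
      have := hadj v w hvw
      exact lt_of_le_of_lt (mul_le_mul_of_nonneg_right (by linarith) hw_pos.le) hlt
    refine ⟨?_, fun v hv w hw hvw => ?_⟩
    · rcases S.eq_empty_or_nonempty with rfl | ⟨v, hv⟩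
      · exact signedMinorSum_empty_pos G x
      · have hcard : (((S.erase v).filter (G.Adj v)).card : ℝ) ≤ x * β v :=
          le_trans (by exact_mod_cast card_filter_adj_le_degree _ v) (hdegx v)
        rw [signedMinorSum_eq_sub_sum G x hv, sub_pos]
        exact sum_lt_mul_of_forall_mul_lt (hβ v) hx (hpos hv) (hneighbor hv) hcard
    · have hcard : (((S.erase v).filter (G.Adj v)).card : ℝ) ≤ β v * β v := by
        have hlt : (((S.erase v).filter (G.Adj v)).card : ℝ) + 1 ≤ G.degree v := by
          exact_mod_cast card_filter_adj_lt_degree hvw (fun h => hw (Finset.mem_of_mem_erase h))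
        linarith [hdeg v]
      have := sum_lt_mul_of_forall_mul_lt (hβ v) (hβ v) (hpos hv) (hneighbor hv) hcard
      rw [signedMinorSum_eq_sub_sum G x hv]
      linarith

theorem sum_eval_charpoly_signedAdj_pos (hx : 0 < x) (hβ : ∀ v, 0 < β v)
    (hdeg : ∀ v, (G.degree v : ℝ) ≤ β v ^ 2 + 1) (hdegx : ∀ v, (G.degree v : ℝ) ≤ x * β v)
    (hadj : ∀ v w, G.Adj v w → β v + β w ≤ x) : 0 < ∑ s, (signedAdj G s).charpoly.eval x := by
  rw [← signedMinorSum_univ]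
  exact (signedMinorSum_pos_and_lt hx hβ hdeg hdegx hadj Finset.univ).1

end MatchingPolynomial

theorem sum_arrow_fin_succ {κ α : Type*} [Fintype κ] [AddCommMonoid α] {n : ℕ}
    (f : (Fin (n + 1) → κ) → α) : ∑ s, f s = ∑ b, ∑ s : Fin n → κ, f (Fin.cons b s) := by
  rw [← (Fin.consEquiv fun _ => κ).sum_comp, Fintype.sum_prod_type]
  rfl

section RankOneStability

open scoped ComplexOrder ComplexStarModule

variable {V κ : Type*}

/-- Functions of a matrix which, like the determinant, are affine in rank-one Hermitian
updates and have no zeros among the matrices whose imaginary part is positive definite. This is the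
form of real stability needed to average determinants over random rank-one updates. -/
structure IsRankOneStable (F : Matrix V V ℂ → ℂ) : Prop where
  sub_smul (M : Matrix V V ℂ) (p : V → ℂ) (t : ℂ) :
    F (M - t • vecMulVec p (star p)) = (1 - t) * F M + t * F (M - vecMulVec p (star p))
  ne_zero {M : Matrix V V ℂ} : (ℑ M : Matrix V V ℂ).PosDef → F M ≠ 0

theorem posDef_imaginaryPart_sub_smul_vecMulVec [Finite V] {M : Matrix V V ℂ}
    (hM : (ℑ M : Matrix V V ℂ).PosDef) (p : V → ℂ) {t : ℂ} (ht : t.im ≤ 0) :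
    (ℑ (M - t • vecMulVec p (star p)) : Matrix V V ℂ).PosDef := by
  have hp : IsSelfAdjoint (vecMulVec p (star p)) := (posSemidef_vecMulVec_self_star p).isHermitian
  have heq : (ℑ (M - t • vecMulVec p (star p)) : Matrix V V ℂ) =
      ℑ M + (-t.im) • vecMulVec p (star p) := by
    simp [imaginaryPart_smul, hp.imaginaryPart, hp.coe_realPart, sub_eq_add_neg]
  rw [heq]
  exact hM.add_posSemidef ((posSemidef_vecMulVec_self_star p).smul (neg_nonneg.2 ht))

theorem isRankOneStable_det [Fintype V] [DecidableEq V] :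
    IsRankOneStable (det : Matrix V V ℂ → ℂ) where
  sub_smul M p t := det_sub_smul_vecMulVec M p (star p) t
  ne_zero {M} hM hdet := by
    obtain ⟨x, hx, hMx⟩ := exists_mulVec_eq_zero_iff.2 hdet
    have hstar : star x ⬝ᵥ (star M *ᵥ x) = 0 := by
      rw [dotProduct_mulVec, star_eq_conjTranspose, ← star_mulVec, hMx, star_zero, zero_dotProduct]
    have hpos := (posDef_iff_dotProduct_mulVec.1 hM).2 hx
    simp [imaginaryPart_apply_coe, smul_mulVec, neg_mulVec, sub_mulVec, hMx,
      hstar] at hpos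

namespace IsRankOneStable

variable [Finite V] {F : Matrix V V ℂ → ℂ} {M : Matrix V V ℂ}

theorem div_eq_zero_or_im_neg (hF : IsRankOneStable F) (hM : (ℑ M : Matrix V V ℂ).PosDef)
    (p : V → ℂ) :
    (F M - F (M - vecMulVec p (star p))) / F M = 0 ∨
      ((F M - F (M - vecMulVec p (star p))) / F M).im < 0 := by
  have hFM : F M ≠ 0 := hF.ne_zero hM
  set h := (F M - F (M - vecMulVec p (star p))) / F M with hh
  by_contra! hcon
  obtain ⟨h0, him⟩ := hcon
  have hinv : h⁻¹.im ≤ 0 := by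
    rw [Complex.inv_im]
    exact div_nonpos_of_nonpos_of_nonneg (by linarith) (Complex.normSq_nonneg _)
  refine hF.ne_zero (posDef_imaginaryPart_sub_smul_vecMulVec hM p hinv) ?_
  have hsub : F (M - vecMulVec p (star p)) = F M - h * F M := by
    rw [hh, div_mul_cancel₀ _ hFM, sub_sub_cancel]
  rw [hF.sub_smul, hsub]
  field_simp
  ring

theorem im_div_nonpos (hF : IsRankOneStable F) (hM : (ℑ M : Matrix V V ℂ).PosDef) (p : V → ℂ) :
    ((F M - F (M - vecMulVec p (star p))) / F M).im ≤ 0 :=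
  (hF.div_eq_zero_or_im_neg hM p).elim (fun h => by simp [h]) le_of_lt

theorem sum_sub_vecMulVec [Fintype κ] [Nonempty κ] (hF : IsRankOneStable F) (p : κ → V → ℂ) :
    IsRankOneStable fun M => ∑ b, F (M - vecMulVec (p b) (star (p b))) where
  sub_smul M q t := by
    simp only [Finset.mul_sum, ← Finset.sum_add_distrib]
    refine Finset.sum_congr rfl fun b _ => ?_
    rw [sub_right_comm, hF.sub_smul, sub_right_comm]
  ne_zero {M} hM hsum := by
    have hFM : F M ≠ 0 := hF.ne_zero hM
    let h : κ → ℂ := fun b => (F M - F (M - vecMulVec (p b) (star (p b)))) / F M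
    have hcard : ∑ b, h b = Fintype.card κ := by
      simp only [h, ← Finset.sum_div, Finset.sum_sub_distrib, hsum]
      simp [hFM]
    have him : ∑ b, (h b).im = 0 := by rw [← Complex.im_sum, hcard, Complex.natCast_im]
    have hzero (b : κ) : h b = 0 := by
      have := (Finset.sum_eq_zero_iff_of_nonpos fun b _ => hF.im_div_nonpos hM (p b)).1 him b
        (Finset.mem_univ b)
      exact (hF.div_eq_zero_or_im_neg hM (p b)).resolve_right this.not_lt
    simp [hzero, eq_comm] at hcard

end IsRankOneStable

theorem isRankOneStable_sum_det [Fintype V] [DecidableEq V] [Fintype κ] [Nonempty κ] {n : ℕ}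
    (w : Fin n → κ → V → ℂ) :
    IsRankOneStable fun M => ∑ s : Fin n → κ,
      (M - ∑ i, vecMulVec (w i (s i)) (star (w i (s i)))).det := by
  induction n with
  | zero => simpa using isRankOneStable_det
  | succ n ih =>
    simp only [sum_arrow_fin_succ, Fin.sum_univ_succ, Fin.cons_zero, Fin.cons_succ, ← sub_sub]
    exact (ih fun i => w i.succ).sum_sub_vecMulVec (w 0)

end RankOneStability

section CommonInterlacing

open Polynomial

variable {F G : ℝ[X]}

/-- The rational function `-G / F` is a Pick function: it maps the upper half-plane to its closure.
This is the analytic form of the interlacing of the zeros of `G` and `F`. At a zero of `F` the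
condition is void, because division by zero gives `0`. -/
def IsAntiPick (G F : ℝ[X]) : Prop :=
  ∀ z : ℂ, 0 < z.im → (aeval z G / aeval z F).im ≤ 0

theorem re_deriv_nonpos_of_im_nonpos {f : ℂ → ℂ} {f' : ℂ} {x : ℝ} (hf : HasDerivAt f f' x)
    (hx : (f x).im = 0) (him : ∀ z : ℂ, 0 < z.im → (f z).im ≤ 0) : f'.re ≤ 0 := by
  have hline : HasDerivAt (fun ε : ℝ => (x + ε * Complex.I : ℂ)) Complex.I 0 := by
    have hofReal := Complex.ofRealCLM.hasDerivAt (x := (0 : ℝ))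
    simpa using (hofReal.mul_const Complex.I).const_add (x : ℂ)
  have hvert : HasDerivAt (fun ε : ℝ => (f (x + ε * Complex.I)).im) f'.re 0 := by
    have hcomp := HasDerivAt.scomp_of_eq (0 : ℝ) hf hline (by simp)
    exact (Complex.imCLM.hasFDerivAt.comp_hasDerivAt (0 : ℝ) hcomp).congr_deriv (by simp)
  refine le_of_tendsto hvert.tendsto_slope_zero_right ?_
  filter_upwards [self_mem_nhdsWithin] with ε hε
  have hε : 0 < ε := hε
  have hle := him (x + ε * Complex.I) (by simpa using hε)
  simpa [hx] using mul_nonpos_of_nonneg_of_nonpos (inv_nonneg.2 hε.le) hle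

theorem IsAntiPick.antitoneOn (h : IsAntiPick G F) {s : Set ℝ} (hs : Convex ℝ s)
    (hF : ∀ x ∈ s, F.eval x ≠ 0) : AntitoneOn (fun x => G.eval x / F.eval x) s := by
  let f : ℂ → ℂ := fun z => aeval z G / aeval z F
  have haeval (P : ℝ[X]) (x : ℝ) : aeval (x : ℂ) P = (P.eval x : ℝ) := aeval_ofReal P x
  have hreal (x : ℝ) : f x = ((G.eval x / F.eval x : ℝ) : ℂ) := by simp [f, haeval]
  have hderiv (x : ℝ) (hx : x ∈ s) : HasDerivAt f (deriv f x) x := by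
    have hFx : aeval (x : ℂ) F ≠ 0 := by simpa [haeval] using hF x hx
    exact (DifferentiableAt.fun_div (c := fun z => aeval z G) (d := fun z => aeval z F)
      G.differentiableAt_aeval F.differentiableAt_aeval hFx).hasDerivAt
  have hderiv_real (x : ℝ) (hx : x ∈ s) :
      HasDerivAt (fun x => G.eval x / F.eval x) (deriv f x).re x := by
    simpa only [hreal, Complex.ofReal_re] using (hderiv x hx).real_of_complex
  refine antitoneOn_of_hasDerivWithinAt_nonpos hs
    (fun x hx => (hderiv_real x hx).continuousAt.continuousWithinAt)
    (fun x hx => (hderiv_real x (interior_subset hx)).hasDerivWithinAt) fun x hx => ?_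
  exact re_deriv_nonpos_of_im_nonpos (hderiv x (interior_subset hx)) (by simp [hreal]) h

theorem eval_pos_of_leadingCoeff_pos (hF : 0 < F.leadingCoeff) {x : ℝ}
    (hne : ∀ y ≥ x, F.eval y ≠ 0) : 0 < F.eval x := by
  by_contra! hx
  rcases le_or_gt F.degree 0 with hdeg | hdeg
  · rw [eq_C_of_degree_le_zero hdeg] at hF hx
    rw [eval_C] at hx
    rw [leadingCoeff_C] at hF
    exact hx.not_gt hF
  · obtain ⟨y, hy, hxy⟩ := (((F.tendsto_atTop_of_leadingCoeff_nonneg hdeg hF.le).eventually_ge_atTop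
      0).and (Filter.eventually_ge_atTop x)).exists
    obtain ⟨c, hc, hFc⟩ := intermediate_value_Icc hxy F.continuous.continuousOn ⟨hx, hy⟩
    exact hne c hc.1 hFc

theorem IsAntiPick.eval_nonneg (h : IsAntiPick G F) (hF : 0 < F.leadingCoeff)
    (hdeg : G.degree < F.degree) {x : ℝ} (hne : ∀ y > x, F.eval y ≠ 0) : 0 ≤ G.eval x := by
  have hright : ∀ y ∈ Set.Ioi x, 0 ≤ G.eval y := by
    intro y hy
    have hquot : 0 ≤ G.eval y / F.eval y := by
      refine le_of_tendsto (div_tendsto_atTop_zero_of_degree_lt G F hdeg) ?_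
      filter_upwards [Filter.eventually_ge_atTop y] with t ht
      exact h.antitoneOn (convex_Ioi x) hne hy (hy.trans_le ht) ht
    have hFy : 0 < F.eval y := eval_pos_of_leadingCoeff_pos hF fun t ht => hne t (hy.trans_le ht)
    rwa [le_div_iff₀ hFy, zero_mul] at hquot
  exact ContinuousWithinAt.closure_le (g := fun y => G.eval y) (by simp) continuousWithinAt_const
    G.continuous.continuousWithinAt hright

variable {κ : Type*} [Fintype κ] {P : κ → ℝ[X]} {r : ℝ}

theorem eval_ne_zero_of_sum_eval_pos (hF : 0 < F.leadingCoeff)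
    (hdeg : ∀ b, (F - P b).degree < F.degree) (hP : ∀ b, IsAntiPick (F - P b) F)
    (hsum : ∀ x ≥ r, 0 < ∑ b, (P b).eval x) : ∀ x ≥ r, F.eval x ≠ 0 := by
  have hF0 : F ≠ 0 := by rintro rfl; simp at hF
  intro x hx hFx
  obtain ⟨m, hm, hmax⟩ := F.roots.toFinset.exists_max_image id ⟨x, by simp [hF0, hFx]⟩
  have hFm : F.eval m = 0 := by simpa [hF0] using hm
  have hne : ∀ y > m, F.eval y ≠ 0 := fun y hy hFy => (hmax y (by simp [hF0, hFy])).not_gt hy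
  have hmr : m ≥ r := hx.trans (hmax x (by simp [hF0, hFx]))
  refine (Finset.sum_nonpos fun b _ => ?_).not_gt (hsum m hmr)
  simpa [hFm] using (hP b).eval_nonneg hF (hdeg b) hne

theorem exists_forall_eval_pos_of_sum_eval_pos (hF : 0 < F.leadingCoeff)
    (hdeg : ∀ b, (F - P b).degree < F.degree) (hP : ∀ b, IsAntiPick (F - P b) F)
    (hsum : ∀ x ≥ r, 0 < ∑ b, (P b).eval x) : ∃ b, ∀ x ≥ r, 0 < (P b).eval x := by
  have hne := eval_ne_zero_of_sum_eval_pos hF hdeg hP hsum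
  have hFpos {x : ℝ} (hx : x ≥ r) : 0 < F.eval x :=
    eval_pos_of_leadingCoeff_pos hF fun y hy => hne y (hx.trans hy)
  have : Nonempty κ := by
    by_contra! hκ
    simpa using hsum r le_rfl
  by_contra! hcon
  choose y hyr hy using hcon
  obtain ⟨b₀, hb₀⟩ := Finite.exists_min y
  refine (Finset.sum_nonpos fun b _ => ?_).not_gt (hsum (y b₀) (hyr b₀))
  have hanti := (hP b).antitoneOn (convex_Ici r) hne (hyr b₀) (hyr b) (hb₀ b)
  simp only [eval_sub, sub_div, div_self (hne _ (hyr _)), sub_le_sub_iff_left] at hanti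
  have hquot := hanti.trans (div_nonpos_of_nonpos_of_nonneg (hy b) (hFpos (hyr b)).le)
  rwa [div_le_iff₀ (hFpos (hyr b₀)), zero_mul] at hquot

end CommonInterlacing

section RankOneUpdates

open Polynomial
open scoped ComplexOrder ComplexStarModule

variable {V κ : Type*} [Fintype V] [DecidableEq V] [Fintype κ] {n : ℕ}

/-- The sum over all choices `s` of the characteristic polynomials of the matrices
`A + ∑ i, w i (s i) (w i (s i))ᵀ`: up to normalisation, their average over independent uniform
choices of the rank-one updates. -/
noncomputable def charpolySum (w : Fin n → κ → V → ℝ) (A : Matrix V V ℝ) : ℝ[X] :=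
  ∑ s : Fin n → κ, (A + ∑ i, vecMulVec (w i (s i)) (w i (s i))).charpoly

variable {A : Matrix V V ℝ}

theorem charpolySum_succ (w : Fin (n + 1) → κ → V → ℝ) (A : Matrix V V ℝ) :
    charpolySum w A =
      ∑ b, charpolySum (fun i => w i.succ) (A + vecMulVec (w 0 b) (w 0 b)) := by
  simp [charpolySum, sum_arrow_fin_succ, Fin.sum_univ_succ, add_assoc]

theorem aeval_charpoly_eq_det (A : Matrix V V ℝ) (z : ℂ) :
    aeval z A.charpoly = (scalar V z - A.map (algebraMap ℝ ℂ)).det := by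
  rw [← eval_charpoly, charpoly_map, eval_map_algebraMap]

theorem posDef_imaginaryPart_scalar_sub (hA : A.IsSymm) {z : ℂ} (hz : 0 < z.im) :
    (ℑ (scalar V z - A.map (algebraMap ℝ ℂ)) : Matrix V V ℂ).PosDef := by
  have hherm : IsSelfAdjoint (A.map (algebraMap ℝ ℂ)) := by
    ext i j
    simp [hA.apply i j]
  have heq : (ℑ (scalar V z - A.map (algebraMap ℝ ℂ)) : Matrix V V ℂ) = z.im • 1 := by
    rw [scalar_apply, ← smul_one_eq_diagonal]
    rw [map_sub, AddSubgroupClass.coe_sub, hherm.imaginaryPart, imaginaryPart_smul]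
    simp [(IsSelfAdjoint.one (Matrix V V ℂ)).imaginaryPart]
  rw [heq]
  exact PosDef.one.smul hz

variable [Nonempty κ]

omit [Nonempty κ] in
theorem coeff_charpolySum_card (w : Fin n → κ → V → ℝ) (A : Matrix V V ℝ) :
    (charpolySum w A).coeff (Fintype.card V) = Fintype.card κ ^ n := by
  have hcoeff (B : Matrix V V ℝ) : B.charpoly.coeff (Fintype.card V) = 1 := by
    rw [← charpoly_natDegree_eq_dim B, (charpoly_monic B).coeff_natDegree]
  simp [charpolySum, hcoeff]

theorem natDegree_charpolySum (w : Fin n → κ → V → ℝ) (A : Matrix V V ℝ) :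
    (charpolySum w A).natDegree = Fintype.card V := by
  refine natDegree_eq_of_le_of_coeff_ne_zero
    (natDegree_sum_le_of_forall_le _ _ fun s _ => (charpoly_natDegree_eq_dim _).le) ?_
  simp [coeff_charpolySum_card]

theorem leadingCoeff_charpolySum (w : Fin n → κ → V → ℝ) (A : Matrix V V ℝ) :
    (charpolySum w A).leadingCoeff = Fintype.card κ ^ n := by
  rw [leadingCoeff, natDegree_charpolySum, coeff_charpolySum_card]

theorem leadingCoeff_charpolySum_pos (w : Fin n → κ → V → ℝ) (A : Matrix V V ℝ) :
    0 < (charpolySum w A).leadingCoeff := by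
  rw [leadingCoeff_charpolySum]
  exact pow_pos (by exact_mod_cast Fintype.card_pos) n

theorem degree_charpolySum_sub_lt (w : Fin n → κ → V → ℝ) (A B : Matrix V V ℝ) :
    (charpolySum w A - charpolySum w B).degree < (charpolySum w A).degree := by
  have hne (C : Matrix V V ℝ) : charpolySum w C ≠ 0 :=
    leadingCoeff_ne_zero.1 (leadingCoeff_charpolySum_pos w C).ne'
  refine degree_sub_lt_left ?_ (hne A) (by rw [leadingCoeff_charpolySum, leadingCoeff_charpolySum])
  rw [degree_eq_natDegree (hne A), degree_eq_natDegree (hne B), natDegree_charpolySum,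
    natDegree_charpolySum]

theorem isAntiPick_charpolySum_sub (w : Fin n → κ → V → ℝ) (hA : A.IsSymm) (p : V → ℝ) :
    IsAntiPick (charpolySum w A - charpolySum w (A + vecMulVec p p)) (charpolySum w A) := by
  let φ : (V → ℝ) → V → ℂ := fun q i => q i
  have hφ (q : V → ℝ) : (vecMulVec q q).map (algebraMap ℝ ℂ) = vecMulVec (φ q) (star (φ q)) := by
    ext i j; simp [φ, vecMulVec_apply]
  have haeval (z : ℂ) (B : Matrix V V ℝ) : aeval z (charpolySum w B) =
      ∑ s : Fin n → κ, (scalar V z - B.map (algebraMap ℝ ℂ) -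
        ∑ i, vecMulVec (φ (w i (s i))) (star (φ (w i (s i))))).det := by
    simp only [charpolySum, map_sum, aeval_charpoly_eq_det, ← hφ, sub_sub]
    refine Finset.sum_congr rfl fun s _ => congrArg det ?_
    ext; simp [Matrix.sum_apply]
  intro z hz
  rw [map_sub, haeval, haeval, Matrix.map_add _ (map_add _), hφ, ← sub_sub]
  exact (isRankOneStable_sum_det fun i b => φ (w i b)).im_div_nonpos
    (posDef_imaginaryPart_scalar_sub hA hz) (φ p)

theorem exists_charpoly_eval_pos_of_charpolySum_eval_pos {r : ℝ} (w : Fin n → κ → V → ℝ)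
    (hA : A.IsSymm) (h : ∀ x ≥ r, 0 < (charpolySum w A).eval x) :
    ∃ s : Fin n → κ, ∀ x ≥ r,
      0 < (A + ∑ i, vecMulVec (w i (s i)) (w i (s i))).charpoly.eval x := by
  induction n generalizing A with
  | zero => exact ⟨Fin.elim0, by simpa [charpolySum] using h⟩
  | succ n ih =>
    simp only [charpolySum_succ, eval_finsetSum] at h
    obtain ⟨b, hb⟩ := exists_forall_eval_pos_of_sum_eval_pos
      (leadingCoeff_charpolySum_pos (fun i => w i.succ) A)
      (fun b => degree_charpolySum_sub_lt _ _ _)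
      (fun b => isAntiPick_charpolySum_sub _ hA (w 0 b)) h
    obtain ⟨s, hs⟩ := ih (fun i => w i.succ) (hA.add (transpose_vecMulVec _ _)) hb
    exact ⟨Fin.cons b s, by simpa [Fin.sum_univ_succ, add_assoc] using hs⟩

theorem exists_charpoly_eval_pos_of_sum_eval_pos {ι : Type*} [Fintype ι] [DecidableEq ι] {r : ℝ}
    (w : ι → κ → V → ℝ) (hA : A.IsSymm) (h : ∀ x ≥ r,
      0 < ∑ s : ι → κ, (A + ∑ i, vecMulVec (w i (s i)) (w i (s i))).charpoly.eval x) :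
    ∃ s : ι → κ, ∀ x ≥ r, 0 < (A + ∑ i, vecMulVec (w i (s i)) (w i (s i))).charpoly.eval x := by
  let e := Fintype.equivFin ι
  have hsum (s : Fin (Fintype.card ι) → κ) :
      ∑ i, vecMulVec (w (e.symm i) (s i)) (w (e.symm i) (s i)) =
        ∑ i, vecMulVec (w i ((s ∘ e) i)) (w i ((s ∘ e) i)) := by
    rw [← e.sum_comp]
    simp
  obtain ⟨s, hs⟩ := exists_charpoly_eval_pos_of_charpolySum_eval_pos (r := r)
    (fun i => w (e.symm i)) hA fun x hx => by
      rw [charpolySum, eval_finsetSum, ← (e.arrowCongr (Equiv.refl κ)).sum_comp]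
      simpa [hsum, Function.comp_assoc] using h x hx
  exact ⟨s ∘ e, by simpa only [hsum] using hs⟩

end RankOneUpdates

section GoodSigning

variable {V : Type*} [DecidableEq V] (G : SimpleGraph V)

/-- The vector `e_u + b e_v` attached to an edge `s(u, v)`, with an arbitrary choice of the order of
the end points, and zero if `s(u, v)` is not an edge. -/
noncomputable def edgeVec (e : Sym2 V) (b : ℤˣ) : V → ℝ :=
  if e ∈ G.edgeSet then Pi.single e.out.1 1 + ((b : ℤ) : ℝ) • Pi.single e.out.2 1 else 0

variable {G}

theorem edgeVec_mk {u v : V} (h : G.Adj u v) (b : ℤˣ) :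
    edgeVec G s(u, v) b = Pi.single u 1 + ((b : ℤ) : ℝ) • Pi.single v 1 ∨
      edgeVec G s(u, v) b = Pi.single v 1 + ((b : ℤ) : ℝ) • Pi.single u 1 := by
  have hout : s(s(u, v).out.1, s(u, v).out.2) = s(u, v) := Quot.out_eq _
  rw [Sym2.eq_iff] at hout
  rcases hout with ⟨h₁, h₂⟩ | ⟨h₁, h₂⟩ <;> simp [edgeVec, h, h₁, h₂]

variable (G)

theorem edgeVec_mul_self (e : Sym2 V) (b : ℤˣ) (i : V) :
    edgeVec G e b i * edgeVec G e b i = G.incMatrix ℝ i e := by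
  by_cases he : e ∈ G.edgeSet
  · induction e with | _ u v
    have hb : ((b : ℤ) : ℝ) * ((b : ℤ) : ℝ) = 1 := by exact_mod_cast Int.units_coe_mul_self b
    have huv : G.Adj u v := he
    rcases edgeVec_mk huv b with h | h <;>
      by_cases hu : i = u <;> by_cases hv : i = v <;>
        simp_all [SimpleGraph.incMatrix_apply', SimpleGraph.mk'_mem_incidenceSet_iff]
  · simp [edgeVec, he, SimpleGraph.incMatrix_apply', SimpleGraph.incidenceSet]

theorem edgeVec_apply_of_notMem {e : Sym2 V} {i : V} (hi : i ∉ e) (b : ℤˣ) :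
    edgeVec G e b i = 0 := by
  have h₁ : i ≠ e.out.1 := fun h => hi (h ▸ Sym2.out_fst_mem e)
  have h₂ : i ≠ e.out.2 := fun h => hi (h ▸ Sym2.out_snd_mem e)
  unfold edgeVec
  split_ifs <;> simp [h₁, h₂]

theorem edgeVec_mul_of_ne (s : Sym2 V → ℤˣ) (e : Sym2 V) {i j : V} (hij : i ≠ j) :
    edgeVec G e (s e) i * edgeVec G e (s e) j = if e = s(i, j) then signedAdj G s i j else 0 := by
  split_ifs with he
  · subst he
    by_cases h : G.Adj i j
    · rcases edgeVec_mk h (s s(i, j)) with hvec | hvec <;>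
        simp [hvec, signedAdj, h, hij, hij.symm]
    · simp [edgeVec, signedAdj, h]
  · rw [← Sym2.mem_and_mem_iff hij, not_and_or] at he
    rcases he with hi | hj
    · rw [edgeVec_apply_of_notMem G hi, zero_mul]
    · rw [edgeVec_apply_of_notMem G hj, mul_zero]

variable [Fintype V]

theorem signedAdj_eq_add_sum_vecMulVec (s : Sym2 V → ℤˣ) :
    signedAdj G s = -diagonal (fun v => (G.degree v : ℝ)) +
      ∑ e, vecMulVec (edgeVec G e (s e)) (edgeVec G e (s e)) := by
  ext i j
  rw [Matrix.add_apply, Matrix.sum_apply]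
  simp only [vecMulVec_apply]
  rcases eq_or_ne i j with rfl | hij
  · simp [edgeVec_mul_self, SimpleGraph.sum_incMatrix_apply, signedAdj]
  · simp [edgeVec_mul_of_ne G s _ hij, hij]

variable {G} {β : V → ℝ} {ρ : ℝ}

theorem exists_signedAdj_charpoly_eval_pos (hρ : 0 < ρ) (hβ : ∀ v, 0 < β v)
    (hdeg : ∀ v, (G.degree v : ℝ) ≤ β v ^ 2 + 1) (hdegρ : ∀ v, (G.degree v : ℝ) ≤ ρ * β v)
    (hadj : ∀ v w, G.Adj v w → β v + β w ≤ ρ) :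
    ∃ s, ∀ x ≥ ρ, 0 < (signedAdj G s).charpoly.eval x := by
  simp only [signedAdj_eq_add_sum_vecMulVec]
  refine exists_charpoly_eval_pos_of_sum_eval_pos (edgeVec G) (isSymm_diagonal _).neg
    fun x hx => ?_
  simp only [← signedAdj_eq_add_sum_vecMulVec]
  exact sum_eval_charpoly_signedAdj_pos (hρ.trans_le hx) hβ hdeg
    (fun v => (hdegρ v).trans (mul_le_mul_of_nonneg_right hx (hβ v).le))
    fun v w h => (hadj v w h).trans hx

theorem eval_charpoly_eq_zero_of_mulVec_eq_smul {M : Matrix V V ℝ} {lam : ℝ} {y : V → ℝ}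
    (hy : y ≠ 0) (h : M *ᵥ y = lam • y) : M.charpoly.eval lam = 0 := by
  rw [eval_charpoly]
  refine exists_mulVec_eq_zero_iff.1 ⟨y, hy, ?_⟩
  rw [sub_mulVec, h, scalar_apply, ← smul_one_eq_diagonal, smul_mulVec, one_mulVec, sub_self]

variable {L : Set V} {s : Sym2 V → ℤˣ} {lam : ℝ} {y : V → ℝ}

omit [DecidableEq V] in
theorem signedAdj_mulVec_indicator_mul (hL : ∀ u v, G.Adj u v → (u ∈ L ↔ v ∉ L))
    (h : signedAdj G s *ᵥ y = lam • y) :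
    signedAdj G s *ᵥ (fun v => (if v ∈ L then 1 else -1) * y v) =
      (-lam) • fun v => (if v ∈ L then 1 else -1) * y v := by
  have hflip (u v : V) : signedAdj G s u v * ((if v ∈ L then 1 else -1) * y v) =
      -(if u ∈ L then 1 else -1) * (signedAdj G s u v * y v) := by
    by_cases hadj : G.Adj u v
    · by_cases hv : v ∈ L <;> simp [hv, hL u v hadj]
    · simp [signedAdj, hadj]
  ext u
  have hu := congrFun h u
  simp only [mulVec, dotProduct, Pi.smul_apply, smul_eq_mul] at hu ⊢
  rw [Finset.sum_congr rfl fun v _ => hflip u v, ← Finset.mul_sum, hu]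
  ring

theorem abs_lt_of_signedAdj_mulVec_eq_smul (hL : ∀ u v, G.Adj u v → (u ∈ L ↔ v ∉ L))
    (hs : ∀ x ≥ ρ, 0 < (signedAdj G s).charpoly.eval x) (hy : y ≠ 0)
    (h : signedAdj G s *ᵥ y = lam • y) : |lam| < ρ := by
  have hlt {μ : ℝ} {z : V → ℝ} (hz : z ≠ 0) (hμ : signedAdj G s *ᵥ z = μ • z) : μ < ρ := by
    by_contra! hle
    exact (hs μ hle).ne' (eval_charpoly_eq_zero_of_mulVec_eq_smul hz hμ)
  refine abs_lt.2 ⟨neg_lt.1 (hlt ?_ (signedAdj_mulVec_indicator_mul hL h)), hlt hy h⟩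
  obtain ⟨v, hv⟩ := Function.ne_iff.1 hy
  refine Function.ne_iff.2 ⟨v, ?_⟩
  by_cases hvL : v ∈ L <;> simpa [hvL] using hv

end GoodSigning

section TwoLift

variable {V : Type*}

/-- The 2-lift of `G` with respect to the signing `s`: over an edge `e` of `G` the fibres are joined
by parallel edges if `s e = 1` and by crossing edges if `s e = -1`. -/
def twoLift (G : SimpleGraph V) (s : Sym2 V → ℤˣ) : SimpleGraph (V × ℤˣ) where
  Adj p q := G.Adj p.1 q.1 ∧ q.2 = s s(p.1, q.1) * p.2
  symm := ⟨fun p q h => ⟨h.1.symm, by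
    rw [h.2, ← mul_assoc, Sym2.eq_swap, Int.units_mul_self, one_mul]⟩⟩
  loopless := ⟨fun p h => G.loopless.irrefl _ h.1⟩

theorem twoLift_adj {G : SimpleGraph V} {s : Sym2 V → ℤˣ} {p q : V × ℤˣ} :
    (twoLift G s).Adj p q ↔ G.Adj p.1 q.1 ∧ q.2 = s s(p.1, q.1) * p.2 :=
  Iff.rfl

variable [Fintype V] {G : SimpleGraph V} {L : Set V} {s : Sym2 V → ℤˣ}

theorem sum_neighborFinset_twoLift {M : Type*} [AddCommMonoid M] (G : SimpleGraph V)
    (s : Sym2 V → ℤˣ) (f : V × ℤˣ → M) (u : V) (i : ℤˣ) :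
    ∑ q ∈ (twoLift G s).neighborFinset (u, i), f q =
      ∑ v ∈ G.neighborFinset u, f (v, s s(u, v) * i) := by
  refine Finset.sum_nbij' Prod.fst (fun v => (v, s s(u, v) * i)) ?_ ?_ ?_ ?_ ?_ <;>
    simp +contextual [twoLift_adj]

theorem degree_twoLift (G : SimpleGraph V) (s : Sym2 V → ℤˣ) (p : V × ℤˣ) :
    (twoLift G s).degree p = G.degree p.1 := by
  rw [← SimpleGraph.card_neighborFinset_eq_degree, ← SimpleGraph.card_neighborFinset_eq_degree,
    Finset.card_eq_sum_ones, Finset.card_eq_sum_ones, sum_neighborFinset_twoLift]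

theorem signedAdj_mulVec_apply (G : SimpleGraph V) (s : Sym2 V → ℤˣ) (y : V → ℝ) (u : V) :
    (signedAdj G s *ᵥ y) u = ∑ v ∈ G.neighborFinset u, ((s s(u, v) : ℤ) : ℝ) * y v := by
  simp [signedAdj, mulVec, dotProduct, SimpleGraph.neighborFinset_eq_filter, Finset.sum_filter]

section Eigenvectors

variable {lam : ℝ} {x : V × ℤˣ → ℝ}

theorem sum_neighborFinset_of_adjMatrix_twoLift_mulVec_eq_smul
    (hx : (twoLift G s).adjMatrix ℝ *ᵥ x = lam • x) (u : V) (i : ℤˣ) :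
    ∑ v ∈ G.neighborFinset u, x (v, s s(u, v) * i) = lam * x (u, i) := by
  rw [← sum_neighborFinset_twoLift, ← SimpleGraph.adjMatrix_mulVec_apply, hx]
  rfl

theorem signedAdj_mulVec_sub_eq_smul (hx : (twoLift G s).adjMatrix ℝ *ᵥ x = lam • x) :
    signedAdj G s *ᵥ (fun v => x (v, 1) - x (v, -1)) =
      lam • fun v => x (v, 1) - x (v, -1) := by
  ext u
  rw [signedAdj_mulVec_apply, Pi.smul_apply, smul_eq_mul, mul_sub,
    ← sum_neighborFinset_of_adjMatrix_twoLift_mulVec_eq_smul hx,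
    ← sum_neighborFinset_of_adjMatrix_twoLift_mulVec_eq_smul hx, ← Finset.sum_sub_distrib]
  refine Finset.sum_congr rfl fun v _ => ?_
  rcases Int.units_eq_one_or (s s(u, v)) with h | h <;> simp [h]

theorem adjMatrix_mulVec_eq_smul_of_twoLift {y : V → ℝ}
    (hx : (twoLift G s).adjMatrix ℝ *ᵥ (y ∘ Prod.fst) = lam • (y ∘ Prod.fst)) :
    G.adjMatrix ℝ *ᵥ y = lam • y := by
  ext u
  rw [SimpleGraph.adjMatrix_mulVec_apply]
  exact sum_neighborFinset_of_adjMatrix_twoLift_mulVec_eq_smul hx u 1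

end Eigenvectors

/-- Every eigenvector of `G` whose eigenvalue has absolute value at least `ρ` is constant on `L` and
on its complement. For a biregular graph with sides `L` and `Lᶜ` this implies that the non-trivial
eigenvalues `lam` satisfy `|lam| < ρ`; unlike the latter it is inherited by 2-lifts without knowing
that they are connected. -/
def HasTrivialSpectrumAbove (G : SimpleGraph V) (L : Set V) (ρ : ℝ) : Prop :=
  ∀ ⦃lam : ℝ⦄ ⦃x : V → ℝ⦄, G.adjMatrix ℝ *ᵥ x = lam • x → ρ ≤ |lam| →
    ∀ ⦃u v⦄, (u ∈ L ↔ v ∈ L) → x u = x v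

variable {ρ : ℝ}

theorem HasTrivialSpectrumAbove.twoLift (h : HasTrivialSpectrumAbove G L ρ)
    (hs : ∀ ⦃lam : ℝ⦄ ⦃y : V → ℝ⦄, y ≠ 0 → signedAdj G s *ᵥ y = lam • y → |lam| < ρ) :
    HasTrivialSpectrumAbove (twoLift G s) (Prod.fst ⁻¹' L) ρ := by
  intro lam x hx hρ p q hpq
  have hodd : (fun v => x (v, 1) - x (v, -1)) = 0 := by
    by_contra hne
    exact (hs hne (signedAdj_mulVec_sub_eq_smul hx)).not_ge hρ
  have heven : x = (fun v => x (v, 1)) ∘ Prod.fst := by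
    ext ⟨v, i⟩
    rcases Int.units_eq_one_or i with rfl | rfl
    · rfl
    · exact (sub_eq_zero.1 (congrFun hodd v)).symm
  rw [heven] at hx ⊢
  exact h (adjMatrix_mulVec_eq_smul_of_twoLift hx) hρ hpq

theorem hasTrivialSpectrumAbove_completeBipartiteGraph {W : Type*} [Fintype W] (hρ : 0 < ρ) :
    HasTrivialSpectrumAbove (completeBipartiteGraph V W) (Set.range Sum.inl) ρ := by
  intro lam x hx hlam u v huv
  have hlam0 : lam ≠ 0 := abs_pos.1 (hρ.trans_le hlam)
  have hnbr : (completeBipartiteGraph V W).neighborFinset u =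
      (completeBipartiteGraph V W).neighborFinset v := by
    rcases u with u | u <;> rcases v with v | v <;> simp at huv <;> ext (w | w) <;> simp
  have hsum (w : V ⊕ W) : ∑ z ∈ (completeBipartiteGraph V W).neighborFinset w, x z = lam * x w := by
    rw [← SimpleGraph.adjMatrix_mulVec_apply, hx]
    rfl
  exact mul_left_cancel₀ hlam0 (by rw [← hsum, ← hsum, hnbr])

theorem HasTrivialSpectrumAbove.of_iso {W : Type*} [Fintype W] {H : SimpleGraph W}
    (h : HasTrivialSpectrumAbove G L ρ) (e : H ≃g G) :
    HasTrivialSpectrumAbove H (e ⁻¹' L) ρ := by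
  intro lam x hx hlam u v huv
  have hx' : G.adjMatrix ℝ *ᵥ (x ∘ e.symm) = lam • (x ∘ e.symm) := by
    have hcomp : (x ∘ e.symm) ∘ e.symm.toEquiv.symm = x := by
      ext w
      exact congrArg x (e.symm_apply_apply w)
    rw [← SimpleGraph.Iso.reindex_adjMatrix ℝ e, reindex_apply]
    refine (submatrix_mulVec_equiv _ _ _ e.symm.toEquiv).trans ?_
    rw [hcomp, hx]
    rfl
  simpa using h hx' hlam (u := e u) (v := e v) huv

end TwoLift

section Biregular

/-- The graph `G` is bipartite with sides `L` and `Lᶜ`, whose vertices have degrees `k₁` and `k₂`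
respectively. -/
structure IsBiregular {V : Type*} [Fintype V] (G : SimpleGraph V) (L : Set V) (k₁ k₂ : ℕ) :
    Prop where
  mem_iff_notMem : ∀ u v, G.Adj u v → (u ∈ L ↔ v ∉ L)
  degree_of_mem : ∀ v ∈ L, G.degree v = k₁
  degree_of_notMem : ∀ v ∉ L, G.degree v = k₂

variable {V W : Type*} [Fintype V] [Fintype W] {G : SimpleGraph V} {L : Set V} {k₁ k₂ : ℕ} {ρ : ℝ}

theorem IsBiregular.twoLift (h : IsBiregular G L k₁ k₂) (s : Sym2 V → ℤˣ) :
    IsBiregular (twoLift G s) (Prod.fst ⁻¹' L) k₁ k₂ where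
  mem_iff_notMem _ _ huv := h.mem_iff_notMem _ _ huv.1
  degree_of_mem v hv := (degree_twoLift G s v).trans (h.degree_of_mem _ hv)
  degree_of_notMem v hv := (degree_twoLift G s v).trans (h.degree_of_notMem _ hv)

theorem IsBiregular.of_iso {H : SimpleGraph W} (h : IsBiregular G L k₁ k₂) (e : H ≃g G) :
    IsBiregular H (e ⁻¹' L) k₁ k₂ where
  mem_iff_notMem _ _ huv := h.mem_iff_notMem _ _ (e.map_adj_iff.2 huv)
  degree_of_mem v hv := (e.degree_eq v).symm.trans (h.degree_of_mem _ hv)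
  degree_of_notMem v hv := (e.degree_eq v).symm.trans (h.degree_of_notMem _ hv)

theorem isBiregular_completeBipartiteGraph (V W : Type*) [Fintype V] [Fintype W] :
    IsBiregular (completeBipartiteGraph V W) (Set.range Sum.inl) (Fintype.card W)
      (Fintype.card V) where
  mem_iff_notMem := by rintro (u | u) (v | v) <;> simp
  degree_of_mem := by
    rintro _ ⟨v, rfl⟩
    rw [← SimpleGraph.card_neighborFinset_eq_degree, SimpleGraph.neighborFinset_eq_filter,
      Finset.card_filter, Fintype.sum_sum_type]
    simp
  degree_of_notMem := by
    rintro (v | v) hv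
    · simp at hv
    · rw [← SimpleGraph.card_neighborFinset_eq_degree, SimpleGraph.neighborFinset_eq_filter,
        Finset.card_filter, Fintype.sum_sum_type]
      simp

theorem IsBiregular.exists_hasTrivialSpectrumAbove_twoLift (hG : IsBiregular G L k₁ k₂)
    (h₁ : 2 ≤ k₁) (h₂ : 2 ≤ k₂)
    (h : HasTrivialSpectrumAbove G L (√((k₁ : ℝ) - 1) + √((k₂ : ℝ) - 1))) :
    ∃ s, HasTrivialSpectrumAbove (_root_.twoLift G s) (Prod.fst ⁻¹' L)
      (√((k₁ : ℝ) - 1) + √((k₂ : ℝ) - 1)) := by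
  have h₁' : (2 : ℝ) ≤ k₁ := by exact_mod_cast h₁
  have h₂' : (2 : ℝ) ≤ k₂ := by exact_mod_cast h₂
  set a := √((k₁ : ℝ) - 1)
  set b := √((k₂ : ℝ) - 1)
  have ha : 1 ≤ a := Real.one_le_sqrt.2 (by linarith)
  have hb : 1 ≤ b := Real.one_le_sqrt.2 (by linarith)
  have ha2 : (k₁ : ℝ) = a ^ 2 + 1 := by rw [Real.sq_sqrt (by linarith)]; ring
  have hb2 : (k₂ : ℝ) = b ^ 2 + 1 := by rw [Real.sq_sqrt (by linarith)]; ring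
  have hdeg (v : V) : (G.degree v : ℝ) = (if v ∈ L then a else b) ^ 2 + 1 := by
    split_ifs with hv
    · rw [hG.degree_of_mem v hv, ha2]
    · rw [hG.degree_of_notMem v hv, hb2]
  obtain ⟨s, hs⟩ := exists_signedAdj_charpoly_eval_pos (G := G) (ρ := a + b)
    (β := fun v => if v ∈ L then a else b) (by positivity) (fun v => by split_ifs <;> linarith)
    (fun v => (hdeg v).le) (fun v => by rw [hdeg]; split_ifs <;> nlinarith)
    (fun v w hvw => by
      by_cases hw : w ∈ L <;> simp [hw, hG.mem_iff_notMem v w hvw, add_comm])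
  exact ⟨s, h.twoLift fun _ _ => abs_lt_of_signedAdj_mulVec_eq_smul hG.mem_iff_notMem hs⟩

theorem exists_isBiregular_hasTrivialSpectrumAbove (h₁ : 2 ≤ k₁) (h₂ : 2 ≤ k₂) (N : ℕ) :
    ∃ (V : Type) (_ : Fintype V) (G : SimpleGraph V) (L : Set V), N < Fintype.card V ∧
      IsBiregular G L k₁ k₂ ∧
      HasTrivialSpectrumAbove G L (√((k₁ : ℝ) - 1) + √((k₂ : ℝ) - 1)) := by
  induction N with
  | zero =>
    have h₁' : (2 : ℝ) ≤ k₁ := by exact_mod_cast h₁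
    have hρ : 0 < √((k₁ : ℝ) - 1) := Real.sqrt_pos.2 (by linarith)
    refine ⟨Fin k₂ ⊕ Fin k₁, inferInstance, _, _, ?_, ?_,
      hasTrivialSpectrumAbove_completeBipartiteGraph (by positivity)⟩
    · simp; omega
    · simpa using isBiregular_completeBipartiteGraph (Fin k₂) (Fin k₁)
  | succ N ih =>
    obtain ⟨V, _, G, L, hN, hG, h⟩ := ih
    obtain ⟨s, hs⟩ := hG.exists_hasTrivialSpectrumAbove_twoLift h₁ h₂ h
    refine ⟨V × ℤˣ, inferInstance, _, _, ?_, hG.twoLift s, hs⟩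
    simp; omega

end Biregular

section Conclusion

open SimpleGraph (adjMatrix_mulVec_apply)

variable {V : Type*} [Fintype V] {G : SimpleGraph V} {L : Set V} {k₁ k₂ : ℕ} {ρ lam : ℝ}
  {x : V → ℝ} {u v w : V}

theorem IsBiregular.degree_mul_degree (hG : IsBiregular G L k₁ k₂) (huv : G.Adj u v) :
    G.degree u * G.degree v = k₁ * k₂ := by
  have hside := hG.mem_iff_notMem u v huv
  by_cases hv : v ∈ L
  · rw [hG.degree_of_mem v hv, hG.degree_of_notMem u fun hu => hside.1 hu hv, mul_comm]
  · rw [hG.degree_of_notMem v hv, hG.degree_of_mem u (hside.2 hv)]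

theorem IsBiregular.degree_pos (hG : IsBiregular G L k₁ k₂) (h₁ : 0 < k₁) (h₂ : 0 < k₂) (v : V) :
    0 < G.degree v := by
  by_cases hv : v ∈ L
  · rwa [hG.degree_of_mem v hv]
  · rwa [hG.degree_of_notMem v hv]

theorem IsBiregular.mem_iff_mem_of_adj (hG : IsBiregular G L k₁ k₂) (huv : G.Adj u v)
    (huw : G.Adj u w) : v ∈ L ↔ w ∈ L := by
  have hv := hG.mem_iff_notMem u v huv
  have hw := hG.mem_iff_notMem u w huw
  tauto

theorem adjMatrix_mulVec_eq_smul_of_forall_adj (hdeg : ∀ v, 0 < G.degree v)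
    (h : ∀ u v, G.Adj u v → G.degree u * x v = lam * x u) : G.adjMatrix ℝ *ᵥ x = lam • x := by
  ext u
  have hu : (G.degree u : ℝ) ≠ 0 := by exact_mod_cast (hdeg u).ne'
  refine mul_left_cancel₀ hu ?_
  rw [adjMatrix_mulVec_apply, Finset.mul_sum,
    Finset.sum_congr rfl fun v hv => h u v ((G.mem_neighborFinset u v).1 hv)]
  simp

theorem IsBiregular.degree_mul_eq (hG : IsBiregular G L k₁ k₂)
    (hx : G.adjMatrix ℝ *ᵥ x = lam • x) (hconst : ∀ ⦃u v⦄, (u ∈ L ↔ v ∈ L) → x u = x v)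
    (huv : G.Adj u v) : G.degree u * x v = lam * x u := by
  have hsum := congrFun hx u
  rw [adjMatrix_mulVec_apply, Finset.sum_congr rfl fun w hw => hconst
    (hG.mem_iff_mem_of_adj ((G.mem_neighborFinset u w).1 hw) huv)] at hsum
  simpa using hsum

theorem IsBiregular.abs_eq_sqrt (hG : IsBiregular G L k₁ k₂) (h₁ : 0 < k₁) (h₂ : 0 < k₂)
    (hx0 : x ≠ 0) (hx : G.adjMatrix ℝ *ᵥ x = lam • x)
    (hconst : ∀ ⦃u v⦄, (u ∈ L ↔ v ∈ L) → x u = x v) : |lam| = √((k₁ : ℝ) * k₂) := by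
  obtain ⟨u, hu⟩ := Function.ne_iff.1 hx0
  obtain ⟨v, huv⟩ := G.degree_pos_iff_exists_adj u |>.1 (hG.degree_pos h₁ h₂ u)
  have hprod : (G.degree u * G.degree v : ℝ) = k₁ * k₂ := by
    exact_mod_cast hG.degree_mul_degree huv
  have hsq : lam ^ 2 = k₁ * k₂ := by
    refine mul_right_cancel₀ hu ?_
    calc lam ^ 2 * x u = lam * (G.degree u * x v) := by rw [hG.degree_mul_eq hx hconst huv]; ring
      _ = G.degree u * (lam * x v) := by ring
      _ = G.degree u * (G.degree v * x u) := by rw [hG.degree_mul_eq hx hconst huv.symm]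
      _ = k₁ * k₂ * x u := by rw [← hprod, mul_assoc]
  rw [← hsq, Real.sqrt_sq_eq_abs]

theorem IsBiregular.adjMatrix_mulVec_sqrt_degree (hG : IsBiregular G L k₁ k₂) (h₁ : 0 < k₁)
    (h₂ : 0 < k₂) (u : V) :
    G.adjMatrix ℝ *ᵥ (fun v => if G.Reachable u v then √(G.degree v) else 0) =
      √((k₁ : ℝ) * k₂) • fun v => if G.Reachable u v then √(G.degree v) else 0 := by
  refine adjMatrix_mulVec_eq_smul_of_forall_adj (hG.degree_pos h₁ h₂) fun v w hvw => ?_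
  have hreach : G.Reachable u v ↔ G.Reachable u w :=
    ⟨fun h => h.trans hvw.reachable, fun h => h.trans hvw.symm.reachable⟩
  have hprod : (k₁ * k₂ : ℝ) = G.degree v * G.degree w := by
    exact_mod_cast (hG.degree_mul_degree hvw).symm
  simp only [hreach]
  split_ifs
  · calc G.degree v * √(G.degree w)
        = √(G.degree v) * √(G.degree v) * √(G.degree w) := by
          rw [Real.mul_self_sqrt (Nat.cast_nonneg _)]
      _ = √((k₁ : ℝ) * k₂) * √(G.degree v) := by
          rw [hprod, Real.sqrt_mul (Nat.cast_nonneg _)]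
          ring
  · simp

theorem HasTrivialSpectrumAbove.connected [Nonempty V] (h : HasTrivialSpectrumAbove G L ρ)
    (hG : IsBiregular G L k₁ k₂) (h₁ : 0 < k₁) (h₂ : 0 < k₂) (hρ : ρ ≤ √((k₁ : ℝ) * k₂)) :
    G.Connected := by
  have hside (u v : V) (huv : u ∈ L ↔ v ∈ L) : G.Reachable u v := by
    have heq := h (hG.adjMatrix_mulVec_sqrt_degree h₁ h₂ u) (hρ.trans (le_abs_self _)) huv
    have hu : √(G.degree u) ≠ 0 := by
      have := hG.degree_pos h₁ h₂ u
      positivity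
    by_contra hnr
    exact hu (by simpa [hnr] using heq)
  refine ⟨fun u v => ?_⟩
  by_cases huv : u ∈ L ↔ v ∈ L
  · exact hside u v huv
  · obtain ⟨w, huw⟩ := G.degree_pos_iff_exists_adj u |>.1 (hG.degree_pos h₁ h₂ u)
    have := hG.mem_iff_notMem u w huw
    exact huw.reachable.trans (hside w v (by tauto))

theorem sqrt_sub_one_add_sqrt_sub_one_le {a b : ℝ} (ha : 1 ≤ a) (hb : 1 ≤ b) :
    √(a - 1) + √(b - 1) ≤ √(a * b) := by
  obtain ⟨ha', hb'⟩ : 0 ≤ a - 1 ∧ 0 ≤ b - 1 := ⟨by linarith, by linarith⟩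
  refine Real.le_sqrt_of_sq_le ?_
  calc (√(a - 1) + √(b - 1)) ^ 2
      ≤ (√(a - 1) + √(b - 1)) ^ 2 + (√(a - 1) * √(b - 1) - 1) ^ 2 :=
        le_add_of_nonneg_right (sq_nonneg _)
    _ = (√(a - 1) ^ 2 + 1) * (√(b - 1) ^ 2 + 1) := by ring
    _ = a * b := by rw [Real.sq_sqrt ha', Real.sq_sqrt hb']; ring

end Conclusion

theorem exists_weak_ramanujan_biregular_general (k₁ k₂ : ℕ) (h₁ : 2 ≤ k₁) (h₂ : 2 ≤ k₂) (N : ℕ) :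
    ∃ (n : ℕ) (G : SimpleGraph (Fin n)) (L : Set (Fin n)),
      n > N ∧ G.Connected ∧
      (∀ u v : Fin n, G.Adj u v → (u ∈ L ↔ v ∉ L)) ∧
      (∀ v ∈ L, G.degree v = k₁) ∧
      (∀ v ∉ L, G.degree v = k₂) ∧
      ∀ lam : ℝ, (∃ x : Fin n → ℝ, x ≠ 0 ∧ G.adjMatrix ℝ *ᵥ x = lam • x) →
        |lam| = √((k₁ : ℝ) * (k₂ : ℝ)) ∨ |lam| < √((k₁ : ℝ) - 1) + √((k₂ : ℝ) - 1) := by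
  obtain ⟨h₁', h₂'⟩ : 0 < k₁ ∧ 0 < k₂ := by omega
  obtain ⟨V, _, H, M, hN, hH, hspec⟩ := exists_isBiregular_hasTrivialSpectrumAbove h₁ h₂ N
  let e := SimpleGraph.Iso.comap (Fintype.equivFin V).symm H
  have hG := hH.of_iso e
  have hspecG := hspec.of_iso e
  have : Nonempty (Fin (Fintype.card V)) := ⟨⟨N, hN⟩⟩
  have hρ : √((k₁ : ℝ) - 1) + √((k₂ : ℝ) - 1) ≤ √((k₁ : ℝ) * k₂) :=
    sqrt_sub_one_add_sqrt_sub_one_le (by exact_mod_cast h₁') (by exact_mod_cast h₂')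
  refine ⟨_, _, _, hN, hspecG.connected hG h₁' h₂' hρ, hG.mem_iff_notMem, hG.degree_of_mem,
    hG.degree_of_notMem, ?_⟩
  rintro lam ⟨x, hx0, hx⟩
  refine or_iff_not_imp_right.2 fun hlam => ?_
  exact hG.abs_eq_sqrt h₁' h₂' hx0 hx (hspecG hx (not_lt.1 hlam))

/-- **Marcus–Spielman–Srivastava (weak-Ramanujan biregular graphs)**: for all `k₁, k₂ ≥ 3`
there exist infinitely many finite connected bipartite `(k₁,k₂)`-biregular graphs all of
whose adjacency eigenvalues `λ` satisfy `|λ| = √(k₁k₂)` or `|λ| ≤ √(k₁−1) + √(k₂−1)`. -/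
theorem exists_weak_ramanujan_biregular (k₁ k₂ : ℕ) (h₁ : 3 ≤ k₁) (h₂ : 3 ≤ k₂) (N : ℕ) :
    ∃ (n : ℕ) (G : SimpleGraph (Fin n)) (L : Set (Fin n)),
      n > N ∧ G.Connected ∧
      (∀ u v : Fin n, G.Adj u v → (u ∈ L ↔ v ∉ L)) ∧
      (∀ v ∈ L, G.degree v = k₁) ∧
      (∀ v ∉ L, G.degree v = k₂) ∧
      ∀ lam : ℝ, (∃ x : Fin n → ℝ, x ≠ 0 ∧ G.adjMatrix ℝ *ᵥ x = lam • x) →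
        |lam| = Real.sqrt ((k₁ : ℝ) * (k₂ : ℝ)) ∨
        |lam| ≤ Real.sqrt ((k₁ : ℝ) - 1) + Real.sqrt ((k₂ : ℝ) - 1) := by
  obtain ⟨n, G, L, hn, hconn, hbip, hL, hR, hlam⟩ :=
    exists_weak_ramanujan_biregular_general k₁ k₂ (by omega) (by omega) N
  exact ⟨n, G, L, hn, hconn, hbip, hL, hR, fun lam hx => (hlam lam hx).imp_right le_of_lt⟩
end

section
/- (Lubetzky–Peres, SRW cutoff, upper bound) For every integer k ≥ 3 and all ε, δ > 0 there exists N such that: for every finite connected non-bipartite k-regular Ramanujan graph X on n ≥ N vertices, every vertex v, and every integer t ≥ (1+ε)·(k/(k−2))·log_{k−1} n, the simple random walk distribution P_v^t = (A/k)^t δ_v satisfies ‖P_v^t − u‖_TV ≤ δ, where u is the uniform distribution on the vertices. -/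
open Matrix

/-!
Cover `X` by the `k`-regular tree. Simple random walk on the tree, seen through its distance from
the root, is a walk on `ℕ` with up-probability `(k - 1) / k`, and conditionally on this distance
being `j` its projection to `X` has the law of the non-backtracking walk of length `j`. So `P_v^t`
is a mixture of non-backtracking laws.

On an eigenvector of `A / k` the non-backtracking laws satisfy a three-term recurrence, which for
eigenvalues in the Ramanujan range is that of the Chebyshev polynomials; hence the `ℓ²` distance of
the `j`-th law to uniform is at most `(3 * j + 1) * (k - 1) ^ (-j / 2)`. By Cauchy–Schwarz the
non-backtracking walk is mixed in `ℓ¹` as soon as `j ≥ (1 + ε / 2) * log_{k-1} n`. The distance walk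
has speed `(k - 2) / k`, so by a Chernoff bound it passes this level by time
`(1 + ε) * (k / (k - 2)) * log_{k-1} n`.
-/

section Chebyshev

open Polynomial.Chebyshev

theorem abs_eval_chebyshev_U_le {y : ℝ} (hy : |y| ≤ 1) (n : ℕ) :
    |(U ℝ n).eval y| ≤ n + 1 := by
  induction n with
  | zero => simp
  | succ n ih =>
    have hstep : (U ℝ (n + 1 : ℕ)).eval y = y * (U ℝ n).eval y + (T ℝ (n + 1 : ℕ)).eval y := by
      simpa using congrArg (Polynomial.eval y) (U_eq_X_mul_U_add_T ℝ n)
    calc |(U ℝ (n + 1 : ℕ)).eval y|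
        ≤ |y| * |(U ℝ n).eval y| + |(T ℝ (n + 1 : ℕ)).eval y| := by
          rw [hstep, ← abs_mul]; exact abs_add_le _ _
      _ ≤ 1 * (n + 1) + 1 := by gcongr; exact abs_eval_T_real_le_one _ hy
      _ = (n + 1 : ℕ) + 1 := by push_cast; ring

theorem eq_chebyshev_of_recurrence {y : ℝ} {b : ℕ → ℝ}
    (hb : ∀ j, b (j + 2) = 2 * y * b (j + 1) - b j) (j : ℕ) :
    b (j + 1) = b 0 * (T ℝ (j + 1 : ℕ)).eval y + (b 1 - y * b 0) * (U ℝ j).eval y := by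
  induction j using Nat.twoStepInduction with
  | zero => simp [mul_comm]
  | one => rw [hb 0]; simp [T_two]; ring
  | more j ih₀ ih₁ =>
    rw [hb (j + 1), ih₀, ih₁]
    push_cast
    rw [show (j : ℤ) + 2 + 1 = j + 1 + 2 by ring, T_add_two, U_add_two]
    simp only [Polynomial.eval_sub, Polynomial.eval_mul, Polynomial.eval_ofNat,
      Polynomial.eval_X, add_assoc, Int.reduceAdd]
    ring

theorem abs_le_of_chebyshev_recurrence {y : ℝ} (hy : |y| ≤ 1) {b : ℕ → ℝ}
    (hb : ∀ j, b (j + 2) = 2 * y * b (j + 1) - b j) (j : ℕ) :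
    |b j| ≤ |b 0| + j * (|b 0| + |b 1|) := by
  cases j with
  | zero => simp
  | succ j =>
    have hcoeff : |b 1 - y * b 0| ≤ |b 0| + |b 1| := by
      calc |b 1 - y * b 0| ≤ |b 1| + |y| * |b 0| := by rw [← abs_mul]; exact abs_sub _ _
        _ ≤ |b 1| + 1 * |b 0| := by gcongr
        _ = |b 0| + |b 1| := by ring
    calc |b (j + 1)|
        ≤ |b 0| * |(T ℝ (j + 1 : ℕ)).eval y| + |b 1 - y * b 0| * |(U ℝ j).eval y| := by
          rw [eq_chebyshev_of_recurrence hb, ← abs_mul, ← abs_mul]; exact abs_add_le _ _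
      _ ≤ |b 0| * 1 + (|b 0| + |b 1|) * (j + 1) := by
          gcongr
          exacts [abs_eval_T_real_le_one _ hy, abs_eval_chebyshev_U_le hy j]
      _ = |b 0| + (j + 1 : ℕ) * (|b 0| + |b 1|) := by push_cast; ring

end Chebyshev

section ReflectedWalk

variable {E : Type*} [AddCommGroup E] [Module ℝ E] {T : Module.End ℝ E} {p : ℝ} {d : ℕ → E}

/-- `T` acts on the sequence `d` as the nearest-neighbour walk on `ℕ` reflected at `0` that steps up
with probability `p`; equivalently, `δ_j ↦ d j` intertwines the two operators. With
`p = (k - 1) / k` this walk is the distance from the root of simple random walk on the `k`-regular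
tree, which is how simple random walk on a `k`-regular graph acts on the non-backtracking
distributions. -/
structure IntertwinesReflectedWalk (p : ℝ) (T : Module.End ℝ E) (d : ℕ → E) : Prop where
  apply_zero : T (d 0) = d 1
  apply_succ (j : ℕ) : T (d (j + 1)) = p • d (j + 2) + (1 - p) • d j

namespace IntertwinesReflectedWalk

theorem map {F : Type*} [AddCommGroup F] [Module ℝ F] {S : Module.End ℝ F}
    (hd : IntertwinesReflectedWalk p T d) (φ : E →ₗ[ℝ] F) (hφ : ∀ x, S (φ x) = φ (T x)) :
    IntertwinesReflectedWalk p S fun j => φ (d j) where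
  apply_zero := by rw [hφ, hd.apply_zero]
  apply_succ j := by rw [hφ, hd.apply_succ, map_add, map_smul, map_smul]

theorem sub_fixed (hd : IntertwinesReflectedWalk p T d) {u : E} (hu : T u = u) :
    IntertwinesReflectedWalk p T fun j => d j - u where
  apply_zero := by rw [map_sub, hu, hd.apply_zero]
  apply_succ j := by rw [map_sub, hu, hd.apply_succ]; module

theorem eq_zero (hd : IntertwinesReflectedWalk p T d) (hp : p ≠ 0) (h0 : d 0 = 0) (j : ℕ) :
    d j = 0 := by
  have h1 : d 1 = 0 := by rw [← hd.apply_zero, h0, map_zero]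
  induction j using Nat.twoStepInduction with
  | zero => exact h0
  | one => exact h1
  | more j ih₀ ih₁ =>
    have hstep := hd.apply_succ j
    rw [ih₀, ih₁, map_zero, smul_zero, add_zero] at hstep
    exact (smul_eq_zero.1 hstep.symm).resolve_left hp

/-- An exponential profile `a ^ j` is, up to the boundary at `0`, an eigenfunction of the reflected
walk with eigenvalue `p * a + (1 - p) * a⁻¹`, and at `0` it is a supersolution. -/
theorem seminorm_pow_apply_le (hd : IntertwinesReflectedWalk p T d) (N : Seminorm ℝ E)
    (hp0 : 0 ≤ p) (hp1 : p ≤ 1) {a η C : ℝ} (ha0 : 0 < a) (ha1 : a ≤ 1) (hC : 0 ≤ C)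
    (hN : ∀ j, N (d j) ≤ η + C * a ^ j) (t j : ℕ) :
    N ((T ^ t) (d j)) ≤ η + C * a ^ j * (p * a + (1 - p) * a⁻¹) ^ t := by
  set ρ := p * a + (1 - p) * a⁻¹ with hρ
  have hq : 0 ≤ 1 - p := sub_nonneg.2 hp1
  have : 0 ≤ ρ := by positivity
  have hρa : ρ * a = p * a ^ 2 + (1 - p) := by rw [hρ]; field_simp
  induction t generalizing j with
  | zero => simpa using hN j
  | succ t ih =>
    rw [pow_succ, Module.End.mul_apply]
    cases j with
    | zero =>
      have haρ : a ≤ ρ := by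
        have : (1 - p) * a ≤ (1 - p) * a⁻¹ := by gcongr; exact ha1.trans ((one_le_inv₀ ha0).2 ha1)
        linarith
      calc N ((T ^ t) (T (d 0))) ≤ η + C * a ^ 1 * ρ ^ t := hd.apply_zero ▸ ih 1
        _ ≤ η + C * ρ * ρ ^ t := by rw [pow_one]; gcongr
        _ = η + C * a ^ 0 * ρ ^ (t + 1) := by ring
    | succ j =>
      calc N ((T ^ t) (T (d (j + 1))))
          ≤ p * N ((T ^ t) (d (j + 2))) + (1 - p) * N ((T ^ t) (d j)) := by
            rw [hd.apply_succ, map_add, map_smul, map_smul]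
            refine (map_add_le_add N _ _).trans_eq ?_
            rw [map_smul_eq_mul, map_smul_eq_mul, Real.norm_of_nonneg hp0, Real.norm_of_nonneg hq]
        _ ≤ p * (η + C * a ^ (j + 2) * ρ ^ t) + (1 - p) * (η + C * a ^ j * ρ ^ t) := by
            gcongr <;> exact ih _
        _ = η + C * a ^ (j + 1) * ρ ^ (t + 1) := by
            linear_combination (-C * a ^ j * ρ ^ t) * hρa

/-- The second term is the Chernoff bound, with parameter `s`, for the reflected walk to be below
`m` at time `t`. -/
theorem seminorm_pow_apply_zero_le (hd : IntertwinesReflectedWalk p T d) (N : Seminorm ℝ E)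
    (hp0 : 0 ≤ p) (hp1 : p ≤ 1) {η C s : ℝ} {m : ℕ} (hη : 0 ≤ η) (hs : 0 ≤ s)
    (hC : ∀ j, N (d j) ≤ C) (hm : ∀ j, m ≤ j → N (d j) ≤ η) (t : ℕ) :
    N ((T ^ t) (d 0)) ≤
      η + C * (Real.exp (s * m) * (p * Real.exp (-s) + (1 - p) * Real.exp s) ^ t) := by
  have hC0 : 0 ≤ C := (apply_nonneg N _).trans (hC 0)
  have hprofile (j : ℕ) : N (d j) ≤ η + C * Real.exp (s * m) * Real.exp (-s) ^ j := by
    rcases le_total m j with hmj | hjm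
    · exact (hm j hmj).trans (le_add_of_nonneg_right (by positivity))
    · have hone : 1 ≤ Real.exp (s * m) * Real.exp (-s) ^ j := by
        rw [← Real.exp_nat_mul, ← Real.exp_add, Real.one_le_exp_iff]
        have : (j : ℝ) ≤ m := mod_cast hjm
        nlinarith
      calc N (d j) ≤ C * 1 := by rw [mul_one]; exact hC j
        _ ≤ C * (Real.exp (s * m) * Real.exp (-s) ^ j) := by gcongr
        _ ≤ η + C * Real.exp (s * m) * Real.exp (-s) ^ j := by rw [mul_assoc]; linarith
  have hbound := hd.seminorm_pow_apply_le N hp0 hp1 (Real.exp_pos (-s))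
    (Real.exp_le_one_iff.2 (neg_nonpos.2 hs)) (by positivity) hprofile t 0
  rwa [← Real.exp_neg, neg_neg, pow_zero, mul_one, mul_assoc] at hbound

theorem abs_le {c : ℕ → ℝ} {μ : ℝ} (hc : IntertwinesReflectedWalk p (μ • LinearMap.id) c)
    (hp0 : 0 < p) (hp1 : p < 1) (hμ : |μ| ≤ 2 * √(p * (1 - p))) (j : ℕ) :
    |c j| ≤ (3 * j + 1) * √((1 - p) / p) ^ j * |c 0| := by
  have hq : 0 < 1 - p := sub_pos.2 hp1
  set r := √((1 - p) / p) with hr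
  have hr0 : 0 < r := Real.sqrt_pos.2 (by positivity)
  have hrr : p * r ^ 2 = 1 - p := by rw [hr, Real.sq_sqrt (by positivity)]; field_simp
  have hpr : √(p * (1 - p)) = p * r := by
    rw [← hrr, ← mul_assoc, ← sq, ← mul_pow, Real.sqrt_sq (by positivity)]
  rw [hpr] at hμ
  have h1 : c 1 = μ * c 0 := hc.apply_zero.symm
  have hrec (j : ℕ) : μ * c (j + 1) = p * c (j + 2) + (1 - p) * c j := hc.apply_succ j
  have hy : |μ / (2 * (p * r))| ≤ 1 := by
    rw [abs_div, abs_of_pos (by positivity : 0 < 2 * (p * r))]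
    exact div_le_one_of_le₀ hμ (by positivity)
  -- Dividing by `r ^ j` turns the recurrence into that of the Chebyshev polynomials.
  have hcheb := abs_le_of_chebyshev_recurrence hy (b := fun j => c j / r ^ j) (fun j => by
    have hsolve : c (j + 2) = (μ * c (j + 1) - p * r ^ 2 * c j) / p := by
      rw [hrr, eq_div_iff hp0.ne']; linarith [hrec j]
    rw [hsolve]
    field_simp
    ring) j
  have hb1 : |c 1 / r ^ 1| ≤ 2 * |c 0| := by
    rw [h1, pow_one, abs_div, abs_mul, abs_of_pos hr0, div_le_iff₀ hr0]
    calc |μ| * |c 0| ≤ 2 * (p * r) * |c 0| := by gcongr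
      _ ≤ 2 * (1 * r) * |c 0| := by gcongr
      _ = 2 * |c 0| * r := by ring
  rw [abs_div, abs_of_pos (pow_pos hr0 j), pow_zero, div_one, div_le_iff₀ (by positivity)] at hcheb
  calc |c j| ≤ (|c 0| + j * (|c 0| + |c 1 / r ^ 1|)) * r ^ j := hcheb
    _ ≤ (|c 0| + j * (|c 0| + 2 * |c 0|)) * r ^ j := by gcongr
    _ = (3 * j + 1) * r ^ j * |c 0| := by ring

open scoped InnerProductSpace in
theorem norm_le {H : Type*} [NormedAddCommGroup H] [InnerProductSpace ℝ H] [FiniteDimensional ℝ H]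
    {T : Module.End ℝ H} {d : ℕ → H} (hd : IntertwinesReflectedWalk p T d) (hT : T.IsSymmetric)
    (hp0 : 0 < p) (hp1 : p < 1)
    (hspec : ∀ μ e, T.HasEigenvector μ e → ⟪e, d 0⟫_ℝ = 0 ∨ |μ| ≤ 2 * √(p * (1 - p))) (j : ℕ) :
    ‖d j‖ ≤ (3 * j + 1) * √((1 - p) / p) ^ j * ‖d 0‖ := by
  set B := (3 * j + 1) * √((1 - p) / p) ^ j
  let e := hT.eigenvectorBasis rfl
  have hcoord (i) : ‖⟪e i, d j⟫_ℝ‖ ≤ B * ‖⟪e i, d 0⟫_ℝ‖ := by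
    have heig := hT.hasEigenvector_eigenvectorBasis rfl i
    have hscalar := hd.map (S := hT.eigenvalues rfl i • LinearMap.id) (innerₛₗ ℝ (e i)) fun x => by
      simp only [LinearMap.smul_apply, LinearMap.id_apply, innerₛₗ_apply_apply]
      rw [← hT, heig.apply_eq_smul, inner_smul_left]
      rfl
    rcases hspec _ _ heig with horth | hμ
    · have hzero : ⟪e i, d j⟫_ℝ = 0 := hscalar.eq_zero hp0.ne' horth j
      rw [hzero, norm_zero]
      positivity
    · exact hscalar.abs_le hp0 hp1 hμ j
  refine le_of_sq_le_sq ?_ (by positivity)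
  calc ‖d j‖ ^ 2 = ∑ i, ‖⟪e i, d j⟫_ℝ‖ ^ 2 := (e.sum_sq_norm_inner_right _).symm
    _ ≤ ∑ i, (B * ‖⟪e i, d 0⟫_ℝ‖) ^ 2 := by gcongr with i; exact hcoord i
    _ = (B * ‖d 0‖) ^ 2 := by
      simp_rw [mul_pow]; rw [← Finset.mul_sum, e.sum_sq_norm_inner_right]

end IntertwinesReflectedWalk

end ReflectedWalk

section Asymptotics

open Filter Topology

/-- Both sides equal `1` at `s = 0`, and the slope `1 - 2 * p` on the left is below `-c`. -/
theorem exists_exp_step_le {p c : ℝ} (hc : c < 2 * p - 1) :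
    ∃ s : ℝ, 0 < s ∧ p * Real.exp (-s) + (1 - p) * Real.exp s ≤ Real.exp (-(c * s)) := by
  let f : ℝ → ℝ := fun s => p * Real.exp (-s) + (1 - p) * Real.exp s - Real.exp (-(c * s))
  have hderiv : HasDerivAt f (1 - 2 * p + c) 0 := by
    refine HasDerivAt.congr_deriv ((((hasDerivAt_neg (0 : ℝ)).exp.const_mul p).add
      ((Real.hasDerivAt_exp 0).const_mul (1 - p))).sub
      ((hasDerivAt_id (0 : ℝ)).const_mul c).neg.exp) ?_
    simp only [Pi.neg_apply, id_eq, mul_zero, neg_zero, Real.exp_zero]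
    ring
  have hslope := hderiv.tendsto_slope_zero_right
  have hneg := (hslope.eventually_lt_const (by linarith : 1 - 2 * p + c < 0)).and
    self_mem_nhdsWithin
  obtain ⟨s, hlt, hs : 0 < s⟩ := hneg.exists
  refine ⟨s, hs, sub_nonpos.1 ?_⟩
  have hf0 : f 0 = 0 := by simp [f]
  rw [zero_add, hf0, sub_zero, smul_eq_mul] at hlt
  exact (neg_of_mul_neg_right hlt (inv_nonneg.2 hs.le)).le

theorem exists_eventually_chernoff_le {p a b δ : ℝ} (hp : 1 / 2 < p) (hp1 : p ≤ 1)
    (ha : 0 ≤ a) (hab : a < b) (hδ : 0 < δ) :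
    ∃ s : ℝ, 0 ≤ s ∧ ∀ᶠ L : ℝ in atTop, ∀ m t : ℕ, m ≤ a * L + 1 → b * L ≤ (2 * p - 1) * t →
      Real.exp (s * m) * (p * Real.exp (-s) + (1 - p) * Real.exp s) ^ t ≤ δ := by
  have hb : 0 < b := ha.trans_lt hab
  have hdrift : 0 < 2 * p - 1 := by linarith
  have : 0 ≤ 1 - p := sub_nonneg.2 hp1
  set θ := (a + b) / (2 * b) with hθ
  have : 0 ≤ θ := by positivity
  have hθ1 : θ < 1 := by rw [hθ, div_lt_one (by positivity)]; linarith
  have hθb : θ * b = (a + b) / 2 := by rw [hθ]; field_simp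
  obtain ⟨s, hs, hstep⟩ := exists_exp_step_le (p := p) (c := θ * (2 * p - 1))
    (mul_lt_of_lt_one_left hdrift hθ1)
  refine ⟨s, hs.le, ?_⟩
  filter_upwards [eventually_ge_atTop ((s - Real.log δ) / (s * ((b - a) / 2)))] with L hL m t hm ht
  have hL' : s - Real.log δ ≤ L * (s * ((b - a) / 2)) :=
    (div_le_iff₀ (mul_pos hs (by linarith))).1 hL
  have hθt : θ * (b * L) ≤ θ * ((2 * p - 1) * t) := by gcongr
  calc Real.exp (s * m) * (p * Real.exp (-s) + (1 - p) * Real.exp s) ^ t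
      ≤ Real.exp (s * m) * Real.exp (-(θ * (2 * p - 1) * s)) ^ t := by gcongr
    _ = Real.exp (s * (m - θ * ((2 * p - 1) * t))) := by
      rw [← Real.exp_nat_mul, ← Real.exp_add]; ring_nf
    _ ≤ Real.exp (s * (a * L + 1 - θ * (b * L))) := by gcongr
    _ = Real.exp (s - L * (s * ((b - a) / 2))) := by rw [← mul_assoc θ, hθb]; ring_nf
    _ ≤ δ := (Real.le_log_iff_exp_le hδ).1 (by linarith)

theorem eventually_rpow_mul_le {r c δ : ℝ} (hr : 1 < r) (hc : 1 < c) (hδ : 0 < δ) :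
    ∀ᶠ L : ℝ in atTop, ∀ j : ℕ, c * L ≤ j → r ^ L * ((3 * j + 1) * r⁻¹ ^ j) ≤ δ := by
  have hr0 : 0 < r := one_pos.trans hr
  have hc0 : 0 < c := one_pos.trans hc
  set x := r ^ (c⁻¹ - 1) with hx
  have hx0 : 0 ≤ x := by positivity
  have hx1 : x < 1 := Real.rpow_lt_one_of_one_lt_of_neg hr (sub_neg.2 (inv_lt_one_of_one_lt₀ hc))
  have hlim : Tendsto (fun j : ℕ => (3 * j + 1) * x ^ j) atTop (𝓝 0) := by
    simpa [add_mul, mul_assoc] using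
      ((tendsto_self_mul_const_pow_of_lt_one hx0 hx1).const_mul 3).add
        (tendsto_pow_atTop_nhds_zero_of_lt_one hx0 hx1)
  obtain ⟨J, hJ⟩ := eventually_atTop.1 (hlim.eventually_le_const hδ)
  filter_upwards [eventually_ge_atTop (J / c)] with L hL j hj
  have hJj : J ≤ j := by
    have : (J : ℝ) ≤ j := ((div_le_iff₀' hc0).1 hL).trans hj
    exact_mod_cast this
  have hrate : r ^ L * r⁻¹ ^ j ≤ x ^ j := by
    calc r ^ L * r⁻¹ ^ j ≤ r ^ (c⁻¹ * j) * r⁻¹ ^ j := by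
          gcongr
          · exact hr.le
          · rwa [le_inv_mul_iff₀ hc0]
      _ = x ^ j := by
          rw [hx, Real.rpow_mul_natCast hr0.le, ← mul_pow, Real.rpow_sub_one hr0.ne',
            div_eq_mul_inv]
  calc r ^ L * ((3 * j + 1) * r⁻¹ ^ j) = (3 * j + 1) * (r ^ L * r⁻¹ ^ j) := by ring
    _ ≤ (3 * j + 1) * x ^ j := by gcongr
    _ ≤ δ := hJ j hJj

end Asymptotics

section ExtremalEigenvalues

open SimpleGraph

variable {V : Type*} [Fintype V] {G : SimpleGraph V} [DecidableRel G.Adj]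

theorem eq_of_connected_of_forall_adj {V α : Type*} {G : SimpleGraph V} (hG : G.Connected)
    {f : V → α} (h : ∀ x y, G.Adj x y → f x = f y) (x y : V) : f x = f y := by
  obtain ⟨w⟩ := hG.preconnected x y
  induction w with
  | nil => rfl
  | cons hadj _ ih => exact (h _ _ hadj).trans ih

theorem sum_sum_neighborFinset_comm {M : Type*} [AddCommMonoid M] (F : V → V → M) :
    ∑ x, ∑ y ∈ G.neighborFinset x, F x y = ∑ y, ∑ x ∈ G.neighborFinset y, F x y :=
  Finset.sum_comm' fun x y => by simp [G.adj_comm]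

theorem sum_sq_sub_mul_neighbor (f : V → ℝ) (σ : ℝ) :
    ∑ x, ∑ y ∈ G.neighborFinset x, (f x - σ * f y) ^ 2 =
      (1 + σ ^ 2) * ∑ x, G.degree x * f x ^ 2 - 2 * σ * (f ⬝ᵥ G.adjMatrix ℝ *ᵥ f) := by
  have hfst : ∑ x, ∑ _y ∈ G.neighborFinset x, f x ^ 2 = ∑ x, G.degree x * f x ^ 2 := by
    simp only [Finset.sum_const, nsmul_eq_mul, card_neighborFinset_eq_degree]
  have hsnd : ∑ x, ∑ y ∈ G.neighborFinset x, f y ^ 2 = ∑ x, G.degree x * f x ^ 2 := by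
    rw [sum_sum_neighborFinset_comm, hfst]
  have hcross : ∑ x, ∑ y ∈ G.neighborFinset x, f x * f y = f ⬝ᵥ G.adjMatrix ℝ *ᵥ f := by
    simp only [dotProduct, adjMatrix_mulVec_apply, Finset.mul_sum]
  calc ∑ x, ∑ y ∈ G.neighborFinset x, (f x - σ * f y) ^ 2
      = ∑ x, ∑ y ∈ G.neighborFinset x, f x ^ 2 + σ ^ 2 * ∑ x, ∑ y ∈ G.neighborFinset x, f y ^ 2
        - 2 * σ * ∑ x, ∑ y ∈ G.neighborFinset x, f x * f y := by
        simp only [Finset.mul_sum, ← Finset.sum_add_distrib, ← Finset.sum_sub_distrib]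
        exact Finset.sum_congr rfl fun x _ => Finset.sum_congr rfl fun y _ => by ring
    _ = _ := by rw [hfst, hsnd, hcross]; ring

theorem eq_mul_of_adj_of_adjMatrix_mulVec_eq {k : ℕ} (hG : G.IsRegularOfDegree k) {σ : ℝ}
    (hσ : σ ^ 2 = 1) {f : V → ℝ} (hf : G.adjMatrix ℝ *ᵥ f = (σ * k) • f) {x y : V}
    (hxy : G.Adj x y) : f x = σ * f y := by
  have hsum : ∑ x, ∑ y ∈ G.neighborFinset x, (f x - σ * f y) ^ 2 = 0 := by
    have hdot : f ⬝ᵥ f = ∑ x, f x ^ 2 := Finset.sum_congr rfl fun x _ => (sq (f x)).symm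
    rw [sum_sq_sub_mul_neighbor, hf, dotProduct_smul, hdot, smul_eq_mul]
    simp only [hG.degree_eq, ← Finset.mul_sum]
    linear_combination (-k * ∑ x, f x ^ 2) * hσ
  have hzero := (Finset.sum_eq_zero_iff_of_nonneg fun _ _ => by positivity).1
    ((Finset.sum_eq_zero_iff_of_nonneg fun _ _ => by positivity).1 hsum x (Finset.mem_univ x))
    y ((G.mem_neighborFinset x y).2 hxy)
  exact sub_eq_zero.1 (sq_eq_zero_iff.1 hzero)

theorem colorable_two_of_forall_adj_eq_neg {V : Type*} {G : SimpleGraph V} {f : V → ℝ}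
    (h0 : ∀ x, f x ≠ 0) (h : ∀ x y, G.Adj x y → f x = -f y) : G.Colorable 2 := by
  let C : G.Coloring Bool := Coloring.mk (fun x => decide (0 < f x)) fun {x y} hxy heq => by
    have hiff : 0 < f x ↔ 0 < f y := decide_eq_decide.1 heq
    rw [h x y hxy, neg_pos] at hiff
    rcases (h0 y).lt_or_gt with hy | hy
    · exact hy.asymm (hiff.1 hy)
    · exact hy.asymm (hiff.2 hy)
  simpa using C.colorable

theorem eq_of_adjMatrix_mulVec_eq_of_abs_eq {k : ℕ} (hG : G.IsRegularOfDegree k)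
    (hconn : G.Connected) (hcol : ¬ G.Colorable 2) {μ : ℝ} (hμ : |μ| = k) {f : V → ℝ}
    (hf : G.adjMatrix ℝ *ᵥ f = μ • f) (x y : V) : f x = f y := by
  rcases (abs_eq k.cast_nonneg).1 hμ with rfl | rfl
  · refine eq_of_connected_of_forall_adj hconn (fun a b hab => ?_) x y
    simpa using eq_mul_of_adj_of_adjMatrix_mulVec_eq hG (σ := 1) (by norm_num) (by simpa) hab
  · have hneg (a b : V) (hab : G.Adj a b) : f a = -f b := by
      simpa using
        eq_mul_of_adj_of_adjMatrix_mulVec_eq hG (σ := -1) (by norm_num) (by rwa [neg_one_mul]) hab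
    have habs := eq_of_connected_of_forall_adj hconn (f := fun a => |f a|)
      fun a b hab => by rw [hneg a b hab, abs_neg]
    obtain ⟨z, hz⟩ : ∃ z, f z = 0 := by
      by_contra! h0
      exact hcol (colorable_two_of_forall_adj_eq_neg h0 hneg)
    have hzero (a : V) : f a = 0 := by rw [← abs_eq_zero, habs a z, hz, abs_zero]
    rw [hzero x, hzero y]

end ExtremalEigenvalues

section NonBacktracking

open SimpleGraph

variable {V : Type*} [Fintype V] [DecidableEq V] (G : SimpleGraph V) [DecidableRel G.Adj] (v : V)

/-- The number of non-backtracking walks of length `j + 1` from `v` whose last step goes from `x` to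
`y`. The last step is recorded because it is what the next step must not reverse. -/
def nonBacktrackingFlow : ℕ → V → V → ℕ
  | 0, x, y => if x = v ∧ G.Adj x y then 1 else 0
  | j + 1, x, y => if G.Adj x y then ∑ z ∈ Finset.univ.erase y, nonBacktrackingFlow j z x else 0

/-- The number of non-backtracking walks of length `j` from `v` to `y`. -/
def nonBacktrackingCount : ℕ → V → ℕ
  | 0, y => if y = v then 1 else 0
  | j + 1, y => ∑ x, nonBacktrackingFlow G v j x y

/-- The distribution of the endpoint of a uniformly random non-backtracking walk of length `j` from
`v`; it is `0` when there is no such walk. -/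
noncomputable def nonBacktrackingDist (j : ℕ) (y : V) : ℝ :=
  nonBacktrackingCount G v j y / ∑ z, nonBacktrackingCount G v j z

variable {G v}

theorem nonBacktrackingFlow_eq_zero {x y : V} (h : ¬ G.Adj x y) (j : ℕ) :
    nonBacktrackingFlow G v j x y = 0 := by
  cases j <;> simp [nonBacktrackingFlow, h]

theorem sum_neighborFinset_nonBacktrackingFlow (j : ℕ) (x : V) :
    ∑ y ∈ G.neighborFinset x, nonBacktrackingFlow G v j x y =
      ∑ y, nonBacktrackingFlow G v j x y :=
  Finset.sum_subset (Finset.subset_univ _) fun y _ hy =>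
    nonBacktrackingFlow_eq_zero (by simpa using hy) j

theorem sum_nonBacktrackingFlow_zero (x : V) :
    ∑ y, nonBacktrackingFlow G v 0 x y = G.degree x * nonBacktrackingCount G v 0 x := by
  rw [← sum_neighborFinset_nonBacktrackingFlow]
  trans ∑ _y ∈ G.neighborFinset x, nonBacktrackingCount G v 0 x
  · refine Finset.sum_congr rfl fun y hy => ?_
    simp [nonBacktrackingFlow, nonBacktrackingCount, (G.mem_neighborFinset x y).1 hy]
  · simp

theorem sum_nonBacktrackingFlow_succ (j : ℕ) (x : V) :
    ∑ y, nonBacktrackingFlow G v (j + 1) x y =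
      (G.degree x - 1) * nonBacktrackingCount G v (j + 1) x := by
  calc ∑ y, nonBacktrackingFlow G v (j + 1) x y
      = ∑ y ∈ G.neighborFinset x, ∑ z ∈ Finset.univ.erase y, nonBacktrackingFlow G v j z x := by
        rw [← sum_neighborFinset_nonBacktrackingFlow]
        refine Finset.sum_congr rfl fun y hy => ?_
        rw [nonBacktrackingFlow, if_pos ((G.mem_neighborFinset x y).1 hy)]
    _ = ∑ z, ∑ _y ∈ (G.neighborFinset x).erase z, nonBacktrackingFlow G v j z x :=
        Finset.sum_comm' fun y z => by simp [and_comm, eq_comm]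
    _ = ∑ z, (G.degree x - 1) * nonBacktrackingFlow G v j z x := by
        refine Finset.sum_congr rfl fun z _ => ?_
        by_cases hzx : G.Adj z x
        · rw [Finset.sum_const, smul_eq_mul, Finset.card_erase_of_mem (by simpa using hzx.symm),
            card_neighborFinset_eq_degree]
        · simp [nonBacktrackingFlow_eq_zero hzx]
    _ = (G.degree x - 1) * nonBacktrackingCount G v (j + 1) x := by
        rw [← Finset.mul_sum, nonBacktrackingCount]

theorem sum_neighborFinset_nonBacktrackingCount_zero (y : V) :
    ∑ x ∈ G.neighborFinset y, nonBacktrackingCount G v 0 x = nonBacktrackingCount G v 1 y := by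
  simp [nonBacktrackingCount, nonBacktrackingFlow, ite_and, G.adj_comm]

/-- A non-backtracking walk followed by one more step either stays non-backtracking or reverses its
last step; in the latter case it is encoded by that step. -/
theorem sum_neighborFinset_nonBacktrackingCount_succ (j : ℕ) (y : V) :
    ∑ x ∈ G.neighborFinset y, nonBacktrackingCount G v (j + 1) x =
      nonBacktrackingCount G v (j + 2) y + ∑ x, nonBacktrackingFlow G v j y x := by
  have hsplit (x : V) (hx : x ∈ G.neighborFinset y) : nonBacktrackingCount G v (j + 1) x =
      nonBacktrackingFlow G v (j + 1) x y + nonBacktrackingFlow G v j y x := by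
    rw [nonBacktrackingFlow, if_pos ((G.mem_neighborFinset y x).1 hx).symm,
      Finset.sum_erase_add _ _ (Finset.mem_univ y), nonBacktrackingCount]
  have hlast : ∑ x ∈ G.neighborFinset y, nonBacktrackingFlow G v (j + 1) x y =
      nonBacktrackingCount G v (j + 2) y :=
    Finset.sum_subset (Finset.subset_univ _) fun x _ hx =>
      nonBacktrackingFlow_eq_zero (by simpa [G.adj_comm] using hx) (j + 1)
  rw [Finset.sum_congr rfl hsplit, Finset.sum_add_distrib, hlast,
    sum_neighborFinset_nonBacktrackingFlow]

theorem sum_nonBacktrackingCount_zero : ∑ y, nonBacktrackingCount G v 0 y = 1 := by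
  simp [nonBacktrackingCount]

theorem sum_nonBacktrackingCount_succ {k : ℕ} (hG : G.IsRegularOfDegree k) (j : ℕ) :
    ∑ y, nonBacktrackingCount G v (j + 1) y = k * (k - 1) ^ j := by
  induction j with
  | zero =>
    simp only [nonBacktrackingCount]
    rw [Finset.sum_comm]
    simp only [sum_nonBacktrackingFlow_zero, hG.degree_eq, ← Finset.mul_sum,
      sum_nonBacktrackingCount_zero, pow_zero]
  | succ j ih =>
    simp only [nonBacktrackingCount]
    rw [Finset.sum_comm]
    simp only [sum_nonBacktrackingFlow_succ, hG.degree_eq, ← Finset.mul_sum, ih]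
    ring

theorem sum_nonBacktrackingCount_pos {k : ℕ} (hG : G.IsRegularOfDegree k) (hk : 2 ≤ k) (j : ℕ) :
    0 < ∑ y, nonBacktrackingCount G v j y := by
  cases j with
  | zero => simp [sum_nonBacktrackingCount_zero]
  | succ j =>
    rw [sum_nonBacktrackingCount_succ hG]
    have : 0 < k - 1 := by omega
    positivity

end NonBacktracking

section WalkOperator

open SimpleGraph

variable {V : Type*} [Fintype V]

variable (V) in
/-- The uniform distribution on `V`, as a vector. -/
noncomputable def uniformDist : V → ℝ := fun _ => 1 / Fintype.card V

theorem uniformDist_nonneg (x : V) : 0 ≤ uniformDist V x := by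
  unfold uniformDist
  positivity

theorem sum_uniformDist [Nonempty V] : ∑ x, uniformDist V x = 1 := by
  simp [uniformDist]

variable [DecidableEq V] {G : SimpleGraph V} [DecidableRel G.Adj] {k : ℕ} {v : V}

variable (G) in
/-- The transition operator of simple random walk on a `k`-regular graph. -/
noncomputable def walkOperator (k : ℕ) : Module.End ℝ (V → ℝ) :=
  toLin' ((k : ℝ)⁻¹ • G.adjMatrix ℝ)

theorem walkOperator_apply (f : V → ℝ) (x : V) :
    walkOperator G k f x = (∑ y ∈ G.neighborFinset x, f y) / k := by
  rw [walkOperator, toLin'_apply, smul_mulVec, Pi.smul_apply, adjMatrix_mulVec_apply, smul_eq_mul,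
    inv_mul_eq_div]

theorem walkOperator_uniformDist (hG : G.IsRegularOfDegree k) (hk : k ≠ 0) :
    walkOperator G k (uniformDist V) = uniformDist V := by
  ext x
  simp only [walkOperator_apply, uniformDist, Finset.sum_const, card_neighborFinset_eq_degree,
    hG.degree_eq, nsmul_eq_mul]
  field_simp

theorem nonBacktrackingDist_zero : nonBacktrackingDist G v 0 = fun w => if w = v then 1 else 0 := by
  ext w
  simp [nonBacktrackingDist, nonBacktrackingCount]

theorem nonBacktrackingDist_nonneg (j : ℕ) (y : V) : 0 ≤ nonBacktrackingDist G v j y := by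
  unfold nonBacktrackingDist
  positivity

theorem sum_nonBacktrackingDist (hG : G.IsRegularOfDegree k) (hk : 2 ≤ k) (j : ℕ) :
    ∑ y, nonBacktrackingDist G v j y = 1 := by
  have := (sum_nonBacktrackingCount_pos (v := v) hG hk j).ne'
  simp only [nonBacktrackingDist]
  rw [← Finset.sum_div, ← Nat.cast_sum, div_self (mod_cast this)]

theorem nonBacktrackingDist_succ (hG : G.IsRegularOfDegree k) (hk : 1 ≤ k) (j : ℕ) (y : V) :
    nonBacktrackingDist G v (j + 1) y =
      nonBacktrackingCount G v (j + 1) y / (k * ((k : ℝ) - 1) ^ j) := by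
  rw [nonBacktrackingDist, sum_nonBacktrackingCount_succ hG]
  push_cast [hk]
  rfl

theorem walkOperator_nonBacktrackingDist (j : ℕ) (y : V) :
    walkOperator G k (nonBacktrackingDist G v j) y =
      (∑ x ∈ G.neighborFinset y, nonBacktrackingCount G v j x : ℕ) /
        (∑ x, nonBacktrackingCount G v j x : ℕ) / k := by
  simp only [walkOperator_apply, nonBacktrackingDist, ← Finset.sum_div, Nat.cast_sum]

theorem intertwinesReflectedWalk_nonBacktrackingDist (hG : G.IsRegularOfDegree k) (hk : 2 ≤ k) :
    IntertwinesReflectedWalk (((k : ℝ) - 1) / k) (walkOperator G k) (nonBacktrackingDist G v) := by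
  have hk1 : 1 ≤ k := by omega
  have hk0 : (k : ℝ) ≠ 0 := mod_cast (by omega : k ≠ 0)
  have hkpred : (k : ℝ) - 1 ≠ 0 := by rw [sub_ne_zero]; exact_mod_cast (by omega : k ≠ 1)
  refine ⟨funext fun y => ?_, fun j => funext fun y => ?_⟩
  · rw [walkOperator_nonBacktrackingDist, sum_neighborFinset_nonBacktrackingCount_zero,
      sum_nonBacktrackingCount_zero, nonBacktrackingDist_succ hG hk1]
    simp
  · rw [walkOperator_nonBacktrackingDist, sum_neighborFinset_nonBacktrackingCount_succ,
      sum_nonBacktrackingCount_succ hG, Pi.add_apply, Pi.smul_apply, Pi.smul_apply, smul_eq_mul,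
      smul_eq_mul, nonBacktrackingDist_succ hG hk1]
    cases j with
    | zero =>
      rw [sum_nonBacktrackingFlow_zero, hG.degree_eq, nonBacktrackingDist,
        sum_nonBacktrackingCount_zero]
      push_cast [hk1]
      field_simp
      ring
    | succ j =>
      rw [sum_nonBacktrackingFlow_succ, hG.degree_eq, nonBacktrackingDist_succ hG hk1]
      push_cast [hk1]
      field_simp
      ring

end WalkOperator

section Norms

variable {ι : Type*} [Fintype ι]

variable (ι) in
/-- The `ℓ¹` norm on real vectors, twice the total variation norm on differences of probability
distributions; the type `ι → ℝ` itself carries the sup norm. -/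
noncomputable def l1Seminorm : Seminorm ℝ (ι → ℝ) :=
  (normSeminorm ℝ (PiLp 1 fun _ : ι => ℝ)).comp (WithLp.linearEquiv 1 ℝ (ι → ℝ)).symm.toLinearMap

theorem l1Seminorm_apply (f : ι → ℝ) : l1Seminorm ι f = ∑ i, |f i| :=
  PiLp.norm_eq_of_L1 _

theorem l1Seminorm_eq_sum {f : ι → ℝ} (hf : ∀ i, 0 ≤ f i) : l1Seminorm ι f = ∑ i, f i := by
  simp only [l1Seminorm_apply, abs_of_nonneg (hf _)]

theorem l1Seminorm_sub_le_two {f g : ι → ℝ} (hf : ∀ i, 0 ≤ f i) (hg : ∀ i, 0 ≤ g i)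
    (hf1 : ∑ i, f i = 1) (hg1 : ∑ i, g i = 1) : l1Seminorm ι (f - g) ≤ 2 := by
  calc l1Seminorm ι (f - g) ≤ l1Seminorm ι f + l1Seminorm ι g := map_sub_le_add _ _ _
    _ = 2 := by rw [l1Seminorm_eq_sum hf, l1Seminorm_eq_sum hg, hf1, hg1, one_add_one_eq_two]

theorem l1Seminorm_le_sqrt_card_mul_norm_toLp (f : ι → ℝ) :
    l1Seminorm ι f ≤ √(Fintype.card ι) * ‖WithLp.toLp 2 f‖ := by
  rw [EuclideanSpace.norm_eq, ← Real.sqrt_mul (Nat.cast_nonneg _), l1Seminorm_apply]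
  exact Real.le_sqrt_of_sq_le sq_sum_le_card_mul_sum_sq

end Norms

section Ramanujan

open SimpleGraph

variable {V : Type*} [Fintype V] [DecidableEq V] {G : SimpleGraph V} [DecidableRel G.Adj] {k : ℕ}

/-- `G` is a connected, non-bipartite, `k`-regular Ramanujan graph; the spectral condition is on
eigenvectors of the adjacency matrix over `ℝ`. -/
structure IsNonbipartiteRamanujan (G : SimpleGraph V) [DecidableRel G.Adj] (k : ℕ) : Prop where
  connected : G.Connected
  not_colorable_two : ¬ G.Colorable 2
  regular : G.IsRegularOfDegree k
  abs_eigenvalue (lam : ℝ) : (∃ x : V → ℝ, x ≠ 0 ∧ G.adjMatrix ℝ *ᵥ x = lam • x) →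
    |lam| = k ∨ |lam| ≤ 2 * √((k : ℝ) - 1)

theorem norm_toLp_indicator_sub_uniformDist_le_one (v : V) :
    ‖WithLp.toLp 2 ((fun w => if w = v then 1 else 0) - uniformDist V)‖ ≤ 1 := by
  have : Nonempty V := ⟨v⟩
  have hcard : (Fintype.card V : ℝ) ≠ 0 := Nat.cast_ne_zero.2 Fintype.card_ne_zero
  have hsq : ∑ x, ((if x = v then 1 else 0) - 1 / (Fintype.card V : ℝ)) ^ 2 =
      1 - 1 / (Fintype.card V : ℝ) := by
    simp only [sub_sq, Finset.sum_add_distrib, Finset.sum_sub_distrib, Finset.sum_const, mul_ite,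
      ite_mul, ite_pow, Finset.sum_ite_eq', Finset.mem_univ, if_true, Finset.card_univ,
      nsmul_eq_mul, one_pow, mul_one, mul_zero, zero_mul, zero_pow two_ne_zero]
    field_simp
    ring
  rw [EuclideanSpace.norm_eq, Real.sqrt_le_one]
  simp only [Pi.sub_apply, uniformDist, Real.norm_eq_abs, sq_abs, hsq]
  exact sub_le_self _ (by positivity)

theorem isSymmetric_toEuclideanLin_smul_adjMatrix (c : ℝ) :
    (toEuclideanLin (c • G.adjMatrix ℝ)).IsSymmetric :=
  isSymmetric_toEuclideanLin_iff.2 ((G.isHermitian_adjMatrix ℝ).smul (IsSelfAdjoint.all _))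

namespace IsNonbipartiteRamanujan

theorem inner_eq_zero_or_abs_le_of_hasEigenvector (hG : IsNonbipartiteRamanujan G k) (hk : k ≠ 0)
    {μ : ℝ} {e : EuclideanSpace ℝ V}
    (he : Module.End.HasEigenvector (toEuclideanLin ((k : ℝ)⁻¹ • G.adjMatrix ℝ)) μ e)
    {f : V → ℝ} (hf : ∑ x, f x = 0) :
    inner ℝ e (WithLp.toLp 2 f) = 0 ∨ |μ| ≤ 2 * √((k : ℝ) - 1) / k := by
  have hk0 : (0 : ℝ) < k := mod_cast Nat.pos_of_ne_zero hk
  have hAe : G.adjMatrix ℝ *ᵥ e.ofLp = (k * μ) • e.ofLp := by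
    have h := congrArg WithLp.ofLp he.apply_eq_smul
    rw [ofLp_toLpLin, toLin'_apply, WithLp.ofLp_smul, smul_mulVec,
      inv_smul_eq_iff₀ hk0.ne'] at h
    rw [h, smul_smul]
  have he0 : e.ofLp ≠ 0 := by simpa using he.2
  refine (hG.abs_eigenvalue (k * μ) ⟨_, he0, hAe⟩).imp (fun hμ => ?_) fun hμ => ?_
  · have hconst :=
      eq_of_adjMatrix_mulVec_eq_of_abs_eq hG.regular hG.connected hG.not_colorable_two hμ hAe
    obtain ⟨v⟩ := hG.connected.nonempty
    calc inner ℝ e (WithLp.toLp 2 f) = ∑ x, f x * e.ofLp x := by simp [PiLp.inner_apply]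
      _ = (∑ x, f x) * e.ofLp v := by
          rw [Finset.sum_mul]
          exact Finset.sum_congr rfl fun x _ => by rw [hconst x v]
      _ = 0 := by rw [hf, zero_mul]
  · rwa [abs_mul, Nat.abs_cast, mul_comm, ← le_div_iff₀ hk0] at hμ

theorem norm_toLp_nonBacktrackingDist_sub_uniformDist_le (hG : IsNonbipartiteRamanujan G k)
    (hk : 2 ≤ k) (v : V) (j : ℕ) :
    ‖WithLp.toLp 2 (nonBacktrackingDist G v j - uniformDist V)‖ ≤
      (3 * j + 1) * (√((k : ℝ) - 1))⁻¹ ^ j := by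
  have : Nonempty V := ⟨v⟩
  have hk0 : k ≠ 0 := by omega
  have hk2 : (2 : ℝ) ≤ k := mod_cast hk
  have hkpred : 0 < (k : ℝ) - 1 := by linarith
  set p := ((k : ℝ) - 1) / k with hp
  have hp0 : 0 < p := by positivity
  have hp1 : p < 1 := (div_lt_one (by linarith)).2 (by linarith)
  have hvar : √(p * (1 - p)) = √((k : ℝ) - 1) / k := by
    rw [show p * (1 - p) = ((k : ℝ) - 1) / (k : ℝ) ^ 2 by rw [hp]; field_simp; ring,
      Real.sqrt_div hkpred.le, Real.sqrt_sq k.cast_nonneg]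
  have hratio : √((1 - p) / p) = (√((k : ℝ) - 1))⁻¹ := by
    rw [show (1 - p) / p = ((k : ℝ) - 1)⁻¹ by rw [hp]; field_simp; ring, Real.sqrt_inv]
  have hsum : ∑ x, (nonBacktrackingDist G v 0 - uniformDist V) x = 0 := by
    simp only [Pi.sub_apply]
    rw [Finset.sum_sub_distrib, sum_nonBacktrackingDist hG.regular hk, sum_uniformDist, sub_self]
  have hwalk := ((intertwinesReflectedWalk_nonBacktrackingDist (v := v) hG.regular hk).sub_fixed
    (walkOperator_uniformDist hG.regular hk0)).map
      (S := toEuclideanLin ((k : ℝ)⁻¹ • G.adjMatrix ℝ))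
      (WithLp.linearEquiv 2 ℝ (V → ℝ)).symm.toLinearMap fun _ => rfl
  have hdecay := hwalk.norm_le (isSymmetric_toEuclideanLin_smul_adjMatrix _) hp0 hp1
    (fun μ e he => by
      rw [hvar, ← mul_div_assoc]
      exact hG.inner_eq_zero_or_abs_le_of_hasEigenvector hk0 he hsum) j
  rw [hratio] at hdecay
  refine hdecay.trans (mul_le_of_le_one_right (by positivity) ?_)
  simp only [nonBacktrackingDist_zero]
  exact norm_toLp_indicator_sub_uniformDist_le_one v

theorem l1Seminorm_nonBacktrackingDist_sub_uniformDist_le (hG : IsNonbipartiteRamanujan G k)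
    (hk : 2 ≤ k) (v : V) (j : ℕ) :
    l1Seminorm V (nonBacktrackingDist G v j - uniformDist V) ≤
      √(Fintype.card V) * ((3 * j + 1) * (√((k : ℝ) - 1))⁻¹ ^ j) :=
  (l1Seminorm_le_sqrt_card_mul_norm_toLp _).trans <| by
    gcongr
    exact hG.norm_toLp_nonBacktrackingDist_sub_uniformDist_le hk v j

end IsNonbipartiteRamanujan

theorem l1Seminorm_walkOperator_pow_sub_uniformDist_le (hG : G.IsRegularOfDegree k) (hk : 2 ≤ k)
    (v : V) {m : ℕ} {η s : ℝ} (hη : 0 ≤ η) (hs : 0 ≤ s)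
    (hmix : ∀ j, m ≤ j → l1Seminorm V (nonBacktrackingDist G v j - uniformDist V) ≤ η) (t : ℕ) :
    l1Seminorm V ((walkOperator G k ^ t) (fun w => if w = v then 1 else 0) - uniformDist V) ≤
      η + 2 * (Real.exp (s * m) * (((k : ℝ) - 1) / k * Real.exp (-s) +
        (1 - ((k : ℝ) - 1) / k) * Real.exp s) ^ t) := by
  have : Nonempty V := ⟨v⟩
  have hk2 : (2 : ℝ) ≤ k := mod_cast hk
  have hfixed := walkOperator_uniformDist hG (by omega)
  have hwalk := (intertwinesReflectedWalk_nonBacktrackingDist (v := v) hG hk).sub_fixed hfixed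
  have htv (j : ℕ) : l1Seminorm V (nonBacktrackingDist G v j - uniformDist V) ≤ 2 :=
    l1Seminorm_sub_le_two (nonBacktrackingDist_nonneg j) uniformDist_nonneg
      (sum_nonBacktrackingDist hG hk j) sum_uniformDist
  have hbound := hwalk.seminorm_pow_apply_zero_le (l1Seminorm V)
    (div_nonneg (by linarith) (by linarith)) (div_le_one_of_le₀ (by linarith) (by linarith))
    hη hs htv hmix t
  have hpow : (walkOperator G k ^ t) (uniformDist V) = uniformDist V := by
    rw [Module.End.pow_apply, Function.iterate_fixed hfixed]
  rwa [map_sub, hpow, nonBacktrackingDist_zero] at hbound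

end Ramanujan

section Parameters

open Filter

theorem sqrt_eq_sqrt_rpow_logb {b x : ℝ} (hb : 1 < b) (hx : 0 < x) :
    √x = √b ^ Real.logb b x := by
  have hb0 : 0 < b := one_pos.trans hb
  rw [Real.sqrt_eq_rpow b, ← Real.rpow_mul hb0.le, mul_comm, Real.rpow_mul hb0.le,
    Real.rpow_logb hb0 hb.ne' hx, Real.sqrt_eq_rpow]

/-- The threshold length `m` is slightly above `log_{k-1} n`, where the non-backtracking walk mixes,
and slightly below the distance `(k - 2) / k * t` at which the walk on the tree is at time `t`. -/
theorem exists_eventually_mixing_length {k : ℕ} (hk : 3 ≤ k) {ε δ : ℝ} (hε : 0 < ε)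
    (hδ : 0 < δ) :
    ∃ s : ℝ, 0 ≤ s ∧ ∀ᶠ n : ℕ in atTop, ∃ m : ℕ,
      (∀ j : ℕ, m ≤ j → √n * ((3 * j + 1) * (√((k : ℝ) - 1))⁻¹ ^ j) ≤ δ) ∧
      ∀ t : ℕ, (1 + ε) * ((k : ℝ) / ((k : ℝ) - 2)) * (Real.log n / Real.log ((k : ℝ) - 1)) ≤ t →
        Real.exp (s * m) * (((k : ℝ) - 1) / k * Real.exp (-s) +
          (1 - ((k : ℝ) - 1) / k) * Real.exp s) ^ t ≤ δ := by
  have hk3 : (3 : ℝ) ≤ k := mod_cast hk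
  have hk0 : (0 : ℝ) < k := by linarith
  have hb : 1 < (k : ℝ) - 1 := by linarith
  have hdrift : 2 * (((k : ℝ) - 1) / k) - 1 = (k - 2) / k := by field_simp; ring
  obtain ⟨s, hs, hchernoff⟩ := exists_eventually_chernoff_le (p := ((k : ℝ) - 1) / k)
    (a := 1 + ε / 2) (b := 1 + ε) (by rw [lt_div_iff₀ hk0]; linarith)
    (div_le_one_of_le₀ (by linarith) hk0.le) (by positivity) (by linarith) hδ
  have hdecay := eventually_rpow_mul_le (r := √((k : ℝ) - 1)) (c := 1 + ε / 2)
    (Real.lt_sqrt_of_sq_lt (by linarith)) (by linarith) hδ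
  have hlog : Tendsto (fun n : ℕ => Real.logb ((k : ℝ) - 1) n) atTop atTop :=
    (Real.tendsto_logb_atTop hb).comp tendsto_natCast_atTop_atTop
  refine ⟨s, hs, ?_⟩
  filter_upwards [hlog.eventually (hchernoff.and hdecay), eventually_ge_atTop 1]
    with n ⟨htail, hmix⟩ hn
  have hn1 : (1 : ℝ) ≤ n := mod_cast hn
  have hL : 0 ≤ Real.logb ((k : ℝ) - 1) n := Real.logb_nonneg hb hn1
  refine ⟨⌈(1 + ε / 2) * Real.logb ((k : ℝ) - 1) n⌉₊, fun j hj => ?_, fun t ht => ?_⟩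
  · rw [sqrt_eq_sqrt_rpow_logb hb (by linarith)]
    exact hmix j (Nat.ceil_le.1 hj)
  · refine htail _ t (Nat.ceil_lt_add_one (by positivity)).le ?_
    rw [Real.log_div_log] at ht
    rw [hdrift]
    have hk2 : 0 < (k : ℝ) - 2 := by linarith
    calc (1 + ε) * Real.logb ((k : ℝ) - 1) n
        = (k - 2) / k * ((1 + ε) * (k / (k - 2)) * Real.logb ((k : ℝ) - 1) n) := by field_simp
      _ ≤ (k - 2) / k * t := by gcongr

end Parameters

/-- **Lubetzky–Peres (SRW cutoff, upper bound)**: for every `k ≥ 3` and `ε, δ > 0` there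
is `N` such that on every finite connected non-bipartite `k`-regular Ramanujan graph on
`n ≥ N` vertices, for every starting vertex and every time
`t ≥ (1+ε)·(k/(k−2))·log_{k−1} n`, the simple random walk distribution is within total
variation distance `δ` of the uniform distribution. -/
theorem srw_cutoff_upper (k : ℕ) (hk : 3 ≤ k) (ε δ : ℝ) (hε : 0 < ε) (hδ : 0 < δ) :
    ∃ N : ℕ, ∀ (V : Type) [Fintype V] [DecidableEq V]
      (G : SimpleGraph V) [DecidableRel G.Adj],
      G.Connected → ¬ G.Colorable 2 → G.IsRegularOfDegree k →
      (∀ lam : ℝ, (∃ x : V → ℝ, x ≠ 0 ∧ G.adjMatrix ℝ *ᵥ x = lam • x) →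
        |lam| = (k : ℝ) ∨ |lam| ≤ 2 * Real.sqrt ((k : ℝ) - 1)) →
      Fintype.card V ≥ N →
      ∀ (v : V) (t : ℕ),
        (t : ℝ) ≥ (1 + ε) * ((k : ℝ) / ((k : ℝ) - 2)) *
          (Real.log (Fintype.card V) / Real.log ((k : ℝ) - 1)) →
        (1 / 2) * ∑ x : V,
            |((((k : ℝ)⁻¹ • G.adjMatrix ℝ) ^ t) *ᵥ (fun w : V => if w = v then 1 else 0)) x
              - 1 / (Fintype.card V : ℝ)| ≤ δ := by
  obtain ⟨s, hs, hlarge⟩ := exists_eventually_mixing_length hk hε (half_pos hδ)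
  obtain ⟨N, hN⟩ := Filter.eventually_atTop.1 hlarge
  refine ⟨N, fun V _ _ G _ hconn hcol hreg hspec hcard v t ht => ?_⟩
  have hG : IsNonbipartiteRamanujan G k := ⟨hconn, hcol, hreg, hspec⟩
  have hk2 : 2 ≤ k := by omega
  obtain ⟨m, hdecay, htail⟩ := hN (Fintype.card V) hcard
  have hmix (j : ℕ) (hj : m ≤ j) :
      l1Seminorm V (nonBacktrackingDist G v j - uniformDist V) ≤ δ / 2 :=
    (hG.l1Seminorm_nonBacktrackingDist_sub_uniformDist_le hk2 v j).trans (hdecay j hj)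
  have hl1 := l1Seminorm_walkOperator_pow_sub_uniformDist_le hreg hk2 v (half_pos hδ).le hs hmix t
  rw [l1Seminorm_apply, walkOperator, ← toLin'_pow] at hl1
  calc _ ≤ (1 / 2) * (δ / 2 + 2 * (δ / 2)) := by
        gcongr
        exact hl1.trans (by gcongr; exact htail t ht)
    _ ≤ δ := by linarith
end

section
/- (Lubetzky–Peres, SRW cutoff, lower bound) For every integer k ≥ 3 and all ε, δ > 0 there exists N such that: for every finite connected non-bipartite k-regular Ramanujan graph X on n ≥ N vertices, every vertex v, and every integer t ≤ (1−ε)·(k/(k−2))·log_{k−1} n, the simple random walk distribution P_v^t = (A/k)^t δ_v satisfies ‖P_v^t − u‖_TV ≥ 1 − δ, where u is the uniform distribution on the vertices. -/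
open Matrix

/-! From a vertex other than the starting point `v`, at least one of the `k` neighbours is closer
to `v`, so the distance of the walk from `v` grows at speed at most `(k - 2) / k`. Quantitatively,
for `θ > 1` the exponential moment of `θ ^ dist` grows by a factor at most
`ρ = ((k - 1) θ + θ⁻¹) / k` per step, up to a constant accounting for returns to `v`. As
`log ρ / log θ` tends to `(k - 2) / k` when `θ` decreases to `1`, at time
`(1 - ε) (k / (k - 2)) log_{k-1} n` the walk is, with probability close to `1`, in the ball of
radius `(1 - ε / 4) log_{k-1} n` around `v`. This ball has only `O(n ^ (1 - ε / 4))` vertices, so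
its uniform measure is negligible. -/

open Finset Filter Topology

section NonnegativeMatrices

variable {V R : Type*} [Fintype V] [DecidableEq V] [CommSemiring R] [PartialOrder R]
  [IsOrderedRing R]

theorem vecMul_pow_le_pow_smul {M : Matrix V V R} (hM : ∀ x y, 0 ≤ M x y) {h : V → R} {ρ : R}
    (hρ : 0 ≤ ρ) (hh : h ᵥ* M ≤ ρ • h) (t : ℕ) : h ᵥ* M ^ t ≤ ρ ^ t • h := by
  induction t with
  | zero => simp
  | succ t ih =>
    calc h ᵥ* M ^ (t + 1) = (h ᵥ* M ^ t) ᵥ* M := by rw [pow_succ, vecMul_vecMul]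
      _ ≤ (ρ ^ t • h) ᵥ* M := fun y => dotProduct_le_dotProduct_of_nonneg_right ih fun x => hM x y
      _ = ρ ^ t • (h ᵥ* M) := smul_vecMul ..
      _ ≤ ρ ^ t • (ρ • h) := fun y => mul_le_mul_of_nonneg_left (hh y) (pow_nonneg hρ t)
      _ = ρ ^ (t + 1) • h := by rw [smul_smul, pow_succ]

end NonnegativeMatrices

section TotalVariation

variable {V : Type*} [Fintype V]

/-- The total variation distance between two distributions on a finite set, given by their
mass functions. -/
noncomputable def tvDist (μ ν : V → ℝ) : ℝ :=
  1 / 2 * ∑ x, |μ x - ν x|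

theorem sum_sub_sum_le_tvDist {μ ν : V → ℝ} (h : ∑ x, μ x = ∑ x, ν x) (s : Finset V) :
    ∑ x ∈ s, μ x - ∑ x ∈ s, ν x ≤ tvDist μ ν := by
  classical
  have hs : ∑ x ∈ s, (μ x - ν x) ≤ ∑ x ∈ s, |μ x - ν x| := sum_le_sum fun x _ => le_abs_self _
  have hsc : ∑ x ∈ sᶜ, -(μ x - ν x) ≤ ∑ x ∈ sᶜ, |μ x - ν x| :=
    sum_le_sum fun x _ => neg_le_abs _
  have htotal : ∑ x ∈ s, (μ x - ν x) + ∑ x ∈ sᶜ, (μ x - ν x) = 0 := by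
    rw [sum_add_sum_compl, sum_sub_distrib, h, sub_self]
  rw [sum_neg_distrib] at hsc
  rw [← sum_sub_distrib, tvDist, ← sum_add_sum_compl s]
  linarith

theorem one_sub_le_tvDist_uniform [Nonempty V] [DecidableEq V] {μ : V → ℝ}
    (hμ : ∑ x, μ x = 1) (s : Finset V) :
    1 - (∑ x ∈ sᶜ, μ x + #s / Fintype.card V) ≤ tvDist μ fun _ => 1 / (Fintype.card V : ℝ) := by
  have huniform : ∑ _x : V, 1 / (Fintype.card V : ℝ) = 1 := by simp
  have h := sum_sub_sum_le_tvDist (hμ.trans huniform.symm) s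
  rw [sum_const, nsmul_eq_mul, mul_one_div] at h
  linarith [sum_add_sum_compl s μ]

end TotalVariation

section Distance

variable {V : Type*} {G : SimpleGraph V}

theorem exists_adj_dist_add_one_eq (hG : G.Connected) {v x : V} (hx : x ≠ v) :
    ∃ y, G.Adj x y ∧ G.dist v y + 1 = G.dist v x := by
  obtain ⟨w, hw⟩ := hG.exists_walk_length_eq_dist x v
  cases w with
  | nil => exact absurd rfl hx
  | @cons _ y _ hxy p =>
    refine ⟨y, hxy, ?_⟩
    have hp : G.dist y v ≤ p.length := SimpleGraph.dist_le p
    have hdist := hxy.diff_dist_adj (u := v)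
    rw [SimpleGraph.Walk.length_cons] at hw
    rw [SimpleGraph.dist_comm (u := y)] at hp
    rw [SimpleGraph.dist_comm (u := x)] at hw
    lia

variable [Fintype V] [DecidableRel G.Adj]

theorem sum_neighborFinset_pow_dist_le (hG : G.Connected) {θ : ℝ} (hθ : 1 ≤ θ) {v x : V}
    (hx : x ≠ v) :
    ∑ y ∈ G.neighborFinset x, θ ^ G.dist v y
      ≤ ((G.degree x - 1) * θ + θ⁻¹) * θ ^ G.dist v x := by
  classical
  obtain ⟨p, hxp, hp⟩ := exists_adj_dist_add_one_eq hG hx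
  have hp_mem : p ∈ G.neighborFinset x := (G.mem_neighborFinset x p).2 hxp
  have hdeg : 1 ≤ G.degree x := (G.degree_pos_iff_exists_adj x).2 ⟨p, hxp⟩
  have hparent : θ ^ G.dist v p = θ⁻¹ * θ ^ G.dist v x := by
    rw [← hp, pow_succ']
    field_simp
  have hothers : ∑ y ∈ (G.neighborFinset x).erase p, θ ^ G.dist v y
      ≤ (G.degree x - 1) * θ ^ (G.dist v x + 1) := by
    have h := sum_le_card_nsmul ((G.neighborFinset x).erase p) (fun y => θ ^ G.dist v y)
      (θ ^ (G.dist v x + 1)) fun y hy => pow_le_pow_right₀ hθ <| by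
        have hxy : G.Adj x y := (G.mem_neighborFinset x y).1 (mem_of_mem_erase hy)
        have := hxy.diff_dist_adj (u := v)
        lia
    rwa [card_erase_of_mem hp_mem, G.card_neighborFinset_eq_degree, nsmul_eq_mul,
      Nat.cast_sub hdeg, Nat.cast_one] at h
  rw [← add_sum_erase _ _ hp_mem, hparent]
  rw [pow_succ'] at hothers
  linarith

variable {d : ℕ}

theorem card_sphere_one_le (hd : ∀ x, G.degree x ≤ d + 1) (v : V) :
    #{x | G.dist v x = 1} ≤ d + 1 := by
  classical
  simpa only [SimpleGraph.dist_eq_one_iff_adj, ← SimpleGraph.neighborFinset_eq_filter,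
    SimpleGraph.card_neighborFinset_eq_degree] using hd v

theorem card_sphere_succ_le (hG : G.Connected) (hd : ∀ x, G.degree x ≤ d + 1) (v : V) {r : ℕ}
    (hr : 0 < r) : #{x | G.dist v x = r + 1} ≤ #{x | G.dist v x = r} * d := by
  classical
  let children (y : V) : Finset V := {x ∈ G.neighborFinset y | G.dist v x = G.dist v y + 1}
  have hcover : ({x | G.dist v x = r + 1} : Finset V)
      ⊆ ({x | G.dist v x = r} : Finset V).biUnion children := by
    intro x hx
    have hx : G.dist v x = r + 1 := (mem_filter.1 hx).2
    have hxv : x ≠ v := by rintro rfl; simp at hx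
    obtain ⟨y, hxy, hy⟩ := exists_adj_dist_add_one_eq hG hxv
    have hyr : G.dist v y = r := by lia
    exact mem_biUnion.2 ⟨y, by simpa using hyr, by simp [children, hxy.symm, hy]⟩
  have hchildren : ∀ y ∈ ({x | G.dist v x = r} : Finset V), #(children y) ≤ d := by
    intro y hy
    have hy : G.dist v y = r := (mem_filter.1 hy).2
    have hyv : y ≠ v := by rintro rfl; simp at hy; lia
    obtain ⟨p, hyp, hp⟩ := exists_adj_dist_add_one_eq hG hyv
    have hlt : #(children y) < G.degree y := by
      rw [← G.card_neighborFinset_eq_degree]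
      exact card_lt_card (filter_ssubset.2 ⟨p, by simpa using hyp, by lia⟩)
    linarith [hd y]
  exact (card_le_card hcover).trans (card_biUnion_le_card_mul _ _ _ hchildren)

theorem card_sphere_le (hG : G.Connected) (hd : ∀ x, G.degree x ≤ d + 1) (v : V) (r : ℕ) :
    #{x | G.dist v x = r + 1} ≤ (d + 1) * d ^ r := by
  induction r with
  | zero => simpa using card_sphere_one_le hd v
  | succ r ih =>
    calc #{x | G.dist v x = r + 1 + 1} ≤ #{x | G.dist v x = r + 1} * d :=
          card_sphere_succ_le hG hd v r.succ_pos
      _ ≤ (d + 1) * d ^ r * d := Nat.mul_le_mul_right d ih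
      _ = (d + 1) * d ^ (r + 1) := by ring

theorem card_closedBall_le (hG : G.Connected) (hd2 : 2 ≤ d) (hd : ∀ x, G.degree x ≤ d + 1)
    (v : V) (r : ℕ) : #{x | G.dist v x ≤ r} ≤ 3 * d ^ r := by
  classical
  induction r with
  | zero =>
    have hball : ({x | G.dist v x ≤ 0} : Finset V) = {v} := by
      ext x
      simp [hG.dist_eq_zero_iff, eq_comm]
    rw [hball]
    simp
  | succ r ih =>
    have hball : ({x | G.dist v x ≤ r + 1} : Finset V)
        = ({x | G.dist v x ≤ r} : Finset V) ∪ ({x | G.dist v x = r + 1} : Finset V) := by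
      rw [← filter_or]
      simp only [Nat.le_succ_iff]
    calc #{x | G.dist v x ≤ r + 1} ≤ #{x | G.dist v x ≤ r} + #{x | G.dist v x = r + 1} :=
          (congrArg card hball).trans_le (card_union_le _ _)
      _ ≤ 3 * d ^ r + (d + 1) * d ^ r := Nat.add_le_add ih (card_sphere_le hG hd v r)
      _ = (d + 4) * d ^ r := by ring
      _ ≤ 3 * d * d ^ r := Nat.mul_le_mul_right _ (by lia)
      _ = 3 * d ^ (r + 1) := by ring

theorem card_closedBall_le_rpow (hG : G.Connected) (hd2 : 2 ≤ d) (hd : ∀ x, G.degree x ≤ d + 1)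
    (v : V) {R : ℝ} (hR : 0 ≤ R) : (#{x | G.dist v x ≤ ⌊R⌋₊} : ℝ) ≤ 3 * (d : ℝ) ^ R := by
  calc (#{x | G.dist v x ≤ ⌊R⌋₊} : ℝ) ≤ 3 * (d : ℝ) ^ ⌊R⌋₊ := by
        exact_mod_cast card_closedBall_le hG hd2 hd v ⌊R⌋₊
    _ ≤ 3 * (d : ℝ) ^ R := by
        rw [← Real.rpow_natCast]
        gcongr
        · exact_mod_cast one_le_two.trans hd2
        · exact Nat.floor_le hR

theorem card_closedBall_div_card_le (hG : G.Connected) (hd2 : 2 ≤ d)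
    (hd : ∀ x, G.degree x ≤ d + 1) (v : V) {R : ℝ} (hR : 0 ≤ R) :
    (#{x | G.dist v x ≤ ⌊R⌋₊} : ℝ) / Fintype.card V
      ≤ 3 * (d : ℝ) ^ (R - Real.logb d (Fintype.card V)) := by
  have : Nonempty V := ⟨v⟩
  have hd1 : (1 : ℝ) < d := by exact_mod_cast hd2
  have hn : (0 : ℝ) < Fintype.card V := by exact_mod_cast Fintype.card_pos
  rw [Real.rpow_sub (by linarith), Real.rpow_logb (by linarith) hd1.ne' hn, ← mul_div_assoc]
  gcongr
  exact card_closedBall_le_rpow hG hd2 hd v hR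

end Distance

section RadialGrowth

/-- The mean factor by which `θ ^ d` changes in one step, for `d` the distance of a simple random
walk on the `k`-regular tree to a vertex which is not its present position. For `1 ≤ θ` it bounds
this factor from above on any connected `k`-regular graph. -/
noncomputable def radialGrowth (k θ : ℝ) : ℝ :=
  ((k - 1) * θ + θ⁻¹) / k

variable {k θ : ℝ}

theorem radialGrowth_sub_one (hk : k ≠ 0) (hθ : θ ≠ 0) :
    radialGrowth k θ - 1 = (1 - θ⁻¹) * (((k - 1) * θ - 1) / k) := by
  rw [radialGrowth]
  field_simp
  ring

theorem one_lt_radialGrowth (hk : 2 ≤ k) (hθ : 1 < θ) : 1 < radialGrowth k θ := by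
  have hinv : 0 < 1 - θ⁻¹ := sub_pos.2 (inv_lt_one_of_one_lt₀ hθ)
  have hnum : 0 < (k - 1) * θ - 1 := by nlinarith
  rw [← sub_pos, radialGrowth_sub_one (by positivity) (by positivity)]
  positivity

theorem log_radialGrowth_le (hk : 3 ≤ k) (hθ : 1 < θ) :
    Real.log (radialGrowth k θ) ≤ (2 * θ - 1) * ((k - 2) / k) * Real.log θ := by
  have hθ0 : 0 < θ := by linarith
  have hnum : 0 ≤ (k - 1) * θ - 1 := by nlinarith
  have hspeed : (k - 1) * θ - 1 ≤ (2 * θ - 1) * (k - 2) := by nlinarith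
  calc Real.log (radialGrowth k θ) ≤ radialGrowth k θ - 1 :=
        Real.log_le_sub_one_of_pos (by linarith [one_lt_radialGrowth (by linarith : 2 ≤ k) hθ])
    _ = (1 - θ⁻¹) * (((k - 1) * θ - 1) / k) := radialGrowth_sub_one (by linarith) hθ0.ne'
    _ ≤ Real.log θ * ((2 * θ - 1) * (k - 2) / k) := by
        gcongr
        · exact Real.log_nonneg hθ.le
        · exact Real.one_sub_inv_le_log_of_pos hθ0
    _ = (2 * θ - 1) * ((k - 2) / k) * Real.log θ := by ring

theorem radialGrowth_pow_le {ε L : ℝ} (hk : 3 ≤ k) (hε : 0 < ε) (hL : 0 ≤ L) {t : ℕ}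
    (ht : t ≤ (1 - ε) * (k / (k - 2)) * L) :
    radialGrowth k (1 + ε / 4) ^ t ≤ (1 + ε / 4) ^ ((1 - ε / 2) * L) := by
  have hθ : 1 < 1 + ε / 4 := by linarith
  have hρ : 1 < radialGrowth k (1 + ε / 4) := one_lt_radialGrowth (by linarith) hθ
  have hk2 : k - 2 ≠ 0 := by linarith
  have hlog : 0 ≤ Real.log (1 + ε / 4) := Real.log_nonneg hθ.le
  rw [← Real.rpow_natCast, Real.rpow_def_of_pos (by linarith), Real.rpow_def_of_pos (by linarith),
    Real.exp_le_exp]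
  calc Real.log (radialGrowth k (1 + ε / 4)) * t
    _ ≤ (2 * (1 + ε / 4) - 1) * ((k - 2) / k) * Real.log (1 + ε / 4)
        * ((1 - ε) * (k / (k - 2)) * L) :=
        mul_le_mul (log_radialGrowth_le hk hθ) ht t.cast_nonneg
          ((Real.log_nonneg hρ.le).trans (log_radialGrowth_le hk hθ))
    _ = Real.log (1 + ε / 4) * ((1 - ε) * (1 + ε / 2) * L) := by
        field_simp
        ring
    _ ≤ Real.log (1 + ε / 4) * ((1 - ε / 2) * L) := by
        gcongr
        nlinarith

theorem radialGrowth_pow_div_rpow_le {ε L : ℝ} (hk : 3 ≤ k) (hε : 0 < ε) (hL : 0 ≤ L) {t : ℕ}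
    (ht : t ≤ (1 - ε) * (k / (k - 2)) * L) :
    radialGrowth k (1 + ε / 4) ^ t / (1 + ε / 4) ^ ((1 - ε / 4) * L)
      ≤ (1 + ε / 4) ^ (-(ε / 4 * L)) := by
  rw [div_le_iff₀ (by positivity), ← Real.rpow_add (by positivity)]
  exact (radialGrowth_pow_le hk hε hL ht).trans_eq (by ring_nf)

end RadialGrowth

section SimpleRandomWalk

variable {V : Type*} [Fintype V] (G : SimpleGraph V) [DecidableRel G.Adj]

/-- The transition matrix `A / k` of the simple random walk on a `k`-regular graph. -/
noncomputable def srwMatrix (k : ℕ) : Matrix V V ℝ :=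
  (k : ℝ)⁻¹ • G.adjMatrix ℝ

variable {G} {k : ℕ}

theorem vecMul_srwMatrix_apply (h : V → ℝ) (x : V) :
    (h ᵥ* srwMatrix G k) x = (∑ y ∈ G.neighborFinset x, h y) / k := by
  rw [srwMatrix, vecMul_smul, Pi.smul_apply, SimpleGraph.adjMatrix_vecMul_apply, smul_eq_mul,
    inv_mul_eq_div]

-- The additive constant compensates for `v` itself, from where every step increases the distance.
theorem vecMul_srwMatrix_pow_dist_le (hG : G.Connected) (hreg : G.IsRegularOfDegree k)
    (hk : 2 ≤ k) {θ : ℝ} (hθ : 1 < θ) (v : V) :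
    (fun x => θ ^ G.dist v x + θ / (radialGrowth k θ - 1)) ᵥ* srwMatrix G k
      ≤ radialGrowth k θ • fun x => θ ^ G.dist v x + θ / (radialGrowth k θ - 1) := by
  intro x
  have hk0 : (0 : ℝ) < k := by positivity
  have hρ : 1 < radialGrowth k θ := one_lt_radialGrowth (by exact_mod_cast hk) hθ
  set ρ := radialGrowth k θ with hρ_def
  set b := θ / (ρ - 1)
  have hb : (ρ - 1) * b = θ := mul_div_cancel₀ _ (by linarith)
  have hmean : (∑ y ∈ G.neighborFinset x, θ ^ G.dist v y) / k ≤ ρ * θ ^ G.dist v x + θ := by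
    by_cases hx : x = v
    · have hnbr : ∑ y ∈ G.neighborFinset x, θ ^ G.dist v y = k * θ := by
        rw [sum_congr rfl fun y hy => by
          rw [SimpleGraph.dist_eq_one_iff_adj.2 (hx ▸ (G.mem_neighborFinset x y).1 hy), pow_one]]
        simp [hreg.degree_eq]
      rw [hnbr, mul_div_cancel_left₀ _ hk0.ne']
      nlinarith [one_le_pow₀ hθ.le (n := G.dist v x)]
    · have hnbr := sum_neighborFinset_pow_dist_le hG hθ.le hx
      rw [hreg.degree_eq] at hnbr
      calc (∑ y ∈ G.neighborFinset x, θ ^ G.dist v y) / k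
        _ ≤ ((k - 1) * θ + θ⁻¹) * θ ^ G.dist v x / k := by gcongr
        _ = ρ * θ ^ G.dist v x := by rw [hρ_def, radialGrowth, div_mul_eq_mul_div]
        _ ≤ ρ * θ ^ G.dist v x + θ := by linarith
  have hconst : (∑ _y ∈ G.neighborFinset x, b) / k = b := by
    simp [hreg.degree_eq, hk0.ne']
  rw [vecMul_srwMatrix_apply, sum_add_distrib, add_div, hconst, Pi.smul_apply, smul_eq_mul]
  linarith

variable [DecidableEq V]

variable (G) in
/-- The distribution `P_v^t` at time `t` of the simple random walk on a `k`-regular graph started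
at `v`. -/
noncomputable def srwDist (k : ℕ) (v : V) (t : ℕ) : V → ℝ :=
  srwMatrix G k ^ t *ᵥ fun w => if w = v then 1 else 0

theorem srwMatrix_mem_colStochastic (hreg : G.IsRegularOfDegree k) (hk : k ≠ 0) :
    srwMatrix G k ∈ colStochastic ℝ V := by
  refine ⟨fun x y => ?_, funext fun x => ?_⟩
  · rw [srwMatrix, Matrix.smul_apply, SimpleGraph.adjMatrix_apply, smul_eq_mul]
    positivity
  · simp [vecMul_srwMatrix_apply, hreg.degree_eq, hk]

theorem srwDist_nonneg (hreg : G.IsRegularOfDegree k) (hk : k ≠ 0) (v : V) (t : ℕ) (x : V) :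
    0 ≤ srwDist G k v t x :=
  nonneg_mulVec_of_mem_colStochastic (pow_mem (srwMatrix_mem_colStochastic hreg hk) t)
    (fun w => by positivity) x

theorem sum_srwDist (hreg : G.IsRegularOfDegree k) (hk : k ≠ 0) (v : V) (t : ℕ) :
    ∑ x, srwDist G k v t x = 1 := by
  rw [srwDist, sum_mulVec_of_mem_colStochastic (pow_mem (srwMatrix_mem_colStochastic hreg hk) t)]
  simp

theorem dotProduct_srwDist (h : V → ℝ) (v : V) (t : ℕ) :
    h ⬝ᵥ srwDist G k v t = (h ᵥ* srwMatrix G k ^ t) v := by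
  rw [srwDist, dotProduct_mulVec]
  simp [dotProduct]

theorem sum_pow_dist_mul_srwDist_le (hG : G.Connected) (hreg : G.IsRegularOfDegree k)
    (hk : 2 ≤ k) {θ : ℝ} (hθ : 1 < θ) (v : V) (t : ℕ) :
    ∑ x, θ ^ G.dist v x * srwDist G k v t x
      ≤ (1 + θ / (radialGrowth k θ - 1)) * radialGrowth k θ ^ t := by
  have hρ : 1 < radialGrowth k θ := one_lt_radialGrowth (by exact_mod_cast hk) hθ
  have hb : 0 ≤ θ / (radialGrowth k θ - 1) := div_nonneg (by linarith) (by linarith)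
  have hP := srwMatrix_mem_colStochastic hreg (by lia)
  let h : V → ℝ := fun x => θ ^ G.dist v x + θ / (radialGrowth k θ - 1)
  calc ∑ x, θ ^ G.dist v x * srwDist G k v t x ≤ h ⬝ᵥ srwDist G k v t :=
        sum_le_sum fun x _ => mul_le_mul_of_nonneg_right (le_add_of_nonneg_right hb)
          (srwDist_nonneg hreg (by lia) v t x)
    _ = (h ᵥ* srwMatrix G k ^ t) v := dotProduct_srwDist h v t
    _ ≤ radialGrowth k θ ^ t * h v :=
        vecMul_pow_le_pow_smul hP.1 (by linarith) (vecMul_srwMatrix_pow_dist_le hG hreg hk hθ v) t v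
    _ = (1 + θ / (radialGrowth k θ - 1)) * radialGrowth k θ ^ t := by
        simp only [h, SimpleGraph.dist_self, pow_zero, mul_comm]

theorem sum_srwDist_compl_closedBall_le (hG : G.Connected) (hreg : G.IsRegularOfDegree k)
    (hk : 2 ≤ k) {θ : ℝ} (hθ : 1 < θ) (v : V) (t : ℕ) (R : ℝ) :
    ∑ x ∈ ({x | G.dist v x ≤ ⌊R⌋₊} : Finset V)ᶜ, srwDist G k v t x
      ≤ (1 + θ / (radialGrowth k θ - 1)) * radialGrowth k θ ^ t / θ ^ R := by
  have hθ0 : 0 < θ := by linarith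
  have hnonneg := srwDist_nonneg hreg (by lia : k ≠ 0) v t
  rw [le_div_iff₀ (Real.rpow_pos_of_pos hθ0 R), mul_comm, mul_sum]
  calc ∑ x ∈ ({x | G.dist v x ≤ ⌊R⌋₊} : Finset V)ᶜ, θ ^ R * srwDist G k v t x
    _ ≤ ∑ x ∈ ({x | G.dist v x ≤ ⌊R⌋₊} : Finset V)ᶜ, θ ^ G.dist v x * srwDist G k v t x := by
        refine sum_le_sum fun x hx => mul_le_mul_of_nonneg_right ?_ (hnonneg x)
        have hRx : R < G.dist v x := Nat.lt_of_floor_lt (by simpa using hx)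
        rw [← Real.rpow_natCast]
        exact Real.rpow_le_rpow_of_exponent_le hθ.le hRx.le
    _ ≤ ∑ x, θ ^ G.dist v x * srwDist G k v t x :=
        sum_le_univ_sum_of_nonneg fun x => mul_nonneg (by positivity) (hnonneg x)
    _ ≤ _ := sum_pow_dist_mul_srwDist_le hG hreg hk hθ v t

end SimpleRandomWalk

section Cutoff

/-- The defect from `1` of the total variation distance to stationarity before cutoff, in terms of
`L = log_{k-1} n`: the first summand bounds the probability of having left the ball of radius
`(1 - ε / 4) L`, the second one bounds the uniform measure of this ball. -/
noncomputable def cutoffError (k ε L : ℝ) : ℝ :=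
  (1 + (1 + ε / 4) / (radialGrowth k (1 + ε / 4) - 1)) * (1 + ε / 4) ^ (-(ε / 4 * L))
    + 3 * (k - 1) ^ (-(ε / 4 * L))

theorem tendsto_cutoffError {k ε : ℝ} (hk : 2 < k) (hε : 0 < ε) :
    Tendsto (cutoffError k ε) atTop (𝓝 0) := by
  have hexp : Tendsto (fun L : ℝ => -(ε / 4 * L)) atTop atBot :=
    tendsto_neg_atTop_atBot.comp (tendsto_id.const_mul_atTop (by positivity))
  have hdecay (b : ℝ) (hb : 1 < b) : Tendsto (fun L : ℝ => b ^ (-(ε / 4 * L))) atTop (𝓝 0) :=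
    (tendsto_rpow_atBot_of_base_gt_one b hb).comp hexp
  have h := ((hdecay (1 + ε / 4) (by linarith)).const_mul
    (1 + (1 + ε / 4) / (radialGrowth k (1 + ε / 4) - 1))).add
    ((hdecay (k - 1) (by linarith)).const_mul 3)
  rwa [mul_zero, mul_zero, add_zero] at h

variable {V : Type*} [Fintype V] [DecidableEq V] {G : SimpleGraph V} [DecidableRel G.Adj] {k : ℕ}

theorem one_sub_cutoffError_le_tvDist (hG : G.Connected) (hreg : G.IsRegularOfDegree k)
    (hk : 3 ≤ k) {ε : ℝ} (hε : 0 < ε) (v : V) {t : ℕ}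
    (ht : t ≤ (1 - ε) * (k / (k - 2)) * Real.logb (k - 1) (Fintype.card V)) :
    1 - cutoffError k ε (Real.logb (k - 1) (Fintype.card V))
      ≤ tvDist (srwDist G k v t) fun _ => 1 / (Fintype.card V : ℝ) := by
  have hk' : (3 : ℝ) ≤ k := by exact_mod_cast hk
  have : Nonempty V := ⟨v⟩
  have hq : 1 < (k : ℝ) - 1 := by linarith
  have hcard : 1 ≤ (Fintype.card V : ℝ) := by exact_mod_cast Fintype.card_pos
  set L := Real.logb (k - 1) (Fintype.card V) with hL_def
  have hL : 0 ≤ L := Real.logb_nonneg hq hcard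
  have hR : 0 ≤ (1 - ε / 4) * L := by
    have hspeed : 0 < (k : ℝ) / (k - 2) := div_pos (by linarith) (by linarith)
    have hradius : 0 ≤ k / (k - 2) * ((1 - ε) * L) := by linarith [(t.cast_nonneg : (0 : ℝ) ≤ t)]
    linarith [(mul_nonneg_iff_of_pos_left hspeed).1 hradius, mul_nonneg hε.le hL]
  let B : Finset V := {x | G.dist v x ≤ ⌊(1 - ε / 4) * L⌋₊}
  have hball : (#B : ℝ) / Fintype.card V ≤ 3 * ((k : ℝ) - 1) ^ (-(ε / 4 * L)) := by
    have h := card_closedBall_div_card_le (d := k - 1) hG (by lia)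
      (fun x => by rw [hreg.degree_eq]; lia) v hR
    rw [Nat.cast_sub (by lia), Nat.cast_one, ← hL_def] at h
    exact h.trans_eq (by ring_nf)
  have hescape : ∑ x ∈ Bᶜ, srwDist G k v t x ≤
      (1 + (1 + ε / 4) / (radialGrowth k (1 + ε / 4) - 1)) * (1 + ε / 4) ^ (-(ε / 4 * L)) := by
    have hρ := one_lt_radialGrowth (by linarith : (2 : ℝ) ≤ k) (by linarith : 1 < 1 + ε / 4)
    have hC : 0 ≤ 1 + (1 + ε / 4) / (radialGrowth k (1 + ε / 4) - 1) :=
      add_nonneg zero_le_one (div_nonneg (by linarith) (by linarith))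
    have h := sum_srwDist_compl_closedBall_le hG hreg (by lia) (by linarith : 1 < 1 + ε / 4) v t
      ((1 - ε / 4) * L)
    rw [mul_div_assoc] at h
    exact h.trans (mul_le_mul_of_nonneg_left (radialGrowth_pow_div_rpow_le hk' hε hL ht) hC)
  have htv := one_sub_le_tvDist_uniform (sum_srwDist hreg (by lia) v t) B
  rw [cutoffError]
  linarith

theorem srw_cutoff_lower_general (k : ℕ) (hk : 3 ≤ k) (ε δ : ℝ) (hε : 0 < ε) (hδ : 0 < δ) :
    ∃ N : ℕ, ∀ (V : Type*) [Fintype V] [DecidableEq V]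
      (G : SimpleGraph V) [DecidableRel G.Adj],
      G.Connected → G.IsRegularOfDegree k → Fintype.card V ≥ N → ∀ (v : V) (t : ℕ),
        t ≤ (1 - ε) * (k / (k - 2)) * Real.logb (k - 1) (Fintype.card V) →
        1 - δ ≤ tvDist (srwDist G k v t) fun _ => 1 / (Fintype.card V : ℝ) := by
  have hk' : (3 : ℝ) ≤ k := by exact_mod_cast hk
  have hlim : Tendsto (fun n : ℕ => cutoffError k ε (Real.logb (k - 1) n)) atTop (𝓝 0) :=
    (tendsto_cutoffError (by linarith) hε).comp
      ((Real.tendsto_logb_atTop (by linarith)).comp tendsto_natCast_atTop_atTop)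
  obtain ⟨N, hN⟩ := eventually_atTop.1 (hlim.eventually_lt_const hδ)
  refine ⟨N, fun V _ _ G _ hG hreg hcard v t ht => ?_⟩
  linarith [hN _ hcard, one_sub_cutoffError_le_tvDist hG hreg hk hε v ht]

end Cutoff

/-- **Lubetzky–Peres (SRW cutoff, lower bound)**: for every `k ≥ 3` and `ε, δ > 0` there
is `N` such that on every finite connected non-bipartite `k`-regular Ramanujan graph on
`n ≥ N` vertices, for every starting vertex and every time
`t ≤ (1−ε)·(k/(k−2))·log_{k−1} n`, the simple random walk distribution is at total
variation distance at least `1 − δ` from the uniform distribution. -/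
theorem srw_cutoff_lower (k : ℕ) (hk : 3 ≤ k) (ε δ : ℝ) (hε : 0 < ε) (hδ : 0 < δ) :
    ∃ N : ℕ, ∀ (V : Type) [Fintype V] [DecidableEq V]
      (G : SimpleGraph V) [DecidableRel G.Adj],
      G.Connected → ¬ G.Colorable 2 → G.IsRegularOfDegree k →
      (∀ lam : ℝ, (∃ x : V → ℝ, x ≠ 0 ∧ G.adjMatrix ℝ *ᵥ x = lam • x) →
        |lam| = (k : ℝ) ∨ |lam| ≤ 2 * Real.sqrt ((k : ℝ) - 1)) →
      Fintype.card V ≥ N →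
      ∀ (v : V) (t : ℕ),
        (t : ℝ) ≤ (1 - ε) * ((k : ℝ) / ((k : ℝ) - 2)) *
          (Real.log (Fintype.card V) / Real.log ((k : ℝ) - 1)) →
        1 - δ ≤ (1 / 2) * ∑ x : V,
            |((((k : ℝ)⁻¹ • G.adjMatrix ℝ) ^ t) *ᵥ (fun w : V => if w = v then 1 else 0)) x
              - 1 / (Fintype.card V : ℝ)| := by
  obtain ⟨N, hN⟩ := srw_cutoff_lower_general k hk ε δ hε hδ
  exact ⟨N, fun V _ _ G _ hG _ hreg _ => hN V G hG hreg⟩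
end

section
/- (Lubetzky–Peres, NBRW cutoff, upper bound) For every integer k ≥ 3 and all ε, δ > 0 there exists N such that: for every finite connected non-bipartite k-regular Ramanujan graph X on n ≥ N vertices, every vertex v, and every integer t ≥ (1+ε)·log_{k−1} n, the distribution P_v^t of the non-backtracking random walk of length t started at v satisfies ‖P_v^t − u‖_TV ≤ δ, where u is the uniform distribution on the vertices. -/
/-!
On a `(q + 1)`-regular graph with adjacency matrix `A`, the matrices counting non-backtracking
paths satisfy the three-term recurrence of the Dickson polynomials of the second kind, so the one
for length `t + 2` is `p(A)` with `p = D_{t+2} - D_t`. Since `D_n(2 √q x) = √q ^ n U_n(x)` with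
`U_n` the Chebyshev polynomial, `|p| ≤ 2 (t + 2) √q ^ (t + 2)` on the Ramanujan interval
`[-2 √q, 2 √q]`, whereas `p(q + 1) = (q + 1) q ^ (t + 1)` is the total number of paths. On a
connected non-bipartite Ramanujan graph every eigenvector outside that interval is constant, so a
point mass comes within `O(t q ^ (-t / 2))` of uniform in `ℓ²`, and within `O(t √n q ^ (-t / 2))`
in `ℓ¹`. The latter is small once `t ≥ (1 + ε) log_q n`, because then
`√n ≤ q ^ (t / (2 (1 + ε)))`.
-/

open Matrix

/-- A non-backtracking path of length `t` in `G` starting at `v`: a sequence of vertices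
`v = w₀, w₁, …, w_t` with `wᵢ ~ wᵢ₊₁` and `wᵢ₊₂ ≠ wᵢ`. -/
def IsNBPath {V : Type*} (G : SimpleGraph V) (t : ℕ) (v : V) (w : Fin (t + 1) → V) : Prop :=
  w 0 = v ∧
  (∀ (i : ℕ) (h : i < t), G.Adj (w ⟨i, by omega⟩) (w ⟨i + 1, by omega⟩)) ∧
  (∀ (i : ℕ) (h : i + 2 < t + 1), w ⟨i + 2, h⟩ ≠ w ⟨i, by omega⟩)

section Paths

variable {V : Type*} (G : SimpleGraph V)

theorem isNBPath_zero_iff (v : V) (w : Fin 1 → V) : IsNBPath G 0 v w ↔ w 0 = v :=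
  ⟨And.left, fun h => ⟨h, fun _ hi => by omega, fun _ hi => by omega⟩⟩

theorem isNBPath_succ_iff_init {t : ℕ} (v : V) (w : Fin (t + 2) → V) :
    IsNBPath G (t + 1) v w ↔
      IsNBPath G t v (Fin.init w) ∧ G.Adj (w (Fin.last t).castSucc) (w (Fin.last (t + 1))) ∧
        ∀ i : Fin (t + 1), (i : ℕ) + 1 = t → Fin.init w i ≠ w (Fin.last (t + 1)) := by
  constructor
  · rintro ⟨h0, hadj, hnb⟩
    refine ⟨⟨h0, fun i hi => hadj i (by omega), fun i hi => hnb i (by omega)⟩,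
      hadj t (by omega), ?_⟩
    rintro ⟨i, hi⟩ (rfl : i + 1 = t)
    exact (hnb i (by omega)).symm
  · rintro ⟨⟨h0, hadj, hnb⟩, hlast, hturn⟩
    refine ⟨h0, fun i hi => ?_, fun i hi => ?_⟩
    · obtain hi | rfl := Nat.lt_succ_iff_lt_or_eq.mp hi
      exacts [hadj i hi, hlast]
    · obtain hi | rfl := Nat.lt_succ_iff_lt_or_eq.mp (Nat.succ_lt_succ_iff.mp hi)
      exacts [hnb i (by omega), (hturn ⟨i, by omega⟩ rfl).symm]

/-- The number of non-backtracking paths of length `t` from `v` to `x`. -/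
noncomputable def nbCount (v : V) (t : ℕ) (x : V) : ℕ :=
  Nat.card {w : Fin (t + 1) → V // IsNBPath G t v w ∧ w (Fin.last t) = x}

/-- The number of non-backtracking paths of length `t + 1` from `v` whose last step goes from
`y` to `x`. -/
noncomputable def nbDartCount (v : V) (t : ℕ) (y x : V) : ℕ :=
  Nat.card {w : Fin (t + 2) → V //
    (IsNBPath G (t + 1) v w ∧ w (Fin.last (t + 1)) = x) ∧ w (Fin.last t).castSucc = y}

theorem nbCount_zero [DecidableEq V] (v x : V) : nbCount G v 0 x = if x = v then 1 else 0 := by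
  have hpath (w : Fin 1 → V) :
      (IsNBPath G 0 v w ∧ w (Fin.last 0) = x) ↔ (x = v ∧ w = fun _ => x) := by
    rw [isNBPath_zero_iff, funext_iff, Fin.forall_fin_one, Fin.last_zero]
    exact and_congr_left fun hx => by rw [hx]
  simp only [nbCount, hpath]
  split_ifs with hx <;> simp [hx]

theorem nbDartCount_of_not_adj (v : V) (t : ℕ) {y x : V} (h : ¬G.Adj y x) :
    nbDartCount G v t y x = 0 := by
  have : IsEmpty {w : Fin (t + 2) → V //
      (IsNBPath G (t + 1) v w ∧ w (Fin.last (t + 1)) = x) ∧ w (Fin.last t).castSucc = y} := by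
    refine ⟨?_⟩
    rintro ⟨w, ⟨hw, rfl⟩, rfl⟩
    exact h ((isNBPath_succ_iff_init G v w).mp hw).2.1
  exact Nat.card_of_isEmpty

theorem nbDartCount_eq_card_extendable (v : V) (t : ℕ) {y x : V} (h : G.Adj y x) :
    nbDartCount G v t y x = Nat.card {w : Fin (t + 1) → V //
      (IsNBPath G t v w ∧ w (Fin.last t) = y) ∧ ∀ i : Fin (t + 1), (i : ℕ) + 1 = t → w i ≠ x} := by
  refine Nat.card_congr
    { toFun := fun w => ⟨Fin.init w.1, ?_⟩
      invFun := fun w => ⟨Fin.snoc w.1 x, ?_⟩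
      left_inv := ?_
      right_inv := fun w => Subtype.ext (Fin.init_snoc (α := fun _ => V) x w.1) }
  · obtain ⟨w, ⟨hw, rfl⟩, rfl⟩ := w
    rw [isNBPath_succ_iff_init] at hw
    exact ⟨⟨hw.1, rfl⟩, hw.2.2⟩
  · obtain ⟨w, ⟨hw, rfl⟩, hx⟩ := w
    rw [isNBPath_succ_iff_init, Fin.init_snoc (α := fun _ => V), Fin.snoc_last (α := fun _ => V),
      Fin.snoc_castSucc (α := fun _ => V)]
    exact ⟨⟨⟨hw, h, hx⟩, rfl⟩, rfl⟩
  · rintro ⟨w, ⟨-, rfl⟩, -⟩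
    exact Subtype.ext (Fin.snoc_init_self w)

theorem nbDartCount_zero (v : V) {y x : V} (h : G.Adj y x) :
    nbDartCount G v 0 y x = nbCount G v 0 y := by
  rw [nbDartCount_eq_card_extendable G v 0 h]
  exact Nat.card_congr (Equiv.subtypeEquivRight fun w => and_iff_left fun i hi => by omega)

theorem nbDartCount_succ_add [Finite V] (v : V) (t : ℕ) {y x : V} (h : G.Adj y x) :
    nbDartCount G v (t + 1) y x + nbDartCount G v t x y = nbCount G v (t + 1) y := by
  classical
  have hturn (w : Fin (t + 2) → V) :
      (∀ i : Fin (t + 2), (i : ℕ) + 1 = t + 1 → w i ≠ x) ↔ ¬ w (Fin.last t).castSucc = x :=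
    ⟨fun hw => hw _ rfl, fun hw i hi => by
      rwa [show i = (Fin.last t).castSucc from Fin.ext (Nat.succ_injective hi)]⟩
  simp only [nbDartCount_eq_card_extendable G v (t + 1) h, hturn]
  rw [add_comm, nbDartCount, nbCount, ← Nat.card_congr (Equiv.sumCompl
    fun w : {w : Fin (t + 2) → V // IsNBPath G (t + 1) v w ∧ w (Fin.last (t + 1)) = y} =>
      w.1 (Fin.last t).castSucc = x), Nat.card_sum]
  exact congrArg₂ _ (Nat.card_congr (Equiv.subtypeSubtypeEquivSubtypeInter _ _).symm)
    (Nat.card_congr (Equiv.subtypeSubtypeEquivSubtypeInter _ fun w : Fin (t + 2) → V =>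
      ¬ w (Fin.last t).castSucc = x).symm)

variable [Fintype V] [DecidableRel G.Adj]

theorem nbCount_succ (v : V) (t : ℕ) (x : V) :
    nbCount G v (t + 1) x = ∑ y ∈ G.neighborFinset x, nbDartCount G v t y x := by
  have hfiber : nbCount G v (t + 1) x = ∑ y, nbDartCount G v t y x := by
    rw [nbCount, ← Nat.card_congr (Equiv.sigmaFiberEquiv
      fun w : {w : Fin (t + 2) → V // IsNBPath G (t + 1) v w ∧ w (Fin.last (t + 1)) = x} =>
        w.1 (Fin.last t).castSucc), Nat.card_sigma]
    exact Finset.sum_congr rfl fun y _ =>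
      Nat.card_congr (Equiv.subtypeSubtypeEquivSubtypeInter _ fun w : Fin (t + 2) → V =>
        w (Fin.last t).castSucc = y)
  rw [hfiber]
  refine (Finset.sum_subset (Finset.subset_univ _) fun y _ hy => ?_).symm
  exact nbDartCount_of_not_adj G v t fun h => hy (by simpa using h.symm)

theorem nbCount_one (v x : V) :
    nbCount G v 1 x = ∑ y ∈ G.neighborFinset x, nbCount G v 0 y := by
  rw [nbCount_succ]
  exact Finset.sum_congr rfl fun y hy =>
    nbDartCount_zero G v ((G.mem_neighborFinset x y).mp hy).symm

theorem nbCount_add_two_add_sum (v : V) (t : ℕ) (x : V) :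
    nbCount G v (t + 2) x + ∑ y ∈ G.neighborFinset x, nbDartCount G v t x y =
      ∑ y ∈ G.neighborFinset x, nbCount G v (t + 1) y := by
  rw [nbCount_succ, ← Finset.sum_add_distrib]
  exact Finset.sum_congr rfl fun y hy =>
    nbDartCount_succ_add G v t ((G.mem_neighborFinset x y).mp hy).symm

variable {G} {q : ℕ}

theorem nbCount_two_add_mul (hG : G.IsRegularOfDegree (q + 1)) (v x : V) :
    nbCount G v 2 x + (q + 1) * nbCount G v 0 x = ∑ y ∈ G.neighborFinset x, nbCount G v 1 y := by
  rw [← nbCount_add_two_add_sum, Finset.sum_congr rfl fun y hy =>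
    nbDartCount_zero G v ((G.mem_neighborFinset x y).mp hy), Finset.sum_const,
    G.card_neighborFinset_eq_degree, hG.degree_eq, smul_eq_mul]

theorem nbCount_add_three_add_mul (hG : G.IsRegularOfDegree (q + 1)) (v : V) (t : ℕ) (x : V) :
    nbCount G v (t + 3) x + q * nbCount G v (t + 1) x =
      ∑ y ∈ G.neighborFinset x, nbCount G v (t + 2) y := by
  have hsum : ∑ y ∈ G.neighborFinset x, nbDartCount G v (t + 1) x y + nbCount G v (t + 1) x =
      (q + 1) * nbCount G v (t + 1) x := by
    rw [nbCount_succ G v t x, ← Finset.sum_add_distrib, Finset.sum_congr rfl fun y hy =>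
      nbDartCount_succ_add G v t ((G.mem_neighborFinset x y).mp hy), Finset.sum_const,
      G.card_neighborFinset_eq_degree, hG.degree_eq, smul_eq_mul, nbCount_succ G v t x]
  rw [← nbCount_add_two_add_sum]
  linarith

end Paths

section Dickson

open Polynomial

theorem eval_two_mul_dickson_two_sq {R : Type*} [CommRing R] (s x : R) (n : ℕ) :
    (dickson 2 (s ^ 2) n).eval (2 * s * x) = s ^ n * (Chebyshev.U R n).eval x := by
  induction n using Nat.twoStepInduction with
  | zero => norm_num [dickson_zero]
  | one =>
    simp only [dickson_one, eval_X, Nat.cast_one, Chebyshev.U_one, eval_mul, eval_ofNat]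
    ring
  | more n ih₀ ih₁ =>
    push_cast at ih₁ ⊢
    rw [dickson_add_two, Chebyshev.U_add_two]
    simp only [eval_sub, eval_mul, eval_X, eval_C, eval_ofNat, ih₀, ih₁]
    ring

theorem eval_add_one_dickson_two {R : Type*} [CommRing R] (a : R) (n : ℕ) :
    (dickson 2 a n).eval (a + 1) = ∑ i ∈ Finset.range (n + 1), a ^ i := by
  induction n using Nat.twoStepInduction with
  | zero => norm_num [dickson_zero]
  | one => simp [Finset.sum_range_succ, add_comm]
  | more n ih₀ ih₁ =>
    rw [dickson_add_two]
    simp only [eval_sub, eval_mul, eval_X, eval_C, ih₀, ih₁, Finset.sum_range_succ]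
    ring

theorem abs_eval_chebyshevU_le {x : ℝ} (hx : |x| ≤ 1) (n : ℕ) :
    |(Chebyshev.U ℝ n).eval x| ≤ n + 1 := by
  induction n with
  | zero => simp
  | succ n ih =>
    push_cast
    rw [Chebyshev.U_eq_X_mul_U_add_T, eval_add, eval_mul, eval_X]
    calc _ ≤ |x| * |(Chebyshev.U ℝ n).eval x| + |(Chebyshev.T ℝ (n + 1)).eval x| := by
          rw [← abs_mul]; exact abs_add_le _ _
      _ ≤ 1 * (n + 1) + 1 := by
          gcongr
          exact Chebyshev.abs_eval_T_real_le_one _ hx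
      _ = n + 1 + 1 := by ring

theorem abs_eval_dickson_two_le {q μ : ℝ} (hq : 0 ≤ q) (hμ : |μ| ≤ 2 * √q) (n : ℕ) :
    |(dickson 2 q n).eval μ| ≤ (n + 1) * √q ^ n := by
  obtain ⟨x, hx, rfl⟩ : ∃ x, |x| ≤ 1 ∧ 2 * √q * x = μ := by
    obtain hs | hs := (Real.sqrt_nonneg q).eq_or_lt
    · exact ⟨0, by simp, by simpa [← hs, eq_comm] using hμ⟩
    · have h2s : 0 < 2 * √q := by positivity
      exact ⟨μ / (2 * √q), by rwa [abs_div, abs_of_pos h2s, div_le_one h2s], by field_simp⟩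
  have heval := eval_two_mul_dickson_two_sq (√q) x n
  rw [Real.sq_sqrt hq] at heval
  rw [heval, abs_mul, abs_of_nonneg (by positivity), mul_comm]
  gcongr
  exact abs_eval_chebyshevU_le hx n

theorem abs_eval_dickson_two_sub_le {q μ : ℝ} (hq : 1 ≤ q) (hμ : |μ| ≤ 2 * √q) (n : ℕ) :
    |(dickson 2 q (n + 2) - dickson 2 q n).eval μ| ≤ 2 * (n + 2) * √q ^ (n + 2) := by
  have hq₀ : 0 ≤ q := by linarith
  have hpow : √q ^ n ≤ √q ^ (n + 2) :=
    pow_le_pow_right₀ (Real.one_le_sqrt.mpr hq) (Nat.le_add_right n 2)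
  rw [eval_sub]
  calc _ ≤ |(dickson 2 q (n + 2)).eval μ| + |(dickson 2 q n).eval μ| := abs_sub _ _
    _ ≤ ((n + 2 : ℕ) + 1) * √q ^ (n + 2) + (n + 1) * √q ^ (n + 2) :=
      add_le_add (abs_eval_dickson_two_le hq₀ hμ _)
        ((abs_eval_dickson_two_le hq₀ hμ n).trans (by gcongr))
    _ = 2 * (n + 2) * √q ^ (n + 2) := by push_cast; ring

theorem eval_add_one_dickson_two_sub {R : Type*} [CommRing R] (a : R) (n : ℕ) :
    (dickson 2 a (n + 2) - dickson 2 a n).eval (a + 1) = (a + 1) * a ^ (n + 1) := by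
  rw [eval_sub, eval_add_one_dickson_two, eval_add_one_dickson_two, Finset.sum_range_succ,
    Finset.sum_range_succ]
  ring

end Dickson

section NBMatrix

open Polynomial

variable {V : Type*} (R : Type*) [CommRing R] (G : SimpleGraph V)

/-- The matrix counting non-backtracking paths of length `t`. Starting vertices index the columns,
so that multiplication by it propagates distributions along the walk. -/
noncomputable def nbMatrix (t : ℕ) : Matrix V V R :=
  Matrix.of fun x v => (nbCount G v t x : R)

@[simp]
theorem nbMatrix_apply (t : ℕ) (x v : V) : nbMatrix R G t x v = nbCount G v t x := rfl

theorem nbMatrix_zero [DecidableEq V] : nbMatrix R G 0 = 1 := by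
  ext x v
  simp [nbCount_zero, Matrix.one_apply]

variable [DecidableRel G.Adj]

theorem nbMatrix_one [Finite V] : nbMatrix R G 1 = G.adjMatrix R := by
  classical
  cases nonempty_fintype V
  rw [← Matrix.mul_one (G.adjMatrix R), ← nbMatrix_zero R G]
  ext x v
  simp only [SimpleGraph.adjMatrix_mul_apply, nbMatrix_apply, nbCount_one, Nat.cast_sum]

variable {G} [Fintype V] {q : ℕ}

theorem nbMatrix_add_three (hG : G.IsRegularOfDegree (q + 1)) (t : ℕ) :
    nbMatrix R G (t + 3) =
      G.adjMatrix R * nbMatrix R G (t + 2) - (q : R) • nbMatrix R G (t + 1) := by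
  rw [eq_sub_iff_add_eq]
  ext x v
  simpa [SimpleGraph.adjMatrix_mul_apply] using
    congrArg (Nat.cast : ℕ → R) (nbCount_add_three_add_mul hG v t x)

variable [DecidableEq V]

theorem nbMatrix_two (hG : G.IsRegularOfDegree (q + 1)) :
    nbMatrix R G 2 = G.adjMatrix R ^ 2 - (q + 1 : R) • 1 := by
  rw [eq_sub_iff_add_eq, sq, ← nbMatrix_zero R G]
  nth_rw 2 [← nbMatrix_one]
  ext x v
  simpa [SimpleGraph.adjMatrix_mul_apply] using
    congrArg (Nat.cast : ℕ → R) (nbCount_two_add_mul hG v x)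

theorem nbMatrix_add_two_eq_aeval_dickson (hG : G.IsRegularOfDegree (q + 1)) (t : ℕ) :
    nbMatrix R G (t + 2) =
      aeval (G.adjMatrix R) (dickson 2 (q : R) (t + 2) - dickson 2 (q : R) t) := by
  induction t using Nat.twoStepInduction with
  | zero =>
    have hpoly : dickson 2 (q : R) 2 - dickson 2 (q : R) 0 = X ^ 2 - C (q + 1 : R) := by
      rw [dickson_two, dickson_zero, C_add, C_1]
      push_cast
      ring
    rw [nbMatrix_two R hG, hpoly, map_sub, aeval_X_pow, aeval_C, Algebra.algebraMap_eq_smul_one]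
  | one =>
    have hpoly : dickson 2 (q : R) 3 - dickson 2 (q : R) 1 =
        X * (X ^ 2 - C (q + 1 : R)) - C (q : R) * X := by
      rw [dickson_add_two, dickson_two, dickson_one, C_add, C_1]
      push_cast
      ring
    rw [nbMatrix_add_three R hG, nbMatrix_two R hG, nbMatrix_one, hpoly]
    simp only [map_sub, map_mul, aeval_X_pow, aeval_X, aeval_C, Algebra.algebraMap_eq_smul_one,
      smul_mul_assoc, one_mul]
  | more t ih₀ ih₁ =>
    have hpoly : dickson 2 (q : R) (t + 4) - dickson 2 (q : R) (t + 2) =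
        X * (dickson 2 (q : R) (t + 3) - dickson 2 (q : R) (t + 1)) -
          C (q : R) * (dickson 2 (q : R) (t + 2) - dickson 2 (q : R) t) := by
      rw [dickson_add_two 2 _ (t + 2), dickson_add_two 2 _ t]
      ring
    rw [nbMatrix_add_three R hG, ih₁, ih₀, hpoly]
    simp only [map_sub, map_mul, aeval_X, aeval_C, Algebra.algebraMap_eq_smul_one, smul_mul_assoc,
      one_mul]

end NBMatrix

section Spectral

open Polynomial

theorem norm_aeval_apply_le_of_isSymmetric {𝕜 E : Type*} [RCLike 𝕜] [NormedAddCommGroup E]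
    [InnerProductSpace 𝕜 E] [FiniteDimensional 𝕜 E] {T : E →ₗ[𝕜] E} (hT : T.IsSymmetric)
    (p : 𝕜[X]) (v : E) {M : ℝ} (hM : 0 ≤ M)
    (h : ∀ (μ : 𝕜) (w : E), T w = μ • w → inner 𝕜 w v = 0 ∨ ‖p.eval μ‖ ≤ M) :
    ‖aeval T p v‖ ≤ M * ‖v‖ := by
  let b := hT.eigenvectorBasis rfl
  let μ (i : Fin (Module.finrank 𝕜 E)) : 𝕜 := hT.eigenvalues rfl i
  have hb i : T (b i) = μ i • b i := hT.apply_eigenvectorBasis rfl i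
  have hcoord i : b.repr (aeval T p v) i = p.eval (μ i) * b.repr v i := by
    have haeval : aeval T p v = ∑ j, (p.eval (μ j) * b.repr v j) • b j := by
      conv_lhs => rw [← b.sum_repr v]
      simp only [map_sum, map_smul, mul_comm (eval _ p), mul_smul,
        Module.End.aeval_apply_of_mem_apply_eq_smul (hb _)]
    simp [haeval, Pi.single_apply]
  have hle i : ‖b.repr (aeval T p v) i‖ ≤ M * ‖b.repr v i‖ := by
    rw [hcoord, norm_mul]
    obtain h0 | hle := h (μ i) (b i) (hb i)
    · simp [b.repr_apply_apply, h0]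
    · gcongr
  rw [← b.repr.norm_map (aeval T p v), ← b.repr.norm_map v,
    ← pow_le_pow_iff_left₀ (norm_nonneg _) (by positivity) two_ne_zero, mul_pow,
    EuclideanSpace.norm_sq_eq, EuclideanSpace.norm_sq_eq, Finset.mul_sum]
  refine Finset.sum_le_sum fun i _ => ?_
  rw [← mul_pow]
  gcongr
  exact hle i

theorem norm_toLp_aeval_mulVec_le {𝕜 n : Type*} [RCLike 𝕜] [Fintype n] [DecidableEq n]
    {A : Matrix n n 𝕜} (hA : A.IsHermitian) (p : 𝕜[X]) (f : n → 𝕜) {M : ℝ} (hM : 0 ≤ M)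
    (h : ∀ (μ : 𝕜) (b : n → 𝕜), A *ᵥ b = μ • b → star b ⬝ᵥ f = 0 ∨ ‖p.eval μ‖ ≤ M) :
    ‖WithLp.toLp 2 (aeval A p *ᵥ f)‖ ≤ M * ‖WithLp.toLp 2 f‖ := by
  have haeval : aeval (toEuclideanLin A) p (WithLp.toLp 2 f) = WithLp.toLp 2 (aeval A p *ᵥ f) := by
    rw [show toEuclideanLin A = toLpLinAlgEquiv 2 A from rfl, aeval_algHom_apply]
    rfl
  rw [← haeval]
  refine norm_aeval_apply_le_of_isSymmetric (isSymmetric_toEuclideanLin_iff.mpr hA) p _ hM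
    fun μ b hb => ?_
  rw [EuclideanSpace.inner_eq_star_dotProduct, dotProduct_comm]
  exact h μ b.ofLp (by simpa using congrArg WithLp.ofLp hb)

theorem aeval_mulVec_of_mulVec_eq_smul {R n : Type*} [CommRing R] [Fintype n] [DecidableEq n]
    {A : Matrix n n R} {μ : R} {b : n → R} (hb : A *ᵥ b = μ • b) (p : R[X]) :
    aeval A p *ᵥ b = p.eval μ • b := by
  have h := Module.End.aeval_apply_of_mem_apply_eq_smul (f := toLinAlgEquiv' A) (p := p) hb
  rwa [aeval_algHom_apply] at h

end Spectral

section RegularGraph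

variable {V : Type*} {G : SimpleGraph V}

theorem eq_of_reachable_of_forall_adj {α : Type*} {f : V → α} (hf : ∀ x y, G.Adj x y → f x = f y)
    {x y : V} (hxy : G.Reachable x y) : f x = f y := by
  obtain ⟨p⟩ := hxy
  induction p with
  | nil => rfl
  | cons hadj _ ih => exact (hf _ _ hadj).trans ih

theorem colorable_two_of_forall_adj_eq_neg_s14 (hconn : G.Connected) {b : V → ℝ} (hb : b ≠ 0)
    (h : ∀ x y, G.Adj x y → b y = -b x) : G.Colorable 2 := by
  obtain ⟨z, hz⟩ := Function.ne_iff.mp hb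
  have hne x : b x ≠ 0 := by
    have habs : |b x| = |b z| := eq_of_reachable_of_forall_adj (f := fun x => |b x|)
      (fun x y hxy => by rw [h x y hxy, abs_neg]) (hconn x z)
    exact abs_ne_zero.mp (habs ▸ abs_ne_zero.mpr hz)
  refine (SimpleGraph.Coloring.mk (fun x => decide (0 < b x)) fun {x y} hxy => ?_).colorable
  obtain hx | hx := (hne x).lt_or_gt <;> simp [h x y hxy, hx, hx.le]

variable [Fintype V] [DecidableRel G.Adj]

theorem sum_sum_neighborFinset_eq_sum_degree_mul {α : Type*} [NonAssocSemiring α] (f : V → α) :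
    ∑ x, ∑ y ∈ G.neighborFinset x, f y = ∑ x, G.degree x * f x := by
  rw [Finset.sum_comm' (s' := fun y => G.neighborFinset y) (t' := Finset.univ)
    fun x y => by simp [G.adj_comm]]
  simp

theorem eq_mul_of_adjMatrix_mulVec_eq {k : ℕ} (hG : G.IsRegularOfDegree k) {s : ℝ} (hs : s ^ 2 = 1)
    {b : V → ℝ} (hb : G.adjMatrix ℝ *ᵥ b = (s * k) • b) {x y : V} (hxy : G.Adj x y) :
    b y = s * b x := by
  have hsum x : ∑ y ∈ G.neighborFinset x, b y = s * k * b x := by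
    simpa [SimpleGraph.adjMatrix_mulVec_apply] using congrFun hb x
  have hvertex x : ∑ y ∈ G.neighborFinset x, (b y - s * b x) ^ 2 =
      ∑ y ∈ G.neighborFinset x, b y ^ 2 - k * b x ^ 2 := by
    simp only [sub_sq, mul_pow, hs, Finset.sum_add_distrib, Finset.sum_sub_distrib,
      ← Finset.mul_sum, ← Finset.sum_mul, hsum, Finset.sum_const, G.card_neighborFinset_eq_degree,
      hG.degree_eq, nsmul_eq_mul]
    linear_combination (-2 * k * b x ^ 2) * hs
  have htotal : ∑ x, ∑ y ∈ G.neighborFinset x, (b y - s * b x) ^ 2 = 0 := by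
    simp only [hvertex, Finset.sum_sub_distrib, sum_sum_neighborFinset_eq_sum_degree_mul,
      hG.degree_eq, sub_self]
  have hx := (Finset.sum_eq_zero_iff_of_nonneg fun x _ =>
    Finset.sum_nonneg fun y _ => sq_nonneg _).mp htotal x (Finset.mem_univ x)
  have hy := (Finset.sum_eq_zero_iff_of_nonneg fun y _ => sq_nonneg _).mp hx y
    ((G.mem_neighborFinset x y).mpr hxy)
  exact sub_eq_zero.mp (pow_eq_zero_iff two_ne_zero |>.mp hy)

theorem eq_of_adjMatrix_mulVec_eq_of_abs_eq_degree {k : ℕ} (hconn : G.Connected)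
    (hcol : ¬G.Colorable 2) (hG : G.IsRegularOfDegree k) {μ : ℝ} (hμ : |μ| = k) {b : V → ℝ}
    (hb : G.adjMatrix ℝ *ᵥ b = μ • b) (x y : V) : b x = b y := by
  obtain rfl | rfl := (abs_eq k.cast_nonneg).mp hμ
  · refine eq_of_reachable_of_forall_adj (fun x y hxy => ?_) (hconn x y)
    simpa [eq_comm] using eq_mul_of_adjMatrix_mulVec_eq hG (one_pow 2) (by rwa [one_mul]) hxy
  · have hzero : b = 0 := by
      by_contra hne
      refine hcol (colorable_two_of_forall_adj_eq_neg_s14 hconn hne fun x y hxy => ?_)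
      simpa using
        eq_mul_of_adjMatrix_mulVec_eq hG (s := -1) (by norm_num) (by rwa [neg_one_mul]) hxy
    simp [hzero]

end RegularGraph

section Mixing

variable {V : Type*} [Fintype V]

theorem sum_abs_le_sqrt_card_mul_norm_toLp (f : V → ℝ) :
    ∑ x, |f x| ≤ √(Fintype.card V) * ‖WithLp.toLp 2 f‖ := by
  rw [EuclideanSpace.norm_eq, ← Real.sqrt_mul (Nat.cast_nonneg _)]
  refine Real.le_sqrt_of_sq_le ?_
  simpa using sq_sum_le_card_mul_sum_sq (s := Finset.univ) (f := fun x => |f x|)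

theorem norm_toLp_single_sub_smul_one_le [DecidableEq V] (v : V) :
    ‖WithLp.toLp 2 (Pi.single v 1 - (1 / Fintype.card V : ℝ) • (1 : V → ℝ))‖ ≤ 1 := by
  have hcard : (Fintype.card V : ℝ) ≠ 0 := Nat.cast_ne_zero.mpr (Fintype.card_pos_iff.mpr ⟨v⟩).ne'
  rw [← sq_le_one_iff₀ (norm_nonneg _), EuclideanSpace.norm_sq_eq]
  calc ∑ x, ‖(Pi.single v 1 - (1 / Fintype.card V : ℝ) • 1 : V → ℝ) x‖ ^ 2
      = 1 - 2 * (1 / Fintype.card V) + Fintype.card V * (1 / Fintype.card V) ^ 2 := by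
        simp [sub_sq, Finset.sum_add_distrib, Pi.single_apply]
    _ = 1 - 1 / Fintype.card V := by field_simp; ring
    _ ≤ 1 := sub_le_self _ (by positivity)

variable {G : SimpleGraph V} [DecidableRel G.Adj] {q : ℕ}

theorem nbMatrix_mulVec_one (R : Type*) [CommRing R] (hG : G.IsRegularOfDegree (q + 1)) (t : ℕ) :
    nbMatrix R G (t + 2) *ᵥ 1 = ((q + 1) * q ^ (t + 1) : R) • 1 := by
  classical
  have hone : G.adjMatrix R *ᵥ 1 = (q + 1 : R) • 1 := by
    ext x
    simp [SimpleGraph.adjMatrix_mulVec_apply, hG.degree_eq]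
  rw [nbMatrix_add_two_eq_aeval_dickson R hG, aeval_mulVec_of_mulVec_eq_smul hone,
    eval_add_one_dickson_two_sub]

theorem norm_toLp_nbMatrix_mulVec_le (hG : G.IsRegularOfDegree (q + 1)) (hq : 1 ≤ q)
    (hspec : ∀ (μ : ℝ) (b : V → ℝ), G.adjMatrix ℝ *ᵥ b = μ • b →
      (∀ x y, b x = b y) ∨ |μ| ≤ 2 * √q)
    (t : ℕ) {f : V → ℝ} (hf : ∑ x, f x = 0) :
    ‖WithLp.toLp 2 (nbMatrix ℝ G (t + 2) *ᵥ f)‖ ≤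
      2 * (t + 2) * √q ^ (t + 2) * ‖WithLp.toLp 2 f‖ := by
  classical
  rw [nbMatrix_add_two_eq_aeval_dickson ℝ hG]
  refine norm_toLp_aeval_mulVec_le (G.isHermitian_adjMatrix ℝ) _ f (by positivity) fun μ b hb => ?_
  refine (hspec μ b hb).imp (fun hconst => ?_) fun hμ =>
    abs_eval_dickson_two_sub_le (by exact_mod_cast hq) hμ t
  obtain h | ⟨⟨x⟩⟩ := isEmpty_or_nonempty V
  · simp
  · simp [dotProduct, hconst _ x, ← Finset.mul_sum, hf]

theorem sum_abs_nbCount_div_sub_le (hG : G.IsRegularOfDegree (q + 1)) (hq : 1 ≤ q)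
    (hspec : ∀ (μ : ℝ) (b : V → ℝ), G.adjMatrix ℝ *ᵥ b = μ • b →
      (∀ x y, b x = b y) ∨ |μ| ≤ 2 * √q)
    (v : V) (t : ℕ) :
    ∑ x, |(nbCount G v (t + 2) x : ℝ) / ((q + 1) * q ^ (t + 1)) - 1 / Fintype.card V| ≤
      2 * (t + 2) * (√(Fintype.card V) / √q ^ (t + 2)) := by
  classical
  have hcard : (Fintype.card V : ℝ) ≠ 0 := Nat.cast_ne_zero.mpr (Fintype.card_pos_iff.mpr ⟨v⟩).ne'
  have hq₀ : (0 : ℝ) < q := by exact_mod_cast hq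
  let f : V → ℝ := Pi.single v 1 - (1 / Fintype.card V : ℝ) • 1
  have hf : ∑ x, f x = 0 := by simp [f, hcard]
  have hnorm : ‖WithLp.toLp 2 (nbMatrix ℝ G (t + 2) *ᵥ f)‖ ≤ 2 * (t + 2) * √q ^ (t + 2) :=
    (norm_toLp_nbMatrix_mulVec_le hG hq hspec t hf).trans
      (mul_le_of_le_one_right (by positivity) (norm_toLp_single_sub_smul_one_le v))
  have hmulVec x : (nbCount G v (t + 2) x : ℝ) / ((q + 1) * q ^ (t + 1)) - 1 / Fintype.card V =
      (nbMatrix ℝ G (t + 2) *ᵥ f) x / ((q + 1) * q ^ (t + 1)) := by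
    simp only [f, mulVec_sub, mulVec_smul, mulVec_single_one, nbMatrix_mulVec_one ℝ hG,
      Pi.sub_apply, Pi.smul_apply, Pi.one_apply, col_apply, nbMatrix_apply, smul_eq_mul]
    field_simp
  have hsqrt : √q ^ (t + 2) * √q ^ (t + 2) ≤ (q + 1) * q ^ (t + 1) := by
    rw [← mul_pow, Real.mul_self_sqrt hq₀.le, pow_succ']
    gcongr
    linarith
  calc ∑ x, |(nbCount G v (t + 2) x : ℝ) / ((q + 1) * q ^ (t + 1)) - 1 / Fintype.card V|
      = (∑ x, |(nbMatrix ℝ G (t + 2) *ᵥ f) x|) / ((q + 1) * q ^ (t + 1)) := by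
        simp only [hmulVec, abs_div, Finset.sum_div]
        rw [abs_of_pos (by positivity : (0 : ℝ) < (q + 1) * q ^ (t + 1))]
    _ ≤ √(Fintype.card V) * (2 * (t + 2) * √q ^ (t + 2)) / (√q ^ (t + 2) * √q ^ (t + 2)) := by
        gcongr
        exact (sum_abs_le_sqrt_card_mul_norm_toLp _).trans (by gcongr)
    _ = 2 * (t + 2) * (√(Fintype.card V) / √q ^ (t + 2)) := by
        field_simp

end Mixing

section Asymptotics

theorem sqrt_div_sqrt_pow_le {a q ε : ℝ} (ha : 0 < a) (hq : 1 < q) (hε : 0 ≤ ε) {t : ℕ}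
    (ht : (1 + ε) * (Real.log a / Real.log q) ≤ t) :
    √a / √q ^ t ≤ (q ^ (-(ε / (2 * (1 + ε))))) ^ t := by
  have hlog : Real.logb q a ≤ t / (1 + ε) := by
    rw [le_div_iff₀' (by positivity)]
    exact ht
  have hle : a ≤ q ^ (t / (1 + ε)) := (Real.logb_le_iff_le_rpow hq ha).mp hlog
  have hq₀ : 0 < q := by linarith
  rw [div_le_iff₀ (by positivity), ← mul_pow, Real.sqrt_eq_rpow q, ← Real.rpow_add hq₀,
    ← Real.rpow_mul_natCast hq₀.le]
  refine Real.sqrt_le_iff.mpr ⟨by positivity, hle.trans_eq ?_⟩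
  rw [← Real.rpow_mul_natCast hq₀.le]
  congr 1
  push_cast
  field_simp
  ring

theorem le_of_pow_le_of_mul_log_div_log_le {q n T t : ℕ} {ε : ℝ} (hq : 1 < q) (hε : 0 ≤ ε)
    (hn : q ^ T ≤ n) (ht : (1 + ε) * (Real.log n / Real.log q) ≤ t) : T ≤ t := by
  have hn₀ : (0 : ℝ) < n := by exact_mod_cast (Nat.pow_pos (by omega)).trans_le hn
  have hq₁ : (1 : ℝ) < q := by exact_mod_cast hq
  have hT : (T : ℝ) ≤ Real.log n / Real.log q := by
    refine (Real.le_logb_iff_rpow_le hq₁ hn₀).mpr ?_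
    exact_mod_cast hn
  have hTt : (T : ℝ) ≤ t :=
    calc (T : ℝ) ≤ Real.log n / Real.log q := hT
      _ ≤ (1 + ε) * (Real.log n / Real.log q) :=
        le_mul_of_one_le_left (T.cast_nonneg.trans hT) (by linarith)
      _ ≤ t := ht
  exact_mod_cast hTt

theorem exists_forall_mul_sqrt_div_sqrt_pow_le {q : ℕ} (hq : 1 < q) {ε δ : ℝ} (hε : 0 < ε)
    (hδ : 0 < δ) (t₀ : ℕ) :
    ∃ N : ℕ, ∀ n ≥ N, ∀ t : ℕ, (1 + ε) * (Real.log n / Real.log q) ≤ t →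
      t₀ ≤ t ∧ t * (√n / √q ^ t) ≤ δ := by
  have hq₁ : (1 : ℝ) < q := by exact_mod_cast hq
  have hρ : (q : ℝ) ^ (-(ε / (2 * (1 + ε)))) < 1 :=
    Real.rpow_lt_one_of_one_lt_of_neg hq₁ (neg_neg_of_pos (by positivity))
  obtain ⟨T, hT⟩ := Filter.eventually_atTop.mp
    ((tendsto_self_mul_const_pow_of_lt_one (by positivity) hρ).eventually_le_const hδ)
  refine ⟨q ^ max t₀ T, fun n hn t ht => ?_⟩
  have hle : max t₀ T ≤ t := le_of_pow_le_of_mul_log_div_log_le hq hε.le hn ht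
  have hn₀ : 0 < n := (Nat.pow_pos (by omega)).trans_le hn
  refine ⟨(le_max_left _ _).trans hle, le_trans ?_ (hT t ((le_max_right _ _).trans hle))⟩
  gcongr
  exact sqrt_div_sqrt_pow_le (by exact_mod_cast hn₀) hq₁ hε.le ht

end Asymptotics

/-- **Lubetzky–Peres (NBRW cutoff, upper bound)**: for every `k ≥ 3` and `ε, δ > 0` there
is `N` such that on every finite connected non-bipartite `k`-regular Ramanujan graph on
`n ≥ N` vertices, for every starting vertex `v` and every time `t ≥ (1+ε)·log_{k−1} n`,
the distribution of the length-`t` non-backtracking random walk from `v` is within total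
variation distance `δ` of the uniform distribution. -/
theorem nbrw_cutoff_upper (k : ℕ) (hk : 3 ≤ k) (ε δ : ℝ) (hε : 0 < ε) (hδ : 0 < δ) :
    ∃ N : ℕ, ∀ (V : Type) [Fintype V] [DecidableEq V]
      (G : SimpleGraph V) [DecidableRel G.Adj],
      G.Connected → ¬ G.Colorable 2 → G.IsRegularOfDegree k →
      (∀ lam : ℝ, (∃ x : V → ℝ, x ≠ 0 ∧ G.adjMatrix ℝ *ᵥ x = lam • x) →
        |lam| = (k : ℝ) ∨ |lam| ≤ 2 * Real.sqrt ((k : ℝ) - 1)) →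
      Fintype.card V ≥ N →
      ∀ (v : V) (t : ℕ),
        (t : ℝ) ≥ (1 + ε) * (Real.log (Fintype.card V) / Real.log ((k : ℝ) - 1)) →
        (1 / 2) * ∑ x : V,
            |(Nat.card {w : Fin (t + 1) → V // IsNBPath G t v w ∧ w (Fin.last t) = x} : ℝ)
                / (k * (k - 1 : ℕ) ^ (t - 1))
              - 1 / (Fintype.card V : ℝ)| ≤ δ := by
  obtain ⟨q, rfl⟩ : ∃ q, k = q + 1 := ⟨k - 1, by omega⟩
  have hq : ((q + 1 : ℕ) : ℝ) - 1 = q := by simp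
  obtain ⟨N, hN⟩ := exists_forall_mul_sqrt_div_sqrt_pow_le (q := q) (by omega) hε hδ 2
  refine ⟨N, fun V _ _ G _ hconn hcol hG hram hcard v t ht => ?_⟩
  rw [hq] at hram ht
  obtain ⟨ht₂, hle⟩ := hN _ hcard t ht
  obtain ⟨s, rfl⟩ := Nat.exists_eq_add_of_le' ht₂
  have hspec (μ : ℝ) (b : V → ℝ) (hb : G.adjMatrix ℝ *ᵥ b = μ • b) :
      (∀ x y, b x = b y) ∨ |μ| ≤ 2 * √q := by
    obtain rfl | hb₀ := eq_or_ne b 0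
    · exact .inl fun _ _ => rfl
    · exact (hram μ ⟨b, hb₀, hb⟩).imp_left fun hμ =>
        eq_of_adjMatrix_mulVec_eq_of_abs_eq_degree hconn hcol hG hμ hb
  have hsum := sum_abs_nbCount_div_sub_le hG (by omega) hspec v s
  simp only [nbCount] at hsum
  push_cast at hsum hle ⊢
  linarith
end

section
/- (2-normality of the non-backtracking digraph) Let X be a finite connected k-regular graph with k ≥ 3, and let B be its non-backtracking matrix, regarded as a complex matrix indexed by the directed edges of X. Then B is unitarily equivalent to a block-diagonal matrix all of whose diagonal blocks have size at most 2; that is, there exists a unitary matrix U such that U* B U is block-diagonal with blocks of size at most 2×2. -/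
open Matrix

/-!
Let `J` be the permutation matrix of edge reversal and `Q` the 0-1 matrix relating directed edges
with the same source. Then `B = J * (Q - 1)`, where `J` and `Q` are Hermitian, `J² = 1`, and
`k`-regularity gives `Q² = k Q`. The Hermitian matrix `JQ + QJ` commutes with `J`, so every
nonzero subspace invariant under `J` and `Q` contains a common eigenvector `x` of `J` and
`JQ + QJ`. Then `JQx` is a combination of `x` and `Qx`, and hence the span of `x` and `Qx` is again
invariant under `J` and `Q`. As `J` and `Q` are Hermitian, its orthogonal complement is invariant
too, and such subspaces can be split off one after another.
-/

open Module Module.End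

section InvariantSubspaces

theorem mem_invtSubmodule_of_mem_adjoin {R M : Type*} [CommSemiring R] [AddCommMonoid M]
    [Module R M] {S : Set (End R M)} {W : Submodule R M} (hW : ∀ T ∈ S, W ∈ T.invtSubmodule)
    {A : End R M} (hA : A ∈ Algebra.adjoin R S) : W ∈ A.invtSubmodule := by
  induction hA using Algebra.adjoin_induction with
  | mem T hT => exact hW T hT
  | algebraMap c => exact fun x hx => W.smul_mem c hx
  | add _ _ _ _ hS hT => exact fun x hx => W.add_mem (hS hx) (hT hx)
  | mul _ _ _ _ hS hT => exact fun x hx => hS (hT hx)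

theorem span_pair_mem_invtSubmodule {R M : Type*} [Semiring R] [AddCommMonoid M] [Module R M]
    {T : End R M} {x y : M} (hx : T x ∈ Submodule.span R {x, y})
    (hy : T y ∈ Submodule.span R {x, y}) : Submodule.span R {x, y} ∈ T.invtSubmodule := by
  rw [mem_invtSubmodule, Submodule.span_le]
  rintro z (rfl | rfl)
  exacts [hx, hy]

theorem span_pair_mem_invtSubmodule_of_quadratic {R M : Type*} [CommRing R] [AddCommGroup M]
    [Module R M] {J Q : End R M} {a b c ε : R} {x : M} (hQ : Q * Q = a • Q + b • 1)
    (hJx : J x = ε • x) (hJQx : (J * Q + Q * J) x = c • x) :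
    Submodule.span R {x, Q x} ∈ J.invtSubmodule ∧
      Submodule.span R {x, Q x} ∈ Q.invtSubmodule := by
  have hx : x ∈ Submodule.span R {x, Q x} := Submodule.mem_span_of_mem (by simp)
  have hQx : Q x ∈ Submodule.span R {x, Q x} := Submodule.mem_span_of_mem (by simp)
  have hJQ : J (Q x) = c • x - ε • Q x := by
    rw [← hJQx, ← map_smul, ← hJx]
    exact (add_sub_cancel_right _ _).symm
  have hQQ : Q (Q x) = a • Q x + b • x := LinearMap.congr_fun hQ x
  constructor <;> apply span_pair_mem_invtSubmodule
  · exact hJx ▸ Submodule.smul_mem _ ε hx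
  · exact hJQ ▸ Submodule.sub_mem _ (Submodule.smul_mem _ c hx) (Submodule.smul_mem _ ε hQx)
  · exact hQx
  · exact hQQ ▸ Submodule.add_mem _ (Submodule.smul_mem _ a hQx) (Submodule.smul_mem _ b hx)

end InvariantSubspaces

section SymmetricOperators

variable {𝕜 H : Type*} [RCLike 𝕜] [NormedAddCommGroup H] [InnerProductSpace 𝕜 H]

theorem exists_finset_pairwise_isOrtho_sup_eq_top [FiniteDimensional 𝕜 H]
    {p : Submodule 𝕜 H → Prop}
    (hp : ∀ s : Finset (Submodule 𝕜 H), (∀ W ∈ s, p W) → (s.sup id)ᗮ ≠ ⊥ →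
      ∃ W ≤ (s.sup id)ᗮ, W ≠ ⊥ ∧ p W) :
    ∃ s : Finset (Submodule 𝕜 H), (∀ W ∈ s, p W) ∧
      (s : Set (Submodule 𝕜 H)).Pairwise (· ⟂ ·) ∧ s.sup id = ⊤ := by
  classical
  obtain ⟨s, ⟨hps, hs⟩, hmax⟩ := (InvImage.wf (Finset.sup · id) wellFounded_gt).has_min
    {s : Finset (Submodule 𝕜 H) | (∀ W ∈ s, p W) ∧ (s : Set (Submodule 𝕜 H)).Pairwise (· ⟂ ·)}
    ⟨∅, by simp⟩
  refine ⟨s, hps, hs, ?_⟩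
  by_contra htop
  obtain ⟨W, hW, hW0, hpW⟩ := hp s hps (mt Submodule.orthogonal_eq_bot_iff.1 htop)
  have hsW : s.sup id ⟂ W := Submodule.le_orthogonal_iff_le_orthogonal.1 hW
  have hinsert : (insert W s : Set (Submodule 𝕜 H)).Pairwise (· ⟂ ·) :=
    hs.insert fun W' hW' _ =>
      have h : W' ⟂ W := hsW.mono_left (Finset.le_sup (f := id) hW')
      ⟨h.symm, h⟩
  refine hmax (insert W s)
    ⟨(Finset.forall_mem_insert _ _ _).2 ⟨hpW, hps⟩, by simpa using hinsert⟩ ?_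
  rw [InvImage, Finset.sup_insert]
  exact right_lt_sup.2 fun hWs => hW0 (Submodule.isOrtho_self.1 (hsW.mono_left hWs))

theorem exists_hasEigenvector_mem [FiniteDimensional 𝕜 H] {T : End 𝕜 H} (hT : T.IsSymmetric)
    {K : Submodule 𝕜 H} (hK : K ∈ T.invtSubmodule) (hK0 : K ≠ ⊥) :
    ∃ c, ∃ x ∈ K, T.HasEigenvector c x := by
  have : Nontrivial K := Submodule.nontrivial_iff_ne_bot.2 hK0
  obtain ⟨x, hx⟩ :=
    (hT.restrict_invariant hK).hasEigenvalue_iSup_of_finiteDimensional.exists_hasEigenvector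
  exact ⟨_, x, x.2, mem_eigenspace_iff.2 (congrArg Subtype.val hx.apply_eq_smul),
    Subtype.coe_ne_coe.2 hx.2⟩

theorem exists_common_hasEigenvector_mem [FiniteDimensional 𝕜 H] {S T : End 𝕜 H}
    (hS : S.IsSymmetric) (hT : T.IsSymmetric) (hST : Commute S T) {K : Submodule 𝕜 H}
    (hKS : K ∈ S.invtSubmodule) (hKT : K ∈ T.invtSubmodule) (hK0 : K ≠ ⊥) :
    ∃ a b, ∃ x ∈ K, S.HasEigenvector a x ∧ T.HasEigenvector b x := by
  obtain ⟨a, y, hyK, hy⟩ := exists_hasEigenvector_mem hS hKS hK0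
  obtain ⟨b, x, ⟨hxK, hxS⟩, hxT⟩ := exists_hasEigenvector_mem hT
    (invtSubmodule.inf_mem hKT (mapsTo_genEigenspace_of_comm hST a 1))
    (Submodule.ne_bot_iff _ |>.2 ⟨y, ⟨hyK, hy.1⟩, hy.2⟩)
  exact ⟨a, b, x, hxK, ⟨hxS, hxT.2⟩, hxT⟩

theorem isSymmetric_mul_add_mul {S T : End 𝕜 H} (hS : S.IsSymmetric) (hT : T.IsSymmetric) :
    (S * T + T * S).IsSymmetric := fun x y => by
  simp only [LinearMap.add_apply, End.mul_apply, inner_add_left, inner_add_right, hS _ _, hT _ _]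
  exact add_comm _ _

variable [FiniteDimensional 𝕜 H] {J Q : End 𝕜 H}

theorem exists_invtSubmodule_finrank_le_two (hJ : J.IsSymmetric) (hQ : Q.IsSymmetric)
    (hJJ : J * J = 1) {a b : 𝕜} (hQQ : Q * Q = a • Q + b • 1) {K : Submodule 𝕜 H}
    (hKJ : K ∈ J.invtSubmodule) (hKQ : K ∈ Q.invtSubmodule) (hK0 : K ≠ ⊥) :
    ∃ W ≤ K, W ≠ ⊥ ∧ finrank 𝕜 W ≤ 2 ∧ W ∈ J.invtSubmodule ∧ W ∈ Q.invtSubmodule := by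
  classical
  have hcomm : Commute J (J * Q + Q * J) := by
    rw [Commute, SemiconjBy, mul_add, add_mul, ← mul_assoc, hJJ, mul_assoc Q, hJJ, one_mul,
      mul_one, mul_assoc, add_comm]
  have hK : K ∈ (J * Q + Q * J).invtSubmodule := fun x hx =>
    K.add_mem (hKJ (hKQ hx)) (hKQ (hKJ hx))
  obtain ⟨ε, c, x, hxK, hJx, hx⟩ :=
    exists_common_hasEigenvector_mem hJ (isSymmetric_mul_add_mul hJ hQ) hcomm hKJ hK hK0
  refine ⟨Submodule.span 𝕜 {x, Q x}, ?_, ?_, ?_,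
    span_pair_mem_invtSubmodule_of_quadratic hQQ hJx.apply_eq_smul hx.apply_eq_smul⟩
  · exact Submodule.span_le.2 (Set.pair_subset hxK (hKQ hxK))
  · exact (Submodule.ne_bot_iff _).2 ⟨x, Submodule.mem_span_of_mem (by simp), hx.2⟩
  · rw [← Finset.coe_pair]
    exact (finrank_span_finset_le_card _).trans Finset.card_le_two

theorem exists_finset_invtSubmodule_finrank_le_two (hJ : J.IsSymmetric) (hQ : Q.IsSymmetric)
    (hJJ : J * J = 1) {a b : 𝕜} (hQQ : Q * Q = a • Q + b • 1) :
    ∃ s : Finset (Submodule 𝕜 H),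
      (∀ W ∈ s, finrank 𝕜 W ≤ 2 ∧ W ∈ J.invtSubmodule ∧ W ∈ Q.invtSubmodule) ∧
      (s : Set (Submodule 𝕜 H)).Pairwise (· ⟂ ·) ∧ s.sup id = ⊤ := by
  refine exists_finset_pairwise_isOrtho_sup_eq_top fun s hs => ?_
  have sup_mem {T : End 𝕜 H} (hT : ∀ W ∈ s, W ∈ T.invtSubmodule) : s.sup id ∈ T.invtSubmodule :=
    Finset.sup_induction (invtSubmodule.bot_mem T) (fun _ h _ h' => T.invtSubmodule.sup_mem h h') hT
  exact exists_invtSubmodule_finrank_le_two hJ hQ hJJ hQQ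
    (hJ.orthogonalComplement_mem_invtSubmodule (sup_mem fun W hW => (hs W hW).2.1))
    (hQ.orthogonalComplement_mem_invtSubmodule (sup_mem fun W hW => (hs W hW).2.2))

end SymmetricOperators

section RNormal

variable {𝕜 E : Type*} [RCLike 𝕜] [Fintype E] [DecidableEq E]

/-- An `r`-normal matrix: one that is unitarily equivalent to a block-diagonal matrix with blocks
of size at most `r`. The blocks are the fibers of a labelling `b`; taking the labels in the index
type itself loses nothing, by `isRNormal_of_orthonormalBasis`. -/
def IsRNormal (r : ℕ) (A : Matrix E E 𝕜) : Prop :=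
  ∃ U ∈ Matrix.unitaryGroup E 𝕜, ∃ b : E → E,
    (∀ e f, b e ≠ b f → (star U * A * U) e f = 0) ∧ ∀ x, Nat.card {e // b e = x} ≤ r

theorem star_toMatrix_mul_mul_toMatrix_apply (A : Matrix E E 𝕜)
    (v : OrthonormalBasis E 𝕜 (EuclideanSpace 𝕜 E)) (e f : E) :
    (star ((EuclideanSpace.basisFun E 𝕜).toBasis.toMatrix v) * A *
      (EuclideanSpace.basisFun E 𝕜).toBasis.toMatrix v) e f =
      inner 𝕜 (v e) (A.toEuclideanLin (v f)) := by
  rw [Matrix.mul_assoc, EuclideanSpace.inner_eq_star_dotProduct, dotProduct_comm]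
  simp [Matrix.mul_apply, Matrix.star_apply, Module.Basis.toMatrix_apply, dotProduct,
    Matrix.toLpLin_apply, Matrix.mulVec]

theorem isRNormal_of_orthonormalBasis {r : ℕ} {A : Matrix E E 𝕜} {β : Type*}
    (v : OrthonormalBasis E 𝕜 (EuclideanSpace 𝕜 E)) (b : E → β)
    (hv : ∀ e f, b e ≠ b f → inner 𝕜 (v e) (A.toEuclideanLin (v f)) = 0)
    (hb : ∀ i, Nat.card {e // b e = i} ≤ r) : IsRNormal r A := by
  let rep (e : E) : E := (Quotient.mk (Setoid.ker b) e).out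
  have rep_eq (e f : E) (h : b e = b f) : rep e = rep f :=
    congrArg Quotient.out (Quotient.sound h)
  have b_rep (e : E) : b (rep e) = b e := Quotient.mk_out (s := Setoid.ker b) e
  refine ⟨_, (EuclideanSpace.basisFun E 𝕜).toMatrix_orthonormalBasis_mem_unitary v, rep, ?_, ?_⟩
  · intro e f hef
    rw [star_toMatrix_mul_mul_toMatrix_apply]
    exact hv e f (mt (rep_eq e f) hef)
  · exact fun x => (Nat.card_mono (Set.toFinite {e | b e = b x})
      fun e (he : rep e = x) => (he ▸ b_rep e).symm).trans (hb (b x))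

theorem isRNormal_of_pairwise_isOrtho {r : ℕ} {A : Matrix E E 𝕜} {ι : Type*} [Finite ι]
    {W : ι → Submodule 𝕜 (EuclideanSpace 𝕜 E)} (hort : Pairwise fun i j => W i ⟂ W j)
    (htop : iSup W = ⊤) (hinv : ∀ i, W i ∈ invtSubmodule A.toEuclideanLin)
    (hr : ∀ i, finrank 𝕜 (W i) ≤ r) : IsRNormal r A := by
  classical
  have := Fintype.ofFinite ι
  have hW : OrthogonalFamily 𝕜 (fun i => W i) (fun i => (W i).subtypeₗᵢ) := .of_pairwise hort
  have hint : DirectSum.IsInternal W :=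
    DirectSum.isInternal_submodule_of_iSupIndep_of_iSup_eq_top hW.independent htop
  have hn : finrank 𝕜 (EuclideanSpace 𝕜 E) = Fintype.card E := finrank_euclideanSpace
  let σ := Fintype.equivFin E
  let v := (hint.subordinateOrthonormalBasis hn hW).reindex σ.symm
  let b (e : E) : ι := hint.subordinateOrthonormalBasisIndex hn (σ e) hW
  have hvW (e : E) : v e ∈ W (b e) := by
    simpa [v] using hint.subordinateOrthonormalBasis_subordinate hn (σ e) hW
  refine isRNormal_of_orthonormalBasis v b (fun e f hef => ?_) fun i => ?_
  · exact Submodule.isOrtho_iff_inner_eq.1 (hort hef) _ (hvW e) _ (hinv _ (hvW f))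
  · calc Nat.card {e // b e = i}
        = Nat.card {a // hint.subordinateOrthonormalBasisIndex hn a hW = i} :=
          Nat.card_congr (σ.subtypeEquiv fun _ => Iff.rfl)
      _ = finrank 𝕜 (W i) := by
          rw [← hint.card_filter_subordinateOrthonormalBasisIndex_eq hn hW i,
            Nat.card_eq_fintype_card, Fintype.card_subtype]
      _ ≤ r := hr i

theorem isRNormal_two_of_mem_adjoin {J Q A : Matrix E E 𝕜} (hJ : J.IsHermitian)
    (hQ : Q.IsHermitian) (hJJ : J * J = 1) {a b : 𝕜} (hQQ : Q * Q = a • Q + b • 1)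
    (hA : A ∈ Algebra.adjoin 𝕜 {J, Q}) : IsRNormal 2 A := by
  let φ : Matrix E E 𝕜 ≃ₐ[𝕜] End 𝕜 (EuclideanSpace 𝕜 E) := Matrix.toLpLinAlgEquiv 2
  obtain ⟨s, hs, hort, htop⟩ := exists_finset_invtSubmodule_finrank_le_two
    (J := φ J) (Q := φ Q) (a := a) (b := b)
    (Matrix.isSymmetric_toEuclideanLin_iff.2 hJ) (Matrix.isSymmetric_toEuclideanLin_iff.2 hQ)
    (by rw [← map_mul, hJJ, map_one])
    (by rw [← map_mul, hQQ, map_add, map_smul, map_smul, map_one])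
  have hφA : φ A ∈ Algebra.adjoin 𝕜 {φ J, φ Q} := by
    rw [← Set.image_pair, ← AlgEquiv.coe_toAlgHom, ← AlgHom.map_adjoin]
    exact Subalgebra.mem_map.2 ⟨A, hA, rfl⟩
  refine isRNormal_of_pairwise_isOrtho (W := fun W : s => W.1)
    (fun W W' hne => hort W.2 W'.2 (Subtype.coe_injective.ne hne))
    (by simpa [Finset.sup_eq_iSup, iSup_subtype] using htop) (fun W => ?_) fun W => (hs W W.2).1
  refine mem_invtSubmodule_of_mem_adjoin (A := φ A) ?_ hφA
  simpa using (hs W W.2).2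

end RNormal

section NonbacktrackingMatrix

variable {R E V : Type*} [DecidableEq V]

/-- The 0-1 matrix of the equivalence relation `p e = p f`. -/
def kerMatrix (R : Type*) [Zero R] [One R] (p : E → V) : Matrix E E R :=
  .of fun e f => if p e = p f then 1 else 0

theorem isHermitian_kerMatrix [NonAssocSemiring R] [StarRing R] (p : E → V) :
    (kerMatrix R p).IsHermitian := by
  ext e f
  simp [kerMatrix, apply_ite star, eq_comm]

theorem kerMatrix_mul_self [Fintype E] [Semiring R] {p : E → V} {k : ℕ}
    (hp : ∀ e, Nat.card {f // p f = p e} = k) :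
    kerMatrix R p * kerMatrix R p = (k : R) • kerMatrix R p := by
  ext e f
  by_cases h : p e = p f
  · have hcard : Finset.card {g | p g = p f} = k := by
      rw [← hp f, Nat.card_eq_fintype_card, Fintype.card_subtype]
    simp [kerMatrix, Matrix.mul_apply, h, eq_comm (a := p f), ← hcard, ← ite_and]
  · simp +contextual [kerMatrix, Matrix.mul_apply, h]

variable [DecidableEq E]

theorem isHermitian_permMatrix_of_involutive [NonAssocSemiring R] [StarRing R] {rev : E → E}
    (hrev : rev.Involutive) : (hrev.toPerm.permMatrix R).IsHermitian := by
  rw [Matrix.IsHermitian, Matrix.conjTranspose_permMatrix, Equiv.Perm.inv_def, hrev.toPerm_symm]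

theorem permMatrix_mul_self_of_involutive [Fintype E] [NonAssocSemiring R] {rev : E → E}
    (hrev : rev.Involutive) : hrev.toPerm.permMatrix R * hrev.toPerm.permMatrix R = 1 := by
  rw [← Matrix.permMatrix_mul, ← Matrix.permMatrix_one]
  congr 1
  ext e
  exact hrev e

/-- The non-backtracking matrix of the graph, possibly with loops and multiple edges, that has
directed edges `E`, source map `src` and edge reversal `rev`; the target of `e` is the source of
`rev e`. -/
def nonbacktrackingMatrix (R : Type*) [Zero R] [One R] (src : E → V) (rev : E → E) :
    Matrix E E R :=
  .of fun e f => if src (rev e) = src f ∧ f ≠ rev e then 1 else 0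

theorem nonbacktrackingMatrix_eq_mul [Fintype E] [Ring R] (src : E → V) {rev : E → E}
    (hrev : rev.Involutive) :
    nonbacktrackingMatrix R src rev = hrev.toPerm.permMatrix R * (kerMatrix R src - 1) := by
  ext e f
  rw [PEquiv.toMatrix_toPEquiv_mul]
  by_cases h : f = rev e
  · simp [nonbacktrackingMatrix, kerMatrix, h]
  · simp [nonbacktrackingMatrix, kerMatrix, Matrix.one_apply_ne' h, h]

theorem nonbacktracking_two_normal_general {𝕜 : Type*} [RCLike 𝕜] [Fintype E] {src : E → V}
    {rev : E → E} (hrev : rev.Involutive) {k : ℕ} (hk : ∀ e, Nat.card {f // src f = src e} = k) :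
    IsRNormal 2 (nonbacktrackingMatrix 𝕜 src rev) := by
  refine isRNormal_two_of_mem_adjoin (isHermitian_permMatrix_of_involutive hrev)
    (isHermitian_kerMatrix src) (permMatrix_mul_self_of_involutive hrev)
    (a := (k : 𝕜)) (b := 0) (by rw [kerMatrix_mul_self hk, zero_smul, add_zero]) ?_
  rw [nonbacktrackingMatrix_eq_mul src hrev]
  exact mul_mem (Algebra.subset_adjoin (by simp))
    (sub_mem (Algebra.subset_adjoin (by simp)) (one_mem _))

end NonbacktrackingMatrix

/-- The directed edges of a simple graph, as ordered pairs of adjacent vertices. -/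
abbrev DirectedEdge {V : Type*} (G : SimpleGraph V) : Type _ := {e : V × V // G.Adj e.1 e.2}

namespace DirectedEdge

variable {V : Type*} {G : SimpleGraph V}

/-- The source of a directed edge. -/
def src (e : DirectedEdge G) : V := e.1.1

/-- The directed edge with the opposite orientation. -/
def reverse (e : DirectedEdge G) : DirectedEdge G := ⟨e.1.swap, e.2.symm⟩

theorem reverse_involutive : (reverse : DirectedEdge G → DirectedEdge G).Involutive := fun _ => rfl

theorem card_src_eq (v : V) [Fintype (G.neighborSet v)] :
    Nat.card {e : DirectedEdge G // e.src = v} = G.degree v := by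
  rw [← G.card_neighborSet_eq_degree, ← Nat.card_eq_fintype_card]
  exact Nat.card_congr
    { toFun := fun e => ⟨e.1.1.2, e.2.subst (motive := (G.Adj · _)) e.1.2⟩
      invFun := fun w => ⟨⟨(v, w), w.2⟩, rfl⟩
      left_inv := by rintro ⟨⟨⟨_, _⟩, _⟩, rfl⟩; rfl
      right_inv := fun _ => rfl }

theorem nonbacktrackingMatrix_apply [DecidableEq V] {R : Type*} [Zero R] [One R]
    (e f : DirectedEdge G) : nonbacktrackingMatrix R src reverse e f =
      if e.1.2 = f.1.1 ∧ f.1.2 ≠ e.1.1 then 1 else 0 := by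
  refine if_congr (and_congr_right fun h => not_congr ?_) rfl rfl
  simp only [reverse, Subtype.ext_iff, Prod.ext_iff, Prod.fst_swap, Prod.snd_swap]
  exact and_iff_right h.symm

end DirectedEdge

/-- **2-normality of the non-backtracking digraph** (Lubetzky–Peres): the non-backtracking
matrix `B` of a finite connected `k`-regular graph (`k ≥ 3`) is unitarily equivalent to a
block-diagonal matrix all of whose diagonal blocks have size at most `2 × 2` (the blocks
being the fibers of the map `b`). -/
theorem nonbacktracking_two_normal
    {V : Type*} [Fintype V] [DecidableEq V]
    (G : SimpleGraph V) [DecidableRel G.Adj]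
    (k : ℕ) (hk : 3 ≤ k)
    (hconn : G.Connected) (hreg : G.IsRegularOfDegree k)
    (B : Matrix {e : V × V // G.Adj e.1 e.2} {e : V × V // G.Adj e.1 e.2} ℂ)
    (hB : ∀ e f : {e : V × V // G.Adj e.1 e.2},
      B e f = if e.1.2 = f.1.1 ∧ f.1.2 ≠ e.1.1 then 1 else 0) :
    ∃ U ∈ Matrix.unitaryGroup {e : V × V // G.Adj e.1 e.2} ℂ,
      ∃ b : {e : V × V // G.Adj e.1 e.2} → {e : V × V // G.Adj e.1 e.2},
        (∀ e f : {e : V × V // G.Adj e.1 e.2}, b e ≠ b f → (star U * B * U) e f = 0) ∧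
        ∀ x : {e : V × V // G.Adj e.1 e.2}, Nat.card {e // b e = x} ≤ 2 := by
  rw [show B = nonbacktrackingMatrix ℂ DirectedEdge.src DirectedEdge.reverse from
    Matrix.ext fun e f => (hB e f).trans (DirectedEdge.nonbacktrackingMatrix_apply e f).symm]
  exact nonbacktracking_two_normal_general DirectedEdge.reverse_involutive
    fun e => (DirectedEdge.card_src_eq (DirectedEdge.src e)).trans (hreg _)
end
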